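/- Let F be an infinite field with char(F) ≠ 2, 3 and let d ≥ 1. Then the maximal degree D_max of elements of a minimal homogeneous system of generators of the algebra of O(3)-invariants of d generic 3×3 matrices equals 6. -/

import Mathlib

open Matrix MvPolynomial

/-- The polynomial ring `R = F[x_{ij}(k)]`, `1 ≤ i,j ≤ 3`, `1 ≤ k ≤ d`. -/
abbrev Rpoly (F : Type) [Field F] (d : ℕ) := MvPolynomial (Fin 3 × Fin 3 × Fin d) F

variable (F : Type) [Field F] (d : ℕ)

/-- The `k`-th generic 3×3 matrix `X_k`. -/
noncomputable def genMat (k : Fin d) : Matrix (Fin 3) (Fin 3) (Rpoly F d) :=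
  Matrix.of fun i j => MvPolynomial.X (i, j, k)

/-- The action of `g` on `R` by simultaneous conjugation: entries of `X_k` are replaced
by the entries of `gᵀ X_k g`. -/
noncomputable def actHom (g : Matrix (Fin 3) (Fin 3) F) : Rpoly F d →ₐ[F] Rpoly F d :=
  MvPolynomial.aeval fun p : Fin 3 × Fin 3 × Fin d =>
    ((g.map (algebraMap F (Rpoly F d)))ᵀ * genMat F d p.2.2 *
      g.map (algebraMap F (Rpoly F d))) p.1 p.2.1

/-- The algebra `R^{O(3)}` of invariants of the orthogonal group. -/
noncomputable def invAlg : Subalgebra F (Rpoly F d) where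
  carrier := {f | ∀ g : Matrix (Fin 3) (Fin 3) F, gᵀ * g = 1 → actHom F d g f = f}
  mul_mem' := by
    intro a b ha hb g hg
    rw [_root_.map_mul, ha g hg, hb g hg]
  add_mem' := by
    intro a b ha hb g hg
    rw [_root_.map_add, ha g hg, hb g hg]
  one_mem' := by
    intro g hg
    exact map_one _
  algebraMap_mem' := by
    intro r g hg
    exact (actHom F d g).commutes r

/-- The ideal of `R^{O(3)}` generated by all homogeneous invariants of positive degree. -/
noncomputable def plusIdeal : Ideal (invAlg F d) :=
  Ideal.span {f | ∃ n : ℕ, 0 < n ∧ MvPolynomial.IsHomogeneous (f : Rpoly F d) n}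

/-- The set of decomposable invariants: elements of `R^{O(3)}` lying in the square of the
ideal generated by all homogeneous invariants of positive degree. -/
noncomputable def decompSet : Set (Rpoly F d) :=
  Subtype.val '' ((plusIdeal F d ^ 2 : Ideal (invAlg F d)) : Set (invAlg F d))

/-!
Over an algebraically closed field, the invariants of `O(3)` on `d`-tuples of matrices are generated
by traces of words in the `X_k` and their transposes. The vector invariants of `SL₂` give those of
`SO₃` through the double cover, which settles vectors and skew-symmetric matrices; a symmetric
matrix becomes of the form `u vᵀ + v uᵀ` once an eigenvalue is subtracted, which replaces it by two
vectors. Since the Euler–Rodrigues parametrisation of rotations is rational, the result descends to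
every infinite field.

Call an equivariant matrix `m` without constant term negligible if all the traces `tr (m a)` are
decomposable. By the Cayley–Hamilton theorem cubes are negligible, so by the Nagata–Higman theorem
products of six factors are, and traces of words of length at least seven are decomposable.

Conversely, write `S = X + Xᵀ` and `T = X - Xᵀ`. The invariant `tr (S S T T S T)` changes sign under
transposition. On the sums of a diagonal and a skew-symmetric matrix such invariants vanish to order
at least six, because of the sign changes and the permutation matrices in `O(3)`. Hence the odd part
of a decomposable invariant vanishes there to order at least seven, while the invariant above does
not.
-/

namespace OrthogonalInvariants

/-! ### Vector invariants of `SL₂` -/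

section Weighted

variable {K : Type*} [CommRing K] {σ τ M N : Type*} [AddCommMonoid M] [AddCommMonoid N]

lemma isWeightedHomogeneous_aeval {w : σ → M} {w' : τ → N} (T : M →+ N) {y : σ → MvPolynomial τ K}
    (hy : ∀ s, IsWeightedHomogeneous w' (y s) (T (w s))) {f : MvPolynomial σ K} {e : M}
    (hf : IsWeightedHomogeneous w f e) : IsWeightedHomogeneous w' (aeval y f) (T e) := by
  rw [f.as_sum, map_sum]
  refine .sum _ _ _ fun m hm => ?_
  rw [aeval_monomial, ← hf (mem_support_iff.mp hm), Finsupp.weight_apply, Finsupp.sum, map_sum]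
  refine (IsWeightedHomogeneous.prod _ _ _ fun s _ => ?_).C_mul _
  rw [map_nsmul]
  exact (hy s).pow _

lemma weightedHomogeneousComponent_aeval {w : σ → M} {w' : τ → M} {y : σ → MvPolynomial τ K}
    (hy : ∀ s, IsWeightedHomogeneous w' (y s) (w s)) (f : MvPolynomial σ K) (e : M) :
    weightedHomogeneousComponent w' e (aeval y f) =
      aeval y (weightedHomogeneousComponent w e f) := by
  classical
  induction f using MvPolynomial.induction_on' with
  | monomial m a =>
    have hm : IsWeightedHomogeneous w (monomial m a) (Finsupp.weight w m) :=
      isWeightedHomogeneous_monomial _ _ _ rfl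
    rw [weightedHomogeneousComponent_of_mem hm, weightedHomogeneousComponent_of_mem
      (isWeightedHomogeneous_aeval (AddMonoidHom.id M) hy hm)]
    simp only [AddMonoidHom.id_apply]
    split_ifs <;> simp
  | add p q hp hq => simp only [map_add, hp, hq]

lemma weightedHomogeneousComponent_mul_left [IsCancelAdd M] {w : σ → M} {p : MvPolynomial σ K}
    {a : M} (hp : IsWeightedHomogeneous w p a) (q : MvPolynomial σ K) (b : M) :
    weightedHomogeneousComponent w (a + b) (p * q) = p * weightedHomogeneousComponent w b q := by
  classical
  induction q using MvPolynomial.induction_on' with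
  | monomial m c =>
    have hm : IsWeightedHomogeneous w (monomial m c) (Finsupp.weight w m) :=
      isWeightedHomogeneous_monomial _ _ _ rfl
    rw [weightedHomogeneousComponent_of_mem hm, weightedHomogeneousComponent_of_mem (hp.mul hm)]
    simp only [add_right_inj]
    split_ifs <;> simp
  | add q q' hq hq' => simp only [mul_add, map_add, hq, hq']

lemma isWeightedHomogeneous_of_mul_left [IsDomain K] [IsCancelAdd M] {w : σ → M}
    {p q : MvPolynomial σ K} {a b : M} (hp : IsWeightedHomogeneous w p a) (hp0 : p ≠ 0)
    (hpq : IsWeightedHomogeneous w (p * q) (a + b)) : IsWeightedHomogeneous w q b := by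
  have hcomp := weightedHomogeneousComponent_mul_left hp q b
  rw [hpq.weightedHomogeneousComponent_same] at hcomp
  rw [mul_left_cancel₀ hp0 hcomp]
  exact weightedHomogeneousComponent_isWeightedHomogeneous b q

end Weighted

section Brackets

variable {K ι κ : Type*} [Field K]

/-- The multidegree of a coordinate of a family of vectors of `K²`: the coordinate `(i, c)` is the
`c`-th coordinate of the `i`-th vector. -/
def vecWeight (s : ι × Fin 2) : Multiset ι := {s.1}

/-- The substitution on polynomial functions of a family of vectors of `K²` induced by the
simultaneous linear map `x ↦ g x`. -/
noncomputable def linSubst (g : Matrix (Fin 2) (Fin 2) K) :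
    MvPolynomial (ι × Fin 2) K →ₐ[K] MvPolynomial (ι × Fin 2) K :=
  aeval fun s => ∑ c, C (g s.2 c) * X (s.1, c)

/-- The determinant `[i j]` of the `i`-th and the `j`-th vector. -/
noncomputable def bracket (i j : ι) : MvPolynomial (ι × Fin 2) K :=
  X (i, 0) * X (j, 1) - X (i, 1) * X (j, 0)

/-- The algebra generated by the brackets. -/
noncomputable def bracketAlg (K ι : Type*) [Field K] : Subalgebra K (MvPolynomial (ι × Fin 2) K) :=
  Algebra.adjoin K (Set.range fun p : ι × ι => bracket p.1 p.2)

/-- Relabelling of the vectors; when `r` is not injective, several vectors are set equal. -/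
noncomputable def relabel (K : Type*) [Field K] (r : ι → κ) :
    MvPolynomial (ι × Fin 2) K →ₐ[K] MvPolynomial (κ × Fin 2) K :=
  aeval fun s => X (r s.1, s.2)

lemma bracket_mem_bracketAlg (i j : ι) : bracket i j ∈ bracketAlg K ι :=
  Algebra.subset_adjoin ⟨(i, j), rfl⟩

lemma linSubst_bracket (g : Matrix (Fin 2) (Fin 2) K) (i j : ι) :
    linSubst g (bracket i j) = C g.det * bracket i j := by
  simp only [linSubst, bracket, map_sub, map_mul, aeval_X, Fin.sum_univ_two, Matrix.det_fin_two]
  ring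

lemma linSubst_eq_self_of_mem_bracketAlg {g : Matrix (Fin 2) (Fin 2) K} (hg : g.det = 1)
    {f : MvPolynomial (ι × Fin 2) K} (hf : f ∈ bracketAlg K ι) : linSubst g f = f := by
  induction hf using Algebra.adjoin_induction with
  | mem x hx =>
    obtain ⟨p, rfl⟩ := hx
    rw [linSubst_bracket, hg, C_1, one_mul]
  | algebraMap c => exact (linSubst g).commutes c
  | add x y _ _ hx hy => rw [map_add, hx, hy]
  | mul x y _ _ hx hy => rw [map_mul, hx, hy]

lemma relabel_bracket (r : ι → κ) (i j : ι) :
    relabel K r (bracket i j) = bracket (r i) (r j) := by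
  simp [relabel, bracket]

lemma linSubst_relabel (g : Matrix (Fin 2) (Fin 2) K) (r : ι → κ)
    (f : MvPolynomial (ι × Fin 2) K) :
    linSubst g (relabel K r f) = relabel K r (linSubst g f) := by
  refine congrArg (fun φ : _ →ₐ[K] _ => φ f) (?_ :
    (linSubst g).comp (relabel K r) = (relabel K r).comp (linSubst g))
  ext s
  simp [linSubst, relabel]

lemma isWeightedHomogeneous_coord (s : ι × Fin 2) :
    IsWeightedHomogeneous vecWeight (X s : MvPolynomial (ι × Fin 2) K) {s.1} :=
  isWeightedHomogeneous_X _ _ _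

lemma isWeightedHomogeneous_bracket (i j : ι) :
    IsWeightedHomogeneous vecWeight (bracket i j : MvPolynomial (ι × Fin 2) K) ({i} + {j}) :=
  ((isWeightedHomogeneous_coord (i, 0)).mul (isWeightedHomogeneous_coord (j, 1))).sub
    ((isWeightedHomogeneous_coord (i, 1)).mul (isWeightedHomogeneous_coord (j, 0)))

lemma isWeightedHomogeneous_relabel (r : ι → κ) {f : MvPolynomial (ι × Fin 2) K}
    {e : Multiset ι} (hf : IsWeightedHomogeneous vecWeight f e) :
    IsWeightedHomogeneous vecWeight (relabel K r f) (e.map r) :=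
  isWeightedHomogeneous_aeval (Multiset.mapAddMonoidHom r)
    (fun s => isWeightedHomogeneous_coord (r s.1, s.2)) hf

lemma isWeightedHomogeneous_linSubst_coord (g : Matrix (Fin 2) (Fin 2) K) (s : ι × Fin 2) :
    IsWeightedHomogeneous vecWeight
      (∑ c, C (g s.2 c) * X (s.1, c) : MvPolynomial (ι × Fin 2) K) (vecWeight s) :=
  .sum _ _ _ fun c _ => (isWeightedHomogeneous_coord (s.1, c)).C_mul _

lemma aeval_mul_of_isWeightedHomogeneous {A : Type*} [CommRing A] [Algebra K A] (c : ι → A)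
    (y : ι × Fin 2 → A) {f : MvPolynomial (ι × Fin 2) K} {e : Multiset ι}
    (hf : IsWeightedHomogeneous vecWeight f e) :
    aeval (fun s => c s.1 * y s) f = (e.map c).prod * aeval y f := by
  rw [f.as_sum, map_sum, map_sum, Finset.mul_sum]
  refine Finset.sum_congr rfl fun m hm => ?_
  have hprod (t : Finset (ι × Fin 2)) :
      ((∑ s ∈ t, m s • vecWeight s).map c).prod = ∏ s ∈ t, c s.1 ^ m s := by
    classical
    induction t using Finset.induction_on with
    | empty => simp
    | insert s t hs ih =>
      rw [Finset.sum_insert hs, Multiset.map_add, Multiset.prod_add, ih, Finset.prod_insert hs]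
      simp [vecWeight, Multiset.map_nsmul, Multiset.prod_nsmul]
  rw [← hf (mem_support_iff.mp hm), Finsupp.weight_apply, Finsupp.sum, hprod, aeval_monomial,
    aeval_monomial, Finsupp.prod, Finsupp.prod, mul_left_comm, ← Finset.prod_mul_distrib]
  simp only [mul_pow]

end Brackets

lemma exists_eq_add_of_map_eq_add {α β : Type*} {f : α → β} {s : Multiset α} {t u : Multiset β}
    (h : s.map f = t + u) : ∃ t' u', s = t' + u' ∧ t'.map f = t ∧ u'.map f = u := by
  have hrel (s : Multiset α) (t : Multiset β) : Multiset.Rel (fun a b => f a = b) s t ↔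
      s.map f = t := by
    rw [← Multiset.rel_eq, Multiset.rel_map_left]
  obtain ⟨t', u', ht, hu, hs⟩ := Multiset.rel_add_right.mp ((hrel s (t + u)).mpr h)
  exact ⟨t', u', hs, (hrel _ _).mp ht, (hrel _ _).mp hu⟩

section BracketLift

variable {K ι : Type*} [Field K]

lemma exists_relabel_eq_of_mem_closure (r : ι → ι) {m : MvPolynomial (ι × Fin 2) K}
    (hm : m ∈ Submonoid.closure (Set.range fun p : ι × ι => bracket (K := K) p.1 p.2)) :
    ∃ e, IsWeightedHomogeneous vecWeight m e ∧ ∀ e', e'.map r = e.map r →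
      ∃ p ∈ bracketAlg K ι, IsWeightedHomogeneous vecWeight p e' ∧
        relabel K r p = relabel K r m := by
  induction hm using Submonoid.closure_induction with
  | mem x hx =>
    obtain ⟨⟨i, j⟩, rfl⟩ := hx
    refine ⟨{i} + {j}, isWeightedHomogeneous_bracket i j, fun e' he' => ?_⟩
    rw [Multiset.map_add, Multiset.map_singleton, Multiset.map_singleton] at he'
    obtain ⟨e₁, e₂, rfl, h₁, h₂⟩ := exists_eq_add_of_map_eq_add he'
    obtain ⟨i', rfl, hi⟩ := Multiset.map_eq_singleton.mp h₁
    obtain ⟨j', rfl, hj⟩ := Multiset.map_eq_singleton.mp h₂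
    refine ⟨_, bracket_mem_bracketAlg i' j', isWeightedHomogeneous_bracket i' j', ?_⟩
    rw [relabel_bracket, relabel_bracket, hi, hj]
  | one =>
    refine ⟨0, isWeightedHomogeneous_one _ _, fun e' he' => ⟨1, one_mem _, ?_, rfl⟩⟩
    rw [Multiset.map_zero, Multiset.map_eq_zero] at he'
    exact he' ▸ isWeightedHomogeneous_one _ _
  | mul x y _ _ hx hy =>
    obtain ⟨a, hxa, hxl⟩ := hx
    obtain ⟨b, hyb, hyl⟩ := hy
    refine ⟨a + b, hxa.mul hyb, fun e' he' => ?_⟩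
    rw [Multiset.map_add] at he'
    obtain ⟨e₁, e₂, rfl, h₁, h₂⟩ := exists_eq_add_of_map_eq_add he'
    obtain ⟨p, hp, hpe, hpx⟩ := hxl e₁ h₁
    obtain ⟨q, hq, hqe, hqy⟩ := hyl e₂ h₂
    exact ⟨p * q, mul_mem hp hq, hpe.mul hqe, by rw [map_mul, map_mul, hpx, hqy]⟩

lemma exists_relabel_eq_weightedHomogeneousComponent (r : ι → ι) (e : Multiset ι)
    {f : MvPolynomial (ι × Fin 2) K} (hf : f ∈ bracketAlg K ι) :
    ∃ p ∈ bracketAlg K ι, IsWeightedHomogeneous vecWeight p e ∧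
      relabel K r p = weightedHomogeneousComponent vecWeight (e.map r) (relabel K r f) := by
  classical
  rw [bracketAlg, ← Subalgebra.mem_toSubmodule, Algebra.adjoin_eq_span] at hf
  induction hf using Submodule.span_induction with
  | mem m hm =>
    obtain ⟨a, hma, hml⟩ := exists_relabel_eq_of_mem_closure r hm
    rw [weightedHomogeneousComponent_of_mem (isWeightedHomogeneous_relabel r hma)]
    split_ifs with h
    · exact hml e h
    · exact ⟨0, zero_mem _, isWeightedHomogeneous_zero _ _ _, map_zero _⟩
  | zero => exact ⟨0, zero_mem _, isWeightedHomogeneous_zero _ _ _, by simp only [map_zero]⟩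
  | add x y _ _ hx hy =>
    obtain ⟨p, hp, hpe, hpx⟩ := hx
    obtain ⟨q, hq, hqe, hqy⟩ := hy
    exact ⟨p + q, add_mem hp hq, hpe.add hqe, by simp only [map_add, hpx, hqy]⟩
  | smul c x _ hx =>
    obtain ⟨p, hp, hpe, hpx⟩ := hx
    exact ⟨c • p, Subalgebra.smul_mem _ hp c, (weightedHomogeneousSubmodule K vecWeight e).smul_mem
      c hpe, by simp only [map_smul, hpx]⟩

lemma exists_mem_bracketAlg_relabel_eq {r : ι → ι} (hr : ∀ i, r (r i) = r i) {e : Multiset ι}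
    {f : MvPolynomial (ι × Fin 2) K} (hf : IsWeightedHomogeneous vecWeight f e)
    (hfr : relabel K r f ∈ bracketAlg K ι) :
    ∃ p ∈ bracketAlg K ι, IsWeightedHomogeneous vecWeight p e ∧
      relabel K r p = relabel K r f := by
  obtain ⟨p, hp, hpe, hpf⟩ := exists_relabel_eq_weightedHomogeneousComponent r e hfr
  refine ⟨p, hp, hpe, hpf.trans ?_⟩
  have hidem : relabel K r (relabel K r f) = relabel K r f := by
    refine congrArg (fun φ : _ →ₐ[K] _ => φ f) (?_ : (relabel K r).comp (relabel K r) = relabel K r)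
    ext s
    simp [relabel, hr]
  rw [hidem, (isWeightedHomogeneous_relabel r hf).weightedHomogeneousComponent_same]

end BracketLift

lemma aeval_sub_aeval_mem {R A σ : Type*} [CommRing R] [CommRing A] [Algebra R A] {I : Ideal A}
    {y z : σ → A} (h : ∀ s, y s - z s ∈ I) (f : MvPolynomial σ R) :
    aeval y f - aeval z f ∈ I := by
  rw [← Ideal.Quotient.eq]
  refine congrArg (fun φ : _ →ₐ[R] _ => φ f) (?_ :
    (Ideal.Quotient.mkₐ R I).comp (aeval y) = (Ideal.Quotient.mkₐ R I).comp (aeval z))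
  ext s
  simpa [Ideal.Quotient.eq] using h s

section BracketDivision

variable {K ι : Type*} [Field K]

lemma X_not_dvd_bracket {i j : ι} (hij : i ≠ j) :
    ¬ (X (i, 0) : MvPolynomial (ι × Fin 2) K) ∣ bracket i j := by
  classical
  intro h
  have hdvd := map_dvd (aeval fun s : ι × Fin 2 => if s = (i, 1) ∨ s = (j, 0) then (1 : K) else 0) h
  simp [bracket, hij] at hdvd

lemma bracket_ne_zero {i j : ι} (hij : i ≠ j) : (bracket i j : MvPolynomial (ι × Fin 2) K) ≠ 0 :=
  fun h => X_not_dvd_bracket hij (h ▸ dvd_zero _)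

lemma bracket_dvd_of_relabel_eq_zero [DecidableEq ι] {i j : ι} (hij : i ≠ j) {e : Multiset ι}
    {f : MvPolynomial (ι × Fin 2) K} (hf : IsWeightedHomogeneous vecWeight f e)
    (h0 : relabel K (Function.update id j i) f = 0) : bracket i j ∣ f := by
  set r : ι → ι := Function.update id j i with hr
  set c : ι → MvPolynomial (ι × Fin 2) K := fun k => if k = j then X (j, 0) else X (i, 0) with hc
  have hzero : aeval (fun s : ι × Fin 2 => c s.1 * X (r s.1, s.2)) f = 0 := by
    rw [aeval_mul_of_isWeightedHomogeneous c _ hf]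
    exact mul_eq_zero_of_right _ h0
  have hpow : aeval (fun s : ι × Fin 2 => X (i, 0) * X s) f = X (i, 0) ^ e.card * f := by
    rw [aeval_mul_of_isWeightedHomogeneous (fun _ => X (i, 0)) X hf, Multiset.map_const',
      Multiset.prod_replicate, aeval_X_left_apply]
  -- modulo the bracket, the vectors `i` and `j` are proportional with ratio `X (i,0) : X (j,0)`
  have hmod : bracket i j ∣ X (i, 0) ^ e.card * f := by
    rw [← hpow, ← sub_zero (aeval _ f), ← hzero, ← Ideal.mem_span_singleton]
    refine aeval_sub_aeval_mem (fun ⟨k, a⟩ => Ideal.mem_span_singleton.mpr ?_) f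
    by_cases hk : k = j
    · subst hk
      fin_cases a
      · simp [hr, hc, mul_comm]
      · refine dvd_of_eq ?_
        simp [hr, hc, bracket, mul_comm]
    · simp [hr, hc, hk]
  obtain ⟨g, hg⟩ := hmod
  have hX : Prime (X (i, 0) : MvPolynomial (ι × Fin 2) K) := X_prime
  obtain ⟨q, rfl⟩ := hX.pow_dvd_of_dvd_mul_left e.card (X_not_dvd_bracket hij)
    (Dvd.intro _ hg)
  refine ⟨q, mul_left_cancel₀ (pow_ne_zero e.card hX.ne_zero) ?_⟩
  rw [hg, mul_left_comm]

end BracketDivision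

section BracketFFT

variable {K ι : Type*} [Field K]

lemma eval_linSubst (g : Matrix (Fin 2) (Fin 2) K) (x : ι × Fin 2 → K)
    (f : MvPolynomial (ι × Fin 2) K) :
    eval x (linSubst g f) = eval (fun s => ∑ c, g s.2 c * x (s.1, c)) f := by
  refine congrArg (fun φ : _ →ₐ[K] _ => φ f) (?_ :
    (aeval x).comp (linSubst g) = aeval fun s => ∑ c, g s.2 c * x (s.1, c))
  ext s
  simp [linSubst]

lemma eval_congr_of_isWeightedHomogeneous {e : Multiset ι} {f : MvPolynomial (ι × Fin 2) K}
    (hf : IsWeightedHomogeneous vecWeight f e) {x y : ι × Fin 2 → K}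
    (hxy : ∀ i ∈ e, ∀ a, x (i, a) = y (i, a)) : eval x f = eval y f := by
  refine eval₂Hom_congr' rfl (fun s hs _ => hxy s.1 ?_ s.2) rfl
  obtain ⟨m, hm, hsm⟩ := (mem_vars_iff_mem_support s).mp hs
  rw [← hf (mem_support_iff.mp hm), Finsupp.weight_apply, Finsupp.sum, Multiset.mem_sum]
  refine ⟨s, hsm, ?_⟩
  rw [vecWeight, Multiset.nsmul_singleton, Multiset.mem_replicate]
  exact ⟨Finsupp.mem_support_iff.mp hsm, rfl⟩

-- `SL₂` is transitive on nonzero vectors, so an invariant of one vector is constant.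
lemma mem_bracketAlg_of_forall_mem_eq [Infinite K] {e : Multiset ι} {i : ι} (he : ∀ j ∈ e, j = i)
    {f : MvPolynomial (ι × Fin 2) K} (hf : IsWeightedHomogeneous vecWeight f e)
    (hinv : ∀ g : Matrix (Fin 2) (Fin 2) K, g.det = 1 → linSubst g f = f) :
    f ∈ bracketAlg K ι := by
  set e₁ : ι × Fin 2 → K := fun s => if s.2 = 0 then 1 else 0 with he₁
  have hzero : X (i, 0) * (f - C (eval e₁ f)) = 0 := by
    refine MvPolynomial.funext fun x => ?_
    rw [map_zero, map_mul, map_sub, eval_C, eval_X, mul_eq_zero, or_iff_not_imp_left, sub_eq_zero]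
    intro hx
    have hdet : !![(x (i, 0))⁻¹, 0; -x (i, 1), x (i, 0)].det = 1 := by
      simp [Matrix.det_fin_two, hx]
    rw [← congrArg (eval x) (hinv _ hdet), eval_linSubst]
    refine eval_congr_of_isWeightedHomogeneous hf fun j hj a => ?_
    obtain rfl := he j hj
    fin_cases a <;> simp [he₁, hx, mul_comm]
  rw [eq_of_sub_eq_zero ((mul_eq_zero.mp hzero).resolve_left (X_ne_zero _))]
  exact (bracketAlg K ι).algebraMap_mem _

lemma card_toFinset_map_update_lt [DecidableEq ι] {e : Multiset ι} {i j : ι} (hi : i ∈ e)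
    (hj : j ∈ e) (hij : i ≠ j) :
    (e.map (Function.update id j i)).toFinset.card < e.toFinset.card := by
  refine Finset.card_lt_card ⟨fun k hk => ?_, fun hsub => ?_⟩
  · obtain ⟨l, hl, rfl⟩ := Multiset.mem_map.mp (Multiset.mem_toFinset.mp hk)
    rw [Function.update_apply]
    split_ifs <;> simpa
  · obtain ⟨l, -, hl⟩ := Multiset.mem_map.mp
      (Multiset.mem_toFinset.mp (hsub (Multiset.mem_toFinset.mpr hj)))
    rw [Function.update_apply] at hl
    split_ifs at hl with h
    exacts [hij hl, h hl]

-- Setting two of the vectors equal lowers the number of vectors involved; the kernel of this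
-- specialisation is divisible by a bracket, which lowers the degree.
lemma mem_bracketAlg_of_isWeightedHomogeneous [Infinite K] (e : Multiset ι) :
    ∀ {f : MvPolynomial (ι × Fin 2) K}, IsWeightedHomogeneous vecWeight f e →
      (∀ g : Matrix (Fin 2) (Fin 2) K, g.det = 1 → linSubst g f = f) → f ∈ bracketAlg K ι := by
  classical
  refine WellFounded.induction (C := fun e => ∀ {f : MvPolynomial (ι × Fin 2) K},
    IsWeightedHomogeneous vecWeight f e → (∀ g : Matrix (Fin 2) (Fin 2) K, g.det = 1 →
      linSubst g f = f) → f ∈ bracketAlg K ι) (InvImage.wf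
    (fun e : Multiset ι => (e.card, e.toFinset.card)) (wellFounded_lt.prod_lex wellFounded_lt)) e
    fun e ih f hf hinv => ?_
  rcases isEmpty_or_nonempty ι with hι | ⟨⟨i₀⟩⟩
  · rw [eq_C_of_isEmpty f]
    exact (bracketAlg K ι).algebraMap_mem _
  by_cases he : ∃ i, ∀ j ∈ e, j = i
  · exact mem_bracketAlg_of_forall_mem_eq he.choose_spec hf hinv
  push Not at he
  obtain ⟨i, hi, -⟩ := he i₀
  obtain ⟨j, hj, hji⟩ := he i
  have hmerged : relabel K (Function.update id j i) f ∈ bracketAlg K ι := by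
    refine ih (e.map (Function.update id j i)) (Prod.lex_def.mpr (.inr ⟨e.card_map _, ?_⟩))
      (isWeightedHomogeneous_relabel _ hf) fun g hg => ?_
    · exact card_toFinset_map_update_lt hi hj hji.symm
    · rw [linSubst_relabel, hinv g hg]
  obtain ⟨p, hp, hpe, hpf⟩ := exists_mem_bracketAlg_relabel_eq (fun k => by
    by_cases hk : k = j <;> simp [hk, hji.symm]) hf hmerged
  obtain ⟨q, hq⟩ := bracket_dvd_of_relabel_eq_zero hji.symm (hf.sub hpe)
    (by rw [map_sub, hpf, sub_self])
  obtain ⟨e', rfl⟩ := Multiset.exists_cons_of_mem hi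
  obtain ⟨e', rfl⟩ := Multiset.exists_cons_of_mem ((Multiset.mem_cons.mp hj).resolve_left hji)
  have hqe : IsWeightedHomogeneous vecWeight q e' := by
    refine isWeightedHomogeneous_of_mul_left (isWeightedHomogeneous_bracket i j)
      (bracket_ne_zero hji.symm) ?_
    rw [← hq, add_assoc, Multiset.singleton_add, Multiset.singleton_add]
    exact hf.sub hpe
  have hqinv (g : Matrix (Fin 2) (Fin 2) K) (hg : g.det = 1) : linSubst g q = q := by
    refine mul_left_cancel₀ (bracket_ne_zero (K := K) hji.symm) ?_
    rw [← hq, ← hinv g hg, ← linSubst_eq_self_of_mem_bracketAlg hg hp, ← map_sub, hq, map_mul,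
      linSubst_eq_self_of_mem_bracketAlg hg (bracket_mem_bracketAlg i j)]
  have hqmem : q ∈ bracketAlg K ι := by
    refine ih e' (Prod.Lex.left _ _ ?_) hqe hqinv
    simp only [Multiset.card_cons]
    lia
  rw [eq_add_of_sub_eq hq]
  exact add_mem (mul_mem (bracket_mem_bracketAlg i j) hqmem) hp

/-- The first fundamental theorem for `SL₂`. -/
theorem mem_bracketAlg_of_forall_linSubst_eq [Infinite K] {f : MvPolynomial (ι × Fin 2) K}
    (hinv : ∀ g : Matrix (Fin 2) (Fin 2) K, g.det = 1 → linSubst g f = f) :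
    f ∈ bracketAlg K ι := by
  classical
  rw [← finsum_weightedHomogeneousComponent vecWeight f]
  refine finsum_induction (· ∈ bracketAlg K ι) (zero_mem _) (fun _ _ => add_mem) fun e => ?_
  refine mem_bracketAlg_of_isWeightedHomogeneous e
    (weightedHomogeneousComponent_isWeightedHomogeneous e f) fun g hg => ?_
  rw [linSubst, ← weightedHomogeneousComponent_aeval (isWeightedHomogeneous_linSubst_coord g)]
  exact congrArg _ (hinv g hg)

end BracketFFT

/-! ### Invariants of a torus and of a swap -/

section Weights

variable {K A : Type*} [Field K] [CommRing A] [Algebra K A] (T : Kˣ → A →ₐ[K] A)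

/-- The elements on which a one-dimensional torus acts through the character `t ↦ t ^ k`. -/
def torusWeight (k : ℤ) : Submodule K A where
  carrier := {a | ∀ t, T t a = ((t ^ k : Kˣ) : K) • a}
  zero_mem' t := by rw [map_zero, smul_zero]
  add_mem' ha hb t := by rw [map_add, ha t, hb t, smul_add]
  smul_mem' c a ha t := by rw [map_smul, ha t, smul_comm]

variable {T}

lemma mul_mem_torusWeight {a b : A} {k l : ℤ} (ha : a ∈ torusWeight T k)
    (hb : b ∈ torusWeight T l) : a * b ∈ torusWeight T (k + l) := fun t => by
  rw [map_mul, ha t, hb t, smul_mul_smul_comm, _root_.zpow_add, Units.val_mul]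

lemma mem_torusWeight_zero {a : A} : a ∈ torusWeight T 0 ↔ ∀ t, T t a = a := by
  simp [torusWeight]

lemma exists_zpow_ne_one [Infinite K] {k : ℤ} (hk : k ≠ 0) : ∃ t : Kˣ, t ^ k ≠ 1 := by
  by_contra! h
  have hpoly : (Polynomial.X : Polynomial K) * (Polynomial.X ^ k.natAbs - Polynomial.C 1) = 0 := by
    refine Polynomial.funext fun t => ?_
    rcases eq_or_ne t 0 with rfl | ht
    · simp
    have hpow : Units.mk0 t ht ^ k.natAbs = 1 := pow_natAbs_eq_one.mpr (h _)
    simpa [sub_eq_zero, ht] using congrArg Units.val hpow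
  exact (mul_ne_zero Polynomial.X_ne_zero
    (Polynomial.X_pow_sub_C_ne_zero (Int.natAbs_pos.mpr hk) 1)) hpoly

lemma linearIndependent_zpow [Infinite K] :
    LinearIndependent K fun (k : ℤ) (t : Kˣ) => ((t ^ k : Kˣ) : K) := by
  refine (linearIndependent_monoidHom Kˣ K).comp
    (fun k : ℤ => (Units.coeHom K).comp (zpowGroupHom (α := Kˣ) k)) fun k l hkl => ?_
  by_contra hne
  obtain ⟨t, ht⟩ := exists_zpow_ne_one (K := K) (sub_ne_zero.mpr hne)
  refine ht ?_
  rw [_root_.zpow_sub, mul_inv_eq_one]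
  exact Units.ext (DFunLike.congr_fun hkl t)

lemma iSupIndep_torusWeight [Infinite K] : iSupIndep (torusWeight T) := by
  rw [iSupIndep_iff_finsetSum_eq_zero_imp_eq_zero]
  intro s a ha hsum k hk
  refine (Module.forall_dual_apply_eq_zero_iff K (a k)).mp fun φ => ?_
  refine linearIndependent_iff'.mp (linearIndependent_zpow (K := K)) s (fun k => φ (a k)) ?_ k hk
  ext t
  have h : ∑ k ∈ s, φ (T t (a k)) = 0 := by
    rw [← map_sum, ← map_sum, hsum, map_zero, map_zero]
  rw [Finset.sum_apply, Pi.zero_apply, ← h]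
  refine Finset.sum_congr rfl fun k hk => ?_
  rw [ha k hk t, map_smul, Pi.smul_apply, smul_eq_mul, smul_eq_mul, mul_comm]

variable {E : Subalgebra K A}

lemma adjoin_le_sup_iSup_torusWeight (hE : ∀ e ∈ E, ∀ t, T t e = e) (I : AddSubsemigroup ℤ)
    {P : Set A} (hP : ∀ p ∈ P, ∃ k ∈ I, p ∈ torusWeight T k) {a : A}
    (ha : a ∈ Algebra.adjoin E P) :
    a ∈ Subalgebra.toSubmodule E ⊔ ⨆ k ∈ I, torusWeight T k := by
  have hmon {m : A} (hm : m ∈ Submonoid.closure P) : m = 1 ∨ ∃ k ∈ I, m ∈ torusWeight T k := by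
    induction hm using Submonoid.closure_induction with
    | mem x hx => exact .inr (hP x hx)
    | one => exact .inl rfl
    | mul x y _ _ hx hy =>
      rcases hx with rfl | ⟨k, hk, hx⟩
      · rwa [one_mul]
      rcases hy with rfl | ⟨l, hl, hy⟩
      · exact .inr ⟨k, hk, by rwa [mul_one]⟩
      · exact .inr ⟨k + l, add_mem hk hl, mul_mem_torusWeight hx hy⟩
  rw [← Subalgebra.mem_toSubmodule, Algebra.adjoin_eq_span] at ha
  induction ha using Submodule.closure_induction with
  | zero => exact zero_mem _
  | add x y _ _ hx hy => exact add_mem hx hy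
  | smul_mem e m hm =>
    rw [Algebra.smul_def, Subalgebra.algebraMap_def]
    rcases hmon hm with rfl | ⟨k, hk, hm⟩
    · exact Submodule.mem_sup_left (by simp)
    · refine Submodule.mem_sup_right (Submodule.mem_iSup_of_mem k (Submodule.mem_iSup_of_mem hk ?_))
      simpa using mul_mem_torusWeight (mem_torusWeight_zero.mpr (hE e e.2)) hm

lemma mem_of_mem_adjoin_sup_of_forall_torus_eq [Infinite K] (hE : ∀ e ∈ E, ∀ t, T t e = e)
    {P N : Set A} (hP : ∀ p ∈ P, ∃ k > 0, p ∈ torusWeight T k)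
    (hN : ∀ p ∈ N, ∃ k < 0, p ∈ torusWeight T k) {f : A}
    (hf : f ∈ (Algebra.adjoin E P).toSubmodule ⊔ (Algebra.adjoin E N).toSubmodule)
    (hfix : ∀ t, T t f = f) : f ∈ E := by
  obtain ⟨a, ha, b, hb, rfl⟩ := Submodule.mem_sup.mp hf
  obtain ⟨e, he, p, hp, rfl⟩ := Submodule.mem_sup.mp
    (adjoin_le_sup_iSup_torusWeight hE
      ⟨Set.Ioi 0, fun h h' => Set.mem_Ioi.mpr (add_pos h h')⟩ hP ha)
  obtain ⟨e', he', n, hn, rfl⟩ := Submodule.mem_sup.mp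
    (adjoin_le_sup_iSup_torusWeight hE
      ⟨Set.Iio 0, fun h h' => Set.mem_Iio.mpr (add_neg h h')⟩ hN hb)
  have hpn : p + n ∈ ⨆ k ≠ 0, torusWeight T k := by
    have hle {I : AddSubsemigroup ℤ} (hI : ∀ k ∈ I, k ≠ 0) :
        ⨆ k ∈ I, torusWeight T k ≤ ⨆ k ≠ 0, torusWeight T k :=
      biSup_mono hI
    exact add_mem (hle (fun k hk => ne_of_gt hk) hp) (hle (fun k hk => ne_of_lt hk) hn)
  have hfix' : p + n ∈ torusWeight T 0 := mem_torusWeight_zero.mpr fun t => by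
    have := hfix t
    simp only [map_add, hE e he t, hE e' he' t] at this ⊢
    linear_combination this
  have hzero : p + n = 0 :=
    (Submodule.disjoint_def.mp (iSupIndep_torusWeight 0)) _ hfix' hpn
  rw [add_add_add_comm, hzero, add_zero]
  exact add_mem he he'

end Weights

section Pairing

variable {E A : Type*} [CommRing E] [CommRing A] [Algebra E A]

lemma mul_mem_adjoin_sup_adjoin {P N : Set A}
    (h : ∀ p ∈ P, ∀ n ∈ N, p * n ∈ Submodule.span E ({1} ∪ P ∪ N)) {p : A} (hp : p ∈ P) {a : A}
    (ha : a ∈ (Algebra.adjoin E P).toSubmodule ⊔ (Algebra.adjoin E N).toSubmodule) :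
    p * a ∈ (Algebra.adjoin E P).toSubmodule ⊔ (Algebra.adjoin E N).toSubmodule := by
  set S := (Algebra.adjoin E P).toSubmodule ⊔ (Algebra.adjoin E N).toSubmodule
  have hmon {m : A} (hm : m ∈ Submonoid.closure N) : ∀ p ∈ P, p * m ∈ S := by
    induction hm using Submonoid.closure_induction_left with
    | one =>
      intro p hp
      rw [mul_one]
      exact Submodule.mem_sup_left (Algebra.subset_adjoin hp)
    | mul_left n hn m hm ih =>
      intro p hp
      have hmN : m ∈ Algebra.adjoin E N :=
        Submonoid.closure_le.mpr (Algebra.subset_adjoin (R := E)) hm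
      rw [← mul_assoc]
      refine (Submodule.span_le (p := S.comap (LinearMap.mulRight E m))).mpr (fun x hx => ?_)
        (h p hp n hn)
      rcases hx with (rfl | hx) | hx
      · exact Submodule.mem_sup_right (by rwa [LinearMap.mulRight_apply, one_mul])
      · exact ih x hx
      · exact Submodule.mem_sup_right
          ((Algebra.adjoin E N).mul_mem (Algebra.subset_adjoin hx) hmN)
  obtain ⟨b, hb, c, hc, rfl⟩ := Submodule.mem_sup.mp ha
  rw [mul_add]
  refine add_mem (Submodule.mem_sup_left
    ((Algebra.adjoin E P).mul_mem (Algebra.subset_adjoin hp) hb)) ?_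
  rw [Algebra.adjoin_eq_span] at hc
  exact (Submodule.span_le (p := S.comap (LinearMap.mulLeft E p))).mpr (fun m hm => hmon hm p hp) hc

lemma adjoin_union_le_sup {P N : Set A}
    (h : ∀ p ∈ P, ∀ n ∈ N, p * n ∈ Submodule.span E ({1} ∪ P ∪ N)) :
    (Algebra.adjoin E (P ∪ N)).toSubmodule ≤
      (Algebra.adjoin E P).toSubmodule ⊔ (Algebra.adjoin E N).toSubmodule := by
  rw [Algebra.adjoin_eq_span, Submodule.span_le]
  intro m hm
  induction hm using Submonoid.closure_induction_left with
  | one => exact Submodule.mem_sup_left (one_mem (Algebra.adjoin E P))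
  | mul_left q hq m _ ih =>
    rcases hq with hq | hq
    · exact mul_mem_adjoin_sup_adjoin h hq ih
    · rw [SetLike.mem_coe, sup_comm] at ih ⊢
      refine mul_mem_adjoin_sup_adjoin (fun n hn p hp => ?_) hq ih
      rw [mul_comm, Set.union_right_comm]
      exact h p hp n hn

end Pairing

section Swap

variable {K A : Type*} [Field K] [CommRing A] [Algebra K A]

variable {D : Subalgebra K A} {sg : A →ₐ[K] A} {Z : Set A}

lemma adjoin_le_one_sup_span_sub_swap (h2 : (2 : K) ≠ 0) (hZ : ∀ z ∈ Z, z + sg z ∈ D)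
    (hZZ : ∀ z ∈ Z, ∀ z' ∈ Z, (z - sg z) * (z' - sg z') ∈ D) :
    (Algebra.adjoin D Z).toSubmodule ≤ 1 ⊔ Submodule.span D ((fun z => z - sg z) '' Z) := by
  set S : Submodule D A := 1 ⊔ Submodule.span D ((fun z => z - sg z) '' Z)
  have hDS {d : A} (hd : d ∈ D) : d ∈ S :=
    Submodule.mem_sup_left (Submodule.mem_one.mpr ⟨⟨d, hd⟩, rfl⟩)
  have hsub {z s : A} (hz : z ∈ Z) (hs : s ∈ S) : (z - sg z) * s ∈ S := by
    obtain ⟨d, hd, n, hn, rfl⟩ := Submodule.mem_sup.mp hs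
    obtain ⟨d, rfl⟩ := Submodule.mem_one.mp hd
    rw [mul_add, mul_comm, ← Algebra.smul_def]
    refine add_mem (S.smul_mem d (Submodule.mem_sup_right (Submodule.subset_span ⟨z, hz, rfl⟩))) ?_
    refine (Submodule.span_le (p := S.comap (LinearMap.mulLeft D (z - sg z)))).mpr ?_ hn
    rintro _ ⟨z', hz', rfl⟩
    exact hDS (hZZ z hz z' hz')
  have hmul {z s : A} (hz : z ∈ Z) (hs : s ∈ S) : z * s ∈ S := by
    have h : (2 : K) • (z * s) = (⟨z + sg z, hZ z hz⟩ : D) • s + (z - sg z) * s := by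
      rw [two_smul, Subalgebra.smul_def, smul_eq_mul]
      ring
    rw [← inv_smul_smul₀ h2 (z * s), h]
    exact S.smul_of_tower_mem _ (add_mem (S.smul_mem _ hs) (hsub hz hs))
  rw [Algebra.adjoin_eq_span, Submodule.span_le]
  intro m hm
  induction hm using Submonoid.closure_induction_left with
  | one => exact hDS (one_mem D)
  | mul_left z hz m _ ih => exact hmul hz ih

lemma mem_of_mem_adjoin_of_swap_eq (h2 : (2 : K) ≠ 0) (hD : ∀ d ∈ D, sg d = d)
    (hZ : ∀ z ∈ Z, z + sg z ∈ D) (hZZ : ∀ z ∈ Z, ∀ z' ∈ Z, (z - sg z) * (z' - sg z') ∈ D) {f : A}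
    (hf : f ∈ Algebra.adjoin D Z) (hfix : sg f = f) : f ∈ D := by
  have hneg {n : A} (hn : n ∈ Submodule.span D ((fun z => z - sg z) '' Z)) : sg n = -n := by
    induction hn using Submodule.span_induction with
    | mem x hx =>
      obtain ⟨z, hz, rfl⟩ := hx
      have h := hD _ (hZ z hz)
      rw [map_add] at h
      rw [map_sub]
      linear_combination -h
    | zero => rw [map_zero, neg_zero]
    | add x y _ _ hx hy => rw [map_add, hx, hy, neg_add]
    | smul d x _ hx => rw [Subalgebra.smul_def, smul_eq_mul, map_mul, hx, hD d d.2, mul_neg]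
  obtain ⟨d, hd, n, hn, rfl⟩ :=
    Submodule.mem_sup.mp (adjoin_le_one_sup_span_sub_swap h2 hZ hZZ hf)
  obtain ⟨⟨d, hdD⟩, rfl⟩ := Submodule.mem_one.mp hd
  have hn0 : (2 : K) • n = 0 := by
    rw [map_add, show sg (algebraMap D A ⟨d, hdD⟩) = algebraMap D A ⟨d, hdD⟩ from hD d hdD,
      hneg hn, add_right_inj] at hfix
    rw [two_smul, ← neg_eq_iff_add_eq_zero, hfix]
  rw [(smul_eq_zero.mp hn0).resolve_left h2, add_zero]
  exact hdD

end Swap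

section Polarization

variable {K A n : Type*} [Field K] [CommRing A] [Algebra K A] [Fintype n]

/-- The symmetric matrix `u vᵀ + v uᵀ`. -/
def symProd (u v : n → A) : Matrix n n A := vecMulVec u v + vecMulVec v u

omit [Fintype n] in
lemma symProd_comm (u v : n → A) : symProd u v = symProd v u := add_comm _ _

lemma dotProduct_mul_symProd_mul (M M' : Matrix n n A) (u v x y : n → A) :
    x ⬝ᵥ (M * symProd u v * M') *ᵥ y =
      (x ⬝ᵥ M *ᵥ u) * (v ⬝ᵥ M' *ᵥ y) + (x ⬝ᵥ M *ᵥ v) * (u ⬝ᵥ M' *ᵥ y) := by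
  simp only [symProd, ← mulVec_mulVec, add_mulVec, vecMulVec_mulVec, mulVec_add, dotProduct_add,
    mulVec_smul, op_smul_eq_smul, dotProduct_smul, smul_eq_mul, mul_comm]

lemma trace_mul_symProd (M : Matrix n n A) (u v : n → A) :
    (M * symProd u v).trace = u ⬝ᵥ M *ᵥ v + v ⬝ᵥ M *ᵥ u := by
  simp only [symProd, mul_add, trace_add, mul_vecMulVec, trace_vecMulVec]
  rw [dotProduct_comm, add_comm, dotProduct_comm (M *ᵥ v)]

lemma dotProduct_transpose_mulVec (M : Matrix n n A) (x y : n → A) :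
    x ⬝ᵥ Mᵀ *ᵥ y = y ⬝ᵥ M *ᵥ x := by
  rw [mulVec_transpose, dotProduct_comm, dotProduct_mulVec]

lemma map_dotProduct_mulVec {B : Type*} [CommRing B] (φ : A →+* B) (M : Matrix n n A)
    (x y : n → A) : φ (x ⬝ᵥ M *ᵥ y) = (φ ∘ x) ⬝ᵥ M.map φ *ᵥ (φ ∘ y) := by
  rw [RingHom.map_dotProduct]
  congr 1
  funext i
  exact RingHom.map_mulVec φ M y i

/-- The values of the bilinear forms `M ∈ 𝓜` on the vectors of `X`. -/
def formSet (𝓜 : Submodule K (Matrix n n A)) (X : Set (n → A)) : Set A :=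
  {a | ∃ M ∈ 𝓜, ∃ x ∈ X, ∃ y ∈ X, x ⬝ᵥ M *ᵥ y = a}

/-- The conditions under which a space `𝓜` of bilinear forms, a set `X` of vectors and an algebra
`D` already account for the symmetric matrix `u vᵀ + v uᵀ`. -/
structure IsPolarClosed (𝓜 : Submodule K (Matrix n n A)) (X : Set (n → A)) (D : Subalgebra K A)
    (u v : n → A) : Prop where
  transpose_mem : ∀ M ∈ 𝓜, Mᵀ ∈ 𝓜
  mul_symProd_mul_mem : ∀ M ∈ 𝓜, ∀ M' ∈ 𝓜, M * symProd u v * M' ∈ 𝓜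
  trace_mem : ∀ M ∈ 𝓜, (M * symProd u v).trace ∈ D
  form_mem : formSet 𝓜 X ⊆ D

/-- The values `u ⬝ M y`, for `M ∈ 𝓜` and `y` equal to `u` or in `X`; these are the generators of
positive (or negative) weight for a torus which scales `u`. -/
def weightForms (𝓜 : Submodule K (Matrix n n A)) (X : Set (n → A)) (u : n → A) : Set A :=
  {a | ∃ M ∈ 𝓜, ∃ y ∈ insert u X, u ⬝ᵥ M *ᵥ y = a}

/-- Generators, over the forms in `X` alone, of the functions fixed by the torus which scales `u`
by `t` and `v` by `t⁻¹`. -/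
def balancedForms (𝓜 : Submodule K (Matrix n n A)) (X : Set (n → A)) (u v : n → A) : Set A :=
  {a | ∃ M ∈ 𝓜, u ⬝ᵥ M *ᵥ v = a} ∪
    {a | ∃ M ∈ 𝓜, ∃ x ∈ X, ∃ M' ∈ 𝓜, ∃ y ∈ X, (u ⬝ᵥ M *ᵥ x) * (v ⬝ᵥ M' *ᵥ y) = a}

variable {𝓜 : Submodule K (Matrix n n A)} {X : Set (n → A)} {D : Subalgebra K A} {u v : n → A}

lemma IsPolarClosed.form_mul_form_mem (h : IsPolarClosed 𝓜 X D u v) {M M' : Matrix n n A}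
    (hM : M ∈ 𝓜) (hM' : M' ∈ 𝓜) {y : n → A} (hy : y ∈ insert v X) :
    (u ⬝ᵥ M *ᵥ u) * (v ⬝ᵥ M' *ᵥ y) ∈
      Submodule.span (Algebra.adjoin D (balancedForms 𝓜 X u v)) ({1} ∪ weightForms 𝓜 X u) := by
  have hE {N : Matrix n n A} (hN : N ∈ 𝓜) :
      u ⬝ᵥ N *ᵥ v ∈ Algebra.adjoin D (balancedForms 𝓜 X u v) :=
    Algebra.subset_adjoin (.inl ⟨N, hN, rfl⟩)
  have hMM' := h.mul_symProd_mul_mem M hM M' hM'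
  have hform : (u ⬝ᵥ M *ᵥ u) * (v ⬝ᵥ M' *ᵥ y) = u ⬝ᵥ (M * symProd u v * M') *ᵥ y -
      (⟨_, hE hM⟩ : Algebra.adjoin D (balancedForms 𝓜 X u v)) • (u ⬝ᵥ M' *ᵥ y) := by
    rw [dotProduct_mul_symProd_mul, Subalgebra.smul_def, smul_eq_mul, add_sub_cancel_right]
  have hmem {N : Matrix n n A} (hN : N ∈ 𝓜) : u ⬝ᵥ N *ᵥ y ∈
      Submodule.span (Algebra.adjoin D (balancedForms 𝓜 X u v)) ({1} ∪ weightForms 𝓜 X u) := by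
    rcases hy with rfl | hy
    · have := Submodule.smul_mem _ (⟨_, hE hN⟩ : Algebra.adjoin D (balancedForms 𝓜 X u y))
        (Submodule.subset_span (.inl rfl) : (1 : A) ∈ Submodule.span
          (Algebra.adjoin D (balancedForms 𝓜 X u y)) ({1} ∪ weightForms 𝓜 X u))
      rwa [Subalgebra.smul_def, smul_eq_mul, mul_one] at this
    · exact Submodule.subset_span (.inr ⟨N, hN, y, .inr hy, rfl⟩)
  rw [hform]
  exact sub_mem (hmem hMM') (Submodule.smul_mem _ _ (hmem hM'))

lemma IsPolarClosed.symm (h : IsPolarClosed 𝓜 X D u v) : IsPolarClosed 𝓜 X D v u where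
  transpose_mem := h.transpose_mem
  mul_symProd_mul_mem := symProd_comm u v ▸ h.mul_symProd_mul_mem
  trace_mem := symProd_comm u v ▸ h.trace_mem
  form_mem := h.form_mem

lemma IsPolarClosed.balancedForms_comm (h : IsPolarClosed 𝓜 X D u v) :
    balancedForms 𝓜 X u v = balancedForms 𝓜 X v u := by
  have hle {u v : n → A} : balancedForms 𝓜 X u v ⊆ balancedForms 𝓜 X v u := by
    rintro a (⟨M, hM, rfl⟩ | ⟨M, hM, x, hx, M', hM', y, hy, rfl⟩)
    · exact .inl ⟨Mᵀ, h.transpose_mem M hM, dotProduct_transpose_mulVec M v u⟩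
    · exact .inr ⟨M', hM', y, hy, M, hM, x, hx, mul_comm _ _⟩
  exact hle.antisymm hle

lemma IsPolarClosed.weightForms_mul_mem (h : IsPolarClosed 𝓜 X D u v) {p q : A}
    (hp : p ∈ weightForms 𝓜 X u) (hq : q ∈ weightForms 𝓜 X v) :
    p * q ∈ Submodule.span (Algebra.adjoin D (balancedForms 𝓜 X u v))
      ({1} ∪ weightForms 𝓜 X u ∪ weightForms 𝓜 X v) := by
  obtain ⟨M, hM, x, hx | hx, rfl⟩ := hp
  · obtain ⟨M', hM', y, hy, rfl⟩ := hq
    subst hx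
    exact Submodule.span_mono Set.subset_union_left (h.form_mul_form_mem hM hM' hy)
  obtain ⟨M', hM', y, hy | hy, rfl⟩ := hq
  · subst hy
    have hmem := h.symm.form_mul_form_mem hM' hM (.inr hx)
    rw [← h.balancedForms_comm] at hmem
    rw [mul_comm, Set.union_right_comm]
    exact Submodule.span_mono Set.subset_union_left hmem
  · have hE : (u ⬝ᵥ M *ᵥ x) * (v ⬝ᵥ M' *ᵥ y) ∈ Algebra.adjoin D (balancedForms 𝓜 X u v) :=
      Algebra.subset_adjoin (.inr ⟨M, hM, x, hx, M', hM', y, hy, rfl⟩)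
    have hspan := Submodule.smul_mem (Submodule.span (Algebra.adjoin D (balancedForms 𝓜 X u v))
      ({1} ∪ weightForms 𝓜 X u ∪ weightForms 𝓜 X v)) ⟨_, hE⟩
      (Submodule.subset_span (.inl (.inl rfl)) : (1 : A) ∈ _)
    rwa [Subalgebra.smul_def, smul_eq_mul, mul_one] at hspan

/-- The algebra endomorphism `φ` fixes the forms of `𝓜`, the vectors of `X` and the elements
of `D`. -/
structure FixesForms (𝓜 : Submodule K (Matrix n n A)) (X : Set (n → A)) (D : Subalgebra K A)
    (φ : A →ₐ[K] A) : Prop where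
  map_form : ∀ M ∈ 𝓜, M.map φ = M
  comp_vec : ∀ x ∈ X, φ ∘ x = x
  map_mem : ∀ d ∈ D, φ d = d

lemma FixesForms.map_dotProduct_mulVec {φ : A →ₐ[K] A} (hφ : FixesForms 𝓜 X D φ)
    {M : Matrix n n A} (hM : M ∈ 𝓜) (x y : n → A) :
    φ (x ⬝ᵥ M *ᵥ y) = (φ ∘ x) ⬝ᵥ M *ᵥ (φ ∘ y) := by
  have h := OrthogonalInvariants.map_dotProduct_mulVec (φ : A →+* A) M x y
  rwa [show M.map (φ : A →+* A) = M from hφ.map_form M hM] at h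

lemma IsPolarClosed.add_swap_mem (h : IsPolarClosed 𝓜 X D u v) {sg : A →ₐ[K] A}
    (hsg : FixesForms 𝓜 X D sg) (hu : sg ∘ u = v) (hv : sg ∘ v = u) {z : A}
    (hz : z ∈ balancedForms 𝓜 X u v) : z + sg z ∈ D := by
  obtain ⟨M, hM, rfl⟩ | ⟨M, hM, x, hx, M', hM', y, hy, rfl⟩ := hz
  · rw [hsg.map_dotProduct_mulVec hM, hu, hv, ← trace_mul_symProd]
    exact h.trace_mem M hM
  · have hmem := h.form_mem ⟨_, h.mul_symProd_mul_mem _ (h.transpose_mem M hM) M' hM', x, hx, y, hy,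
      rfl⟩
    rw [dotProduct_mul_symProd_mul, dotProduct_transpose_mulVec, dotProduct_transpose_mulVec]
      at hmem
    rw [map_mul, hsg.map_dotProduct_mulVec hM, hsg.map_dotProduct_mulVec hM', hu, hv,
      hsg.comp_vec x hx, hsg.comp_vec y hy]
    exact hmem

lemma IsPolarClosed.form_sub_mul_form_sub_mem (h : IsPolarClosed 𝓜 X D u v) {M M' : Matrix n n A}
    (hM : M ∈ 𝓜) (hM' : M' ∈ 𝓜) :
    (u ⬝ᵥ M *ᵥ v - v ⬝ᵥ M *ᵥ u) * (u ⬝ᵥ M' *ᵥ v - v ⬝ᵥ M' *ᵥ u) ∈ D := by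
  have hmem := sub_mem (h.trace_mem _ (h.mul_symProd_mul_mem M hM M' hM'))
    (h.trace_mem _ (h.mul_symProd_mul_mem M hM M'ᵀ (h.transpose_mem M' hM')))
  simp only [trace_mul_symProd, dotProduct_mul_symProd_mul, dotProduct_transpose_mulVec] at hmem
  convert hmem using 1
  ring

lemma IsPolarClosed.form_sub_mul_minor_mem (h : IsPolarClosed 𝓜 X D u v)
    {M M₁ M₂ : Matrix n n A} (hM : M ∈ 𝓜) (hM₁ : M₁ ∈ 𝓜) (hM₂ : M₂ ∈ 𝓜) {x y : n → A}
    (hx : x ∈ X) (hy : y ∈ X) :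
    (u ⬝ᵥ M *ᵥ v - v ⬝ᵥ M *ᵥ u) *
      ((u ⬝ᵥ M₁ *ᵥ x) * (v ⬝ᵥ M₂ *ᵥ y) - (v ⬝ᵥ M₁ *ᵥ x) * (u ⬝ᵥ M₂ *ᵥ y)) ∈ D := by
  have hform {N : Matrix n n A} (hN : N ∈ 𝓜) :
      x ⬝ᵥ (M₁ᵀ * symProd u v * N * symProd u v * M₂) *ᵥ y ∈ D :=
    h.form_mem ⟨_, h.mul_symProd_mul_mem _ (h.mul_symProd_mul_mem _ (h.transpose_mem M₁ hM₁) N hN)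
      M₂ hM₂, x, hx, y, hy, rfl⟩
  have hmem := sub_mem (hform (h.transpose_mem M hM)) (hform hM)
  simp only [dotProduct_mul_symProd_mul, dotProduct_transpose_mulVec] at hmem
  convert hmem using 1
  ring

lemma IsPolarClosed.minor_mul_minor_mem (h : IsPolarClosed 𝓜 X D u v)
    {M₁ M₂ M₃ M₄ : Matrix n n A} (hM₁ : M₁ ∈ 𝓜) (hM₂ : M₂ ∈ 𝓜) (hM₃ : M₃ ∈ 𝓜) (hM₄ : M₄ ∈ 𝓜)
    {x₁ x₂ x₃ x₄ : n → A} (hx₁ : x₁ ∈ X) (hx₂ : x₂ ∈ X) (hx₃ : x₃ ∈ X) (hx₄ : x₄ ∈ X) :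
    ((u ⬝ᵥ M₁ *ᵥ x₁) * (v ⬝ᵥ M₂ *ᵥ x₂) - (v ⬝ᵥ M₁ *ᵥ x₁) * (u ⬝ᵥ M₂ *ᵥ x₂)) *
      ((u ⬝ᵥ M₃ *ᵥ x₃) * (v ⬝ᵥ M₄ *ᵥ x₄) - (v ⬝ᵥ M₃ *ᵥ x₃) * (u ⬝ᵥ M₄ *ᵥ x₄)) ∈ D := by
  have hform {M N : Matrix n n A} (hM : M ∈ 𝓜) (hN : N ∈ 𝓜) {x y : n → A} (hx : x ∈ X)
      (hy : y ∈ X) : x ⬝ᵥ (Mᵀ * symProd u v * N) *ᵥ y ∈ D :=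
    h.form_mem ⟨_, h.mul_symProd_mul_mem _ (h.transpose_mem M hM) N hN, x, hx, y, hy, rfl⟩
  have hmem := sub_mem (mul_mem (hform hM₁ hM₄ hx₁ hx₄) (hform hM₂ hM₃ hx₂ hx₃))
    (mul_mem (hform hM₁ hM₃ hx₁ hx₃) (hform hM₂ hM₄ hx₂ hx₄))
  simp only [dotProduct_mul_symProd_mul, dotProduct_transpose_mulVec] at hmem
  convert hmem using 1
  ring

lemma IsPolarClosed.sub_swap_mul_sub_swap_mem (h : IsPolarClosed 𝓜 X D u v) {sg : A →ₐ[K] A}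
    (hsg : FixesForms 𝓜 X D sg) (hu : sg ∘ u = v) (hv : sg ∘ v = u) {z z' : A}
    (hz : z ∈ balancedForms 𝓜 X u v) (hz' : z' ∈ balancedForms 𝓜 X u v) :
    (z - sg z) * (z' - sg z') ∈ D := by
  have hswap {M : Matrix n n A} (hM : M ∈ 𝓜) : sg (u ⬝ᵥ M *ᵥ v) = v ⬝ᵥ M *ᵥ u := by
    rw [hsg.map_dotProduct_mulVec hM, hu, hv]
  have hswap₂ {M M' : Matrix n n A} (hM : M ∈ 𝓜) (hM' : M' ∈ 𝓜) {x y : n → A} (hx : x ∈ X)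
      (hy : y ∈ X) : sg ((u ⬝ᵥ M *ᵥ x) * (v ⬝ᵥ M' *ᵥ y)) =
        (v ⬝ᵥ M *ᵥ x) * (u ⬝ᵥ M' *ᵥ y) := by
    rw [map_mul, hsg.map_dotProduct_mulVec hM, hsg.map_dotProduct_mulVec hM', hu, hv,
      hsg.comp_vec x hx, hsg.comp_vec y hy]
  obtain ⟨M, hM, rfl⟩ | ⟨M₁, hM₁, x₁, hx₁, M₂, hM₂, x₂, hx₂, rfl⟩ := hz <;>
    obtain ⟨M', hM', rfl⟩ | ⟨M₃, hM₃, x₃, hx₃, M₄, hM₄, x₄, hx₄, rfl⟩ := hz'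
  · rw [hswap hM, hswap hM']
    exact h.form_sub_mul_form_sub_mem hM hM'
  · rw [hswap hM, hswap₂ hM₃ hM₄ hx₃ hx₄]
    exact h.form_sub_mul_minor_mem hM hM₃ hM₄ hx₃ hx₄
  · rw [mul_comm, hswap hM', hswap₂ hM₁ hM₂ hx₁ hx₂]
    exact h.form_sub_mul_minor_mem hM' hM₁ hM₂ hx₁ hx₂
  · rw [hswap₂ hM₁ hM₂ hx₁ hx₂, hswap₂ hM₃ hM₄ hx₃ hx₄]
    exact h.minor_mul_minor_mem hM₁ hM₂ hM₃ hM₄ hx₁ hx₂ hx₃ hx₄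

lemma IsPolarClosed.mem_adjoin_weightForms (h : IsPolarClosed 𝓜 X D u v) {f : A}
    (hf : f ∈ Algebra.adjoin K (D ∪ formSet 𝓜 (X ∪ {u, v}))) :
    f ∈ Algebra.adjoin (Algebra.adjoin D (balancedForms 𝓜 X u v))
      (weightForms 𝓜 X u ∪ weightForms 𝓜 X v) := by
  set E := Algebra.adjoin D (balancedForms 𝓜 X u v)
  set S := Algebra.adjoin E (weightForms 𝓜 X u ∪ weightForms 𝓜 X v)
  have hE {e : A} (he : e ∈ E) : e ∈ S := S.algebraMap_mem ⟨e, he⟩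
  have hD {d : A} (hd : d ∈ D) : d ∈ S := hE (E.algebraMap_mem ⟨d, hd⟩)
  have hu {M : Matrix n n A} (hM : M ∈ 𝓜) {y : n → A} (hy : y ∈ X ∪ {u, v}) :
      u ⬝ᵥ M *ᵥ y ∈ S := by
    rcases hy with hy | rfl | rfl
    · exact Algebra.subset_adjoin (.inl ⟨M, hM, y, .inr hy, rfl⟩)
    · exact Algebra.subset_adjoin (.inl ⟨M, hM, y, .inl rfl, rfl⟩)
    · exact hE (Algebra.subset_adjoin (.inl ⟨M, hM, rfl⟩))
  have hv {M : Matrix n n A} (hM : M ∈ 𝓜) {y : n → A} (hy : y ∈ X ∪ {u, v}) :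
      v ⬝ᵥ M *ᵥ y ∈ S := by
    rcases hy with hy | rfl | rfl
    · exact Algebra.subset_adjoin (.inr ⟨M, hM, y, .inr hy, rfl⟩)
    · rw [← dotProduct_transpose_mulVec]
      exact hE (Algebra.subset_adjoin (.inl ⟨Mᵀ, h.transpose_mem M hM, rfl⟩))
    · exact Algebra.subset_adjoin (.inr ⟨M, hM, y, .inl rfl, rfl⟩)
  suffices hle : Algebra.adjoin K (D ∪ formSet 𝓜 (X ∪ {u, v})) ≤ S.restrictScalars K from hle hf
  refine Algebra.adjoin_le (Set.union_subset (fun d hd => hD hd) ?_)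
  rintro _ ⟨M, hM, x, hx | rfl | rfl, y, hy, rfl⟩
  · rcases hy with hy | rfl | rfl
    · exact hD (h.form_mem ⟨M, hM, x, hx, y, hy, rfl⟩)
    · rw [← dotProduct_transpose_mulVec]
      exact hu (h.transpose_mem M hM) (.inl hx)
    · rw [← dotProduct_transpose_mulVec]
      exact hv (h.transpose_mem M hM) (.inl hx)
  · exact hu hM hy
  · exact hv hM hy

lemma exists_mem_torusWeight_of_mem_weightForms {T : Kˣ → A →ₐ[K] A}
    (hT : ∀ t, FixesForms 𝓜 X D (T t)) {m : ℤ}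
    (hu : ∀ t : Kˣ, T t ∘ u = ((t ^ m : Kˣ) : K) • u) {p : A} (hp : p ∈ weightForms 𝓜 X u) :
    p ∈ torusWeight T m ∨ p ∈ torusWeight T (m + m) := by
  obtain ⟨M, hM, x, rfl | hx, rfl⟩ := hp
  · refine .inr fun t => ?_
    rw [(hT t).map_dotProduct_mulVec hM, hu]
    simp only [_root_.zpow_add]
    rw [mulVec_smul, dotProduct_smul, smul_dotProduct, smul_smul, Units.val_mul]
  · refine .inl fun t => ?_
    rw [(hT t).map_dotProduct_mulVec hM, hu, (hT t).comp_vec x hx, smul_dotProduct]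

lemma FixesForms.map_eq_of_mem_adjoin_balancedForms {T : Kˣ → A →ₐ[K] A}
    (hT : ∀ t, FixesForms 𝓜 X D (T t)) (hu : ∀ t : Kˣ, T t ∘ u = (t : K) • u)
    (hv : ∀ t : Kˣ, T t ∘ v = ((t⁻¹ : Kˣ) : K) • v) {e : A}
    (he : e ∈ Algebra.adjoin D (balancedForms 𝓜 X u v)) (t : Kˣ) : T t e = e := by
  induction he using Algebra.adjoin_induction with
  | mem e he =>
    obtain ⟨M, hM, rfl⟩ | ⟨M, hM, x, hx, M', hM', y, hy, rfl⟩ := he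
    · rw [(hT t).map_dotProduct_mulVec hM, hu, hv, mulVec_smul, dotProduct_smul, smul_dotProduct,
        smul_smul, Units.inv_mul, one_smul]
    · rw [map_mul, (hT t).map_dotProduct_mulVec hM, (hT t).map_dotProduct_mulVec hM', hu, hv,
        (hT t).comp_vec x hx, (hT t).comp_vec y hy, smul_dotProduct, smul_dotProduct,
        smul_mul_smul_comm, Units.mul_inv, one_smul]
  | algebraMap d => exact (hT t).map_mem d d.2
  | add x y _ _ hx hy => rw [map_add, hx, hy]
  | mul x y _ _ hx hy => rw [map_mul, hx, hy]

theorem IsPolarClosed.mem_of_forall_torus_eq_of_swap_eq [Infinite K] (h2 : (2 : K) ≠ 0)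
    (h : IsPolarClosed 𝓜 X D u v) {T : Kˣ → A →ₐ[K] A} (hT : ∀ t, FixesForms 𝓜 X D (T t))
    (hTu : ∀ t : Kˣ, T t ∘ u = (t : K) • u) (hTv : ∀ t : Kˣ, T t ∘ v = ((t⁻¹ : Kˣ) : K) • v)
    {sg : A →ₐ[K] A} (hsg : FixesForms 𝓜 X D sg) (hsu : sg ∘ u = v) (hsv : sg ∘ v = u) {f : A}
    (hf : f ∈ Algebra.adjoin K (D ∪ formSet 𝓜 (X ∪ {u, v}))) (hTf : ∀ t, T t f = f)
    (hsf : sg f = f) : f ∈ D := by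
  have hsplit := adjoin_union_le_sup (fun p hp q hq => h.weightForms_mul_mem hp hq)
    (h.mem_adjoin_weightForms hf)
  set E := Algebra.adjoin D (balancedForms 𝓜 X u v)
  have hP : ∀ p ∈ weightForms 𝓜 X u, ∃ k > 0, p ∈ torusWeight T k := fun p hp =>
    (exists_mem_torusWeight_of_mem_weightForms (m := 1) hT (by simpa using hTu) hp).elim
      (fun hp => ⟨_, one_pos, hp⟩) (fun hp => ⟨_, by lia, hp⟩)
  have hN : ∀ p ∈ weightForms 𝓜 X v, ∃ k < 0, p ∈ torusWeight T k := fun p hp =>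
    (exists_mem_torusWeight_of_mem_weightForms (m := -1) hT (by simpa using hTv) hp).elim
      (fun hp => ⟨_, by lia, hp⟩) (fun hp => ⟨_, by lia, hp⟩)
  have hE : f ∈ E.restrictScalars K := mem_of_mem_adjoin_sup_of_forall_torus_eq
    (fun e he => FixesForms.map_eq_of_mem_adjoin_balancedForms hT hTu hTv he) hP hN hsplit hTf
  exact mem_of_mem_adjoin_of_swap_eq h2 hsg.map_mem (fun z hz => h.add_swap_mem hsg hsu hsv hz)
    (fun z hz z' hz' => h.sub_swap_mul_sub_swap_mem hsg hsu hsv hz hz') hE hsf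

end Polarization

section Chain

variable {K A n : Type*} [Field K] [CommRing A] [Algebra K A] [Fintype n] [DecidableEq n]

variable (K) in
/-- The algebra of words in the matrices `M * J` with `M ∈ L`. -/
def wordAlg (J : Matrix n n A) (L : Set (Matrix n n A)) : Subalgebra K (Matrix n n A) :=
  Algebra.adjoin K ((· * J) '' L)

variable (K) in
/-- The algebra generated by the traces of the words in the matrices `M * J`, `M ∈ L`, and by the
values `x ⬝ J w y` of these words `w` on the vectors of `X`. -/
def chainAlg (J : Matrix n n A) (L : Set (Matrix n n A)) (X : Set (n → A)) : Subalgebra K A :=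
  Algebra.adjoin K (trace '' (wordAlg K J L : Set (Matrix n n A)) ∪
    formSet ((wordAlg K J L).toSubmodule.map (LinearMap.mulLeft K J)) X)

variable {J : Matrix n n A} {L : Set (Matrix n n A)} {X : Set (n → A)}

lemma mul_mem_wordAlg {M : Matrix n n A} (hM : M ∈ L) : M * J ∈ wordAlg K J L :=
  Algebra.subset_adjoin ⟨M, hM, rfl⟩

lemma trace_mem_chainAlg {w : Matrix n n A} (hw : w ∈ wordAlg K J L) :
    w.trace ∈ chainAlg K J L X :=
  Algebra.subset_adjoin (.inl ⟨w, hw, rfl⟩)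

lemma form_mem_chainAlg {w : Matrix n n A} (hw : w ∈ wordAlg K J L) {x y : n → A} (hx : x ∈ X)
    (hy : y ∈ X) : x ⬝ᵥ (J * w) *ᵥ y ∈ chainAlg K J L X :=
  Algebra.subset_adjoin (.inr ⟨_, ⟨w, hw, rfl⟩, x, hx, y, hy, rfl⟩)

lemma chainAlg_le {D : Subalgebra K A} (htrace : ∀ w ∈ wordAlg K J L, w.trace ∈ D)
    (hform : ∀ w ∈ wordAlg K J L, ∀ x ∈ X, ∀ y ∈ X, x ⬝ᵥ (J * w) *ᵥ y ∈ D) :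
    chainAlg K J L X ≤ D := by
  refine Algebra.adjoin_le (Set.union_subset ?_ ?_)
  · rintro _ ⟨w, hw, rfl⟩
    exact htrace w hw
  · rintro _ ⟨_, ⟨w, hw, rfl⟩, x, hx, y, hy, rfl⟩
    exact hform w hw x hx y hy

lemma chainAlg_mono {L' : Set (Matrix n n A)} {X' : Set (n → A)} (hL : L ⊆ L') (hX : X ⊆ X') :
    chainAlg K J L X ≤ chainAlg K J L' X' := by
  have hword : wordAlg K J L ≤ wordAlg K J L' := Algebra.adjoin_mono (Set.image_mono hL)
  exact chainAlg_le (fun w hw => trace_mem_chainAlg (hword hw))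
    fun w hw x hx y hy => form_mem_chainAlg (hword hw) (hX hx) (hX hy)

variable {B : Type*} [CommRing B] [Algebra K B]

lemma map_wordAlg (φ : A →ₐ[K] B) :
    (wordAlg K J L).map φ.mapMatrix = wordAlg K (J.map φ) ((fun M => M.map φ) '' L) := by
  rw [wordAlg, wordAlg, AlgHom.map_adjoin, Set.image_image, Set.image_image]
  congr 2
  funext M
  exact map_mul φ.mapMatrix M J

lemma map_chainAlg (φ : A →ₐ[K] B) :
    (chainAlg K J L X).map φ =
      chainAlg K (J.map φ) ((fun M => M.map φ) '' L) ((fun x => φ ∘ x) '' X) := by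
  have hform (w : Matrix n n A) (x y : n → A) :
      φ (x ⬝ᵥ (J * w) *ᵥ y) = (φ ∘ x) ⬝ᵥ (J.map φ * w.map φ) *ᵥ (φ ∘ y) :=
    (map_dotProduct_mulVec (φ : A →+* B) (J * w) x y).trans
      (congrArg (fun M : Matrix n n B => (φ ∘ x) ⬝ᵥ M *ᵥ (φ ∘ y))
        (Matrix.map_mul (f := (φ : A →+* B))))
  have hword {w : Matrix n n A} (hw : w ∈ wordAlg K J L) :
      w.map φ ∈ wordAlg K (J.map φ) ((fun M => M.map φ) '' L) := by
    rw [← map_wordAlg]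
    exact ⟨w, hw, rfl⟩
  apply le_antisymm
  · rw [Subalgebra.map_le]
    refine chainAlg_le (fun w hw => ?_) fun w hw x hx y hy => ?_
    · rw [Subalgebra.mem_comap, AddMonoidHom.map_trace φ w]
      exact trace_mem_chainAlg (hword hw)
    · rw [Subalgebra.mem_comap, hform]
      exact form_mem_chainAlg (hword hw) ⟨x, hx, rfl⟩ ⟨y, hy, rfl⟩
  · refine chainAlg_le (fun w hw => ?_) fun w hw x hx y hy => ?_
    · rw [← map_wordAlg] at hw
      obtain ⟨w, hw, rfl⟩ := hw
      exact ⟨_, trace_mem_chainAlg hw, AddMonoidHom.map_trace φ w⟩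
    · rw [← map_wordAlg] at hw
      obtain ⟨w, hw, rfl⟩ := hw
      obtain ⟨x, hx, rfl⟩ := hx
      obtain ⟨y, hy, rfl⟩ := hy
      exact ⟨_, form_mem_chainAlg hw hx hy, hform w x y⟩

lemma exists_mem_wordAlg_transpose_eq (hJ : Jᵀ = J ∨ Jᵀ = -J) (hL : ∀ M ∈ L, Mᵀ = M ∨ Mᵀ = -M)
    {w : Matrix n n A} (hw : w ∈ wordAlg K J L) : ∃ w' ∈ wordAlg K J L, (J * w)ᵀ = J * w' := by
  induction hw using Algebra.adjoin_induction with
  | mem w hw =>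
    have hmem := Algebra.subset_adjoin (R := K) hw
    obtain ⟨M, hM, rfl⟩ := hw
    rcases hJ with hJ | hJ <;> rcases hL M hM with hM' | hM' <;>
      simp only [transpose_mul, hJ, hM', Matrix.mul_assoc, neg_mul, mul_neg, neg_neg]
    exacts [⟨_, hmem, rfl⟩, ⟨_, neg_mem hmem, (mul_neg _ _).symm⟩, ⟨_, hmem, rfl⟩,
      ⟨_, neg_mem hmem, (mul_neg _ _).symm⟩]
  | algebraMap r =>
    have hmem := (wordAlg K J L).algebraMap_mem r
    have hcomm : (J * algebraMap K _ r)ᵀ = Jᵀ * algebraMap K _ r := by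
      rw [transpose_mul, algebraMap_eq_diagonal, diagonal_transpose, ← algebraMap_eq_diagonal,
        Algebra.commutes]
    rcases hJ with hJ | hJ <;> rw [hcomm, hJ]
    exacts [⟨_, hmem, rfl⟩, ⟨_, neg_mem hmem, by rw [neg_mul, mul_neg]⟩]
  | add x y _ _ hx hy =>
    obtain ⟨x', hx', hx⟩ := hx
    obtain ⟨y', hy', hy⟩ := hy
    exact ⟨_, add_mem hx' hy', by rw [mul_add, transpose_add, hx, hy, mul_add]⟩
  | mul x y _ _ hx hy =>
    obtain ⟨x', hx', hx⟩ := hx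
    obtain ⟨y', hy', hy⟩ := hy
    have hxy : (J * (x * y))ᵀ = yᵀ * J * x' := by
      rw [← Matrix.mul_assoc, transpose_mul, hx, Matrix.mul_assoc]
    rw [transpose_mul] at hy
    rcases hJ with hJ | hJ <;> rw [hJ] at hy
    · exact ⟨_, mul_mem hy' hx', by rw [hxy, hy, Matrix.mul_assoc]⟩
    · refine ⟨_, neg_mem (mul_mem hy' hx'), ?_⟩
      rw [hxy, mul_neg, ← Matrix.mul_assoc, ← hy, mul_neg, neg_mul, neg_neg]

/-- The algebra endomorphism `φ` fixes the matrix `J`, the letters `L` and the vectors `X`. -/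
structure FixesLetters (J : Matrix n n A) (L : Set (Matrix n n A)) (X : Set (n → A))
    (φ : A →ₐ[K] A) : Prop where
  map_form : J.map φ = J
  map_letter : ∀ M ∈ L, M.map φ = M
  comp_vec : ∀ x ∈ X, φ ∘ x = x

lemma FixesLetters.map_word {φ : A →ₐ[K] A} (h : FixesLetters J L X φ) {w : Matrix n n A}
    (hw : w ∈ wordAlg K J L) : w.map φ = w := by
  have hle : wordAlg K J L ≤ AlgHom.equalizer φ.mapMatrix (AlgHom.id K _) := by
    rw [wordAlg, Algebra.adjoin_le_iff]
    rintro _ ⟨M, hM, rfl⟩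
    refine (map_mul φ.mapMatrix M J).trans ?_
    rw [AlgHom.mapMatrix_apply, AlgHom.mapMatrix_apply, h.map_letter M hM, h.map_form]
    rfl
  exact hle hw

lemma FixesLetters.fixesForms {φ : A →ₐ[K] A} (h : FixesLetters J L X φ) :
    FixesForms ((wordAlg K J L).toSubmodule.map (LinearMap.mulLeft K J)) X (chainAlg K J L X)
      φ := by
  have hform : ∀ M ∈ (wordAlg K J L).toSubmodule.map (LinearMap.mulLeft K J), M.map φ = M := by
    rintro _ ⟨w, hw, rfl⟩
    refine (map_mul φ.mapMatrix J w).trans ?_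
    rw [AlgHom.mapMatrix_apply, AlgHom.mapMatrix_apply, h.map_form, h.map_word hw]
    rfl
  refine ⟨hform, h.comp_vec, fun d hd => ?_⟩
  have hle : chainAlg K J L X ≤ AlgHom.equalizer φ (AlgHom.id K A) := by
    refine chainAlg_le (fun w hw => ?_) fun w hw x hx y hy => ?_
    · exact (AddMonoidHom.map_trace φ w).trans (congrArg trace (h.map_word hw))
    · refine (map_dotProduct_mulVec (φ : A →+* A) (J * w) x y).trans ?_
      exact congr_arg₂ _ (h.comp_vec x hx) (congr_arg₂ _ (hform _ ⟨w, hw, rfl⟩) (h.comp_vec y hy))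
  exact hle hd

lemma isPolarClosed_chainAlg (hJ : Jᵀ = J ∨ Jᵀ = -J) (hL : ∀ M ∈ L, Mᵀ = M ∨ Mᵀ = -M)
    {u v : n → A} (huv : symProd u v ∈ L) :
    IsPolarClosed ((wordAlg K J L).toSubmodule.map (LinearMap.mulLeft K J)) X (chainAlg K J L X)
      u v where
  transpose_mem := by
    rintro _ ⟨w, hw, rfl⟩
    obtain ⟨w', hw', h⟩ := exists_mem_wordAlg_transpose_eq hJ hL hw
    exact ⟨w', hw', h.symm⟩
  mul_symProd_mul_mem := by
    rintro _ ⟨w, hw, rfl⟩ _ ⟨w', hw', rfl⟩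
    refine ⟨w * (symProd u v * J) * w', 
      (wordAlg K J L).mul_mem ((wordAlg K J L).mul_mem hw (mul_mem_wordAlg huv)) hw', ?_⟩
    simp only [LinearMap.mulLeft_apply, Matrix.mul_assoc]
  trace_mem := by
    rintro _ ⟨w, hw, rfl⟩
    rw [LinearMap.mulLeft_apply, Matrix.mul_assoc, trace_mul_comm, Matrix.mul_assoc]
    exact trace_mem_chainAlg (mul_mem hw (mul_mem_wordAlg huv))
  form_mem := Set.subset_union_right.trans Algebra.subset_adjoin

theorem mem_chainAlg_of_mem_chainAlg_union [Infinite K] (h2 : (2 : K) ≠ 0)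
    (hJ : Jᵀ = J ∨ Jᵀ = -J) (hL : ∀ M ∈ L, Mᵀ = M ∨ Mᵀ = -M) {u v : n → A}
    (huv : symProd u v ∈ L) {T : Kˣ → A →ₐ[K] A} (hT : ∀ t, FixesLetters J L X (T t))
    (hTu : ∀ t : Kˣ, T t ∘ u = (t : K) • u) (hTv : ∀ t : Kˣ, T t ∘ v = ((t⁻¹ : Kˣ) : K) • v)
    {sg : A →ₐ[K] A} (hsg : FixesLetters J L X sg) (hsu : sg ∘ u = v) (hsv : sg ∘ v = u) {f : A}
    (hf : f ∈ chainAlg K J L (X ∪ {u, v})) (hTf : ∀ t, T t f = f) (hsf : sg f = f) :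
    f ∈ chainAlg K J L X := by
  refine (isPolarClosed_chainAlg hJ hL huv).mem_of_forall_torus_eq_of_swap_eq h2
    (fun t => (hT t).fixesForms) hTu hTv hsg.fixesForms hsu hsv ?_ hTf hsf
  refine chainAlg_le (fun w hw => ?_) (fun w hw x hx y hy => ?_) hf
  · exact Algebra.subset_adjoin (.inl (trace_mem_chainAlg hw))
  · exact Algebra.subset_adjoin (.inr ⟨_, ⟨w, hw, rfl⟩, x, hx, y, hy, rfl⟩)

end Chain

/-! ### Configurations of matrices and vectors -/

section PolynomialFunctions

variable {K V V' : Type*} [Field K]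

variable (K) in
/-- Composition with `g`, as a homomorphism of algebras of functions. -/
def pullback (g : V' → V) : (V → K) →ₐ[K] (V' → K) where
  toFun f := f ∘ g
  map_one' := rfl
  map_mul' _ _ := rfl
  map_zero' := rfl
  map_add' _ _ := rfl
  commutes' _ := rfl

variable [AddCommGroup V] [Module K V] [AddCommGroup V'] [Module K V']

variable (K V) in
/-- The algebra of polynomial functions on `V`. -/
def polyFun : Subalgebra K (V → K) :=
  Algebra.adjoin K (Set.range fun φ : V →ₗ[K] K => (φ : V → K))

lemma linearMap_mem_polyFun (φ : V →ₗ[K] K) : (φ : V → K) ∈ polyFun K V :=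
  Algebra.subset_adjoin ⟨φ, rfl⟩

lemma comp_mem_polyFun {g : V' → V} (hg : ∀ φ : V →ₗ[K] K, φ ∘ g ∈ polyFun K V') {f : V → K}
    (hf : f ∈ polyFun K V) : f ∘ g ∈ polyFun K V' := by
  have hle : polyFun K V ≤ (polyFun K V').comap (pullback K g) := by
    refine Algebra.adjoin_le ?_
    rintro _ ⟨φ, rfl⟩
    exact hg φ
  exact hle hf

lemma comp_linearMap_mem_polyFun (g : V' →ₗ[K] V) {f : V → K} (hf : f ∈ polyFun K V) :
    f ∘ g ∈ polyFun K V' :=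
  comp_mem_polyFun (fun φ => linearMap_mem_polyFun (φ ∘ₗ g)) hf

lemma bilinear_mem_polyFun {W : Type*} [AddCommGroup W] [Module K W] [FiniteDimensional K W]
    (b : W →ₗ[K] W →ₗ[K] K) (g h : V →ₗ[K] W) : (fun v => b (g v) (h v)) ∈ polyFun K V := by
  let e := Module.finBasis K W
  have hb : (fun v => b (g v) (h v)) =
      ∑ i, ((e.coord i ∘ₗ g : V →ₗ[K] K) : V → K) * ((b (e i) ∘ₗ h : V →ₗ[K] K) : V → K) := by
    funext v
    conv_lhs => rw [← e.sum_repr (g v)]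
    simp only [map_sum, map_smul, LinearMap.sum_apply, LinearMap.smul_apply, smul_eq_mul,
      Finset.sum_apply, Pi.mul_apply, LinearMap.comp_apply, Module.Basis.coord_apply]
  rw [hb]
  exact sum_mem fun i _ => mul_mem (linearMap_mem_polyFun _) (linearMap_mem_polyFun _)

end PolynomialFunctions

section Configurations

variable (K n : Type) [Field K]

/-- The space of symmetric matrices. -/
def symmMatrices : Submodule K (Matrix n n K) where
  carrier := {M | Mᵀ = M}
  zero_mem' := transpose_zero
  add_mem' hM hN := (transpose_add _ _).trans (congr_arg₂ _ hM hN)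
  smul_mem' c _ hM := (transpose_smul c _).trans (congrArg _ hM)

/-- The space of skew-symmetric matrices. -/
def skewMatrices : Submodule K (Matrix n n K) where
  carrier := {M | Mᵀ = -M}
  zero_mem' := transpose_zero.trans neg_zero.symm
  add_mem' hM hN := ((transpose_add _ _).trans (congr_arg₂ _ hM hN)).trans (neg_add _ _).symm
  smul_mem' c _ hM := ((transpose_smul c _).trans (congrArg _ hM)).trans (smul_neg _ _)

/-- Configurations of symmetric matrices indexed by `κ`, skew-symmetric matrices indexed by `τ` and
vectors indexed by `ι`. -/
abbrev Config (κ τ ι : Type) : Type :=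
  (κ → symmMatrices K n) × (τ → skewMatrices K n) × (ι → n → K)

variable {K n}

lemma mem_symmMatrices {M : Matrix n n K} : M ∈ symmMatrices K n ↔ Mᵀ = M := Iff.rfl

lemma mem_skewMatrices {M : Matrix n n K} : M ∈ skewMatrices K n ↔ Mᵀ = -M := Iff.rfl

lemma symProd_mem_symmMatrices (u v : n → K) : symProd u v ∈ symmMatrices K n := by
  rw [mem_symmMatrices, symProd, transpose_add, transpose_vecMulVec, transpose_vecMulVec, add_comm]

/-- The map `(u, v) ↦ u vᵀ + v uᵀ` as a bilinear map. -/
def symProdₗ : (n → K) →ₗ[K] (n → K) →ₗ[K] symmMatrices K n :=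
  LinearMap.mk₂ K (fun u v => ⟨symProd u v, symProd_mem_symmMatrices u v⟩)
    (fun u u' v => Subtype.ext (by ext i j; simp [symProd, vecMulVec_apply]; ring))
    (fun c u v => Subtype.ext (by simp [symProd]))
    (fun u v v' => Subtype.ext (by ext i j; simp [symProd, vecMulVec_apply]; ring))
    (fun c u v => Subtype.ext (by simp [symProd]))

lemma symProdₗ_comm (u v : n → K) : symProdₗ u v = symProdₗ v u :=
  Subtype.ext (symProd_comm u v)

variable {κ τ ι : Type} {V : Type*}

/-- The family of matrices `M v` as a matrix with entries in the algebra of functions. -/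
def funMatrix (M : V → Matrix n n K) : Matrix n n (V → K) := of fun i j v => M v i j

/-- The matrices of the configuration `p v`, as matrices over the algebra of functions of `v`. -/
def letters (p : V → Config K n κ τ ι) : Set (Matrix n n (V → K)) :=
  (Set.range fun k => funMatrix fun v => (p v).1 k) ∪
    Set.range fun c => funMatrix fun v => (p v).2.1 c

/-- The vectors of the configuration `p v`, as vectors over the algebra of functions of `v`. -/
def vectors (p : V → Config K n κ τ ι) : Set (n → V → K) :=
  Set.range fun a i v => (p v).2.2 a i

lemma fixesLetters_pullback {J : Matrix n n K} {p : V → Config K n κ τ ι} {g : V → V}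
    (hp : ∀ v, p (g v) = p v) :
    FixesLetters (J.map (algebraMap K _)) (letters p) (vectors p) (pullback K g) where
  map_form := rfl
  map_letter := by
    rintro _ (⟨j, rfl⟩ | ⟨c, rfl⟩)
    · exact congrArg funMatrix (funext fun v => congrArg (fun q => (q.1 j : Matrix n n K)) (hp v))
    · exact congrArg funMatrix (funext fun v => congrArg (fun q => (q.2.1 c : Matrix n n K)) (hp v))
  comp_vec := by
    rintro _ ⟨a, rfl⟩
    exact funext fun i => funext fun v => congrArg (fun q => q.2.2 a i) (hp v)

lemma transpose_eq_or_of_mem_letters {p : V → Config K n κ τ ι} {M : Matrix n n (V → K)}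
    (hM : M ∈ letters p) : Mᵀ = M ∨ Mᵀ = -M := by
  have h (N : V → Matrix n n K) : (funMatrix N)ᵀ = funMatrix fun v => (N v)ᵀ := rfl
  obtain ⟨k, rfl⟩ | ⟨c, rfl⟩ := hM
  · exact .inl ((h _).trans (congrArg funMatrix (funext fun v => ((p v).1 k).2)))
  · exact .inr ((h _).trans (congrArg funMatrix (funext fun v => ((p v).2.1 c).2)))

variable [Fintype n]

lemma conj_mem_symmMatrices (g : Matrix n n K) {M : Matrix n n K} (hM : M ∈ symmMatrices K n) :
    g * M * gᵀ ∈ symmMatrices K n := by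
  rw [mem_symmMatrices] at hM ⊢
  simp only [transpose_mul, transpose_transpose, hM, Matrix.mul_assoc]

lemma conj_mem_skewMatrices (g : Matrix n n K) {M : Matrix n n K} (hM : M ∈ skewMatrices K n) :
    g * M * gᵀ ∈ skewMatrices K n := by
  rw [mem_skewMatrices] at hM ⊢
  simp only [transpose_mul, transpose_transpose, hM, Matrix.mul_assoc, neg_mul, mul_neg]

lemma symProd_mulVec (g : Matrix n n K) (u v : n → K) :
    symProd (g *ᵥ u) (g *ᵥ v) = g * symProd u v * gᵀ := by
  simp only [symProd, mul_add, add_mul, mul_vecMulVec, vecMulVec_mul, vecMul_transpose]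

/-- The action of a matrix `g` on configurations; it is `M ↦ g M gᵀ` on matrices. -/
def Config.act (g : Matrix n n K) (q : Config K n κ τ ι) : Config K n κ τ ι :=
  (fun k => ⟨g * q.1 k * gᵀ, conj_mem_symmMatrices g (q.1 k).2⟩,
    fun c => ⟨g * q.2.1 c * gᵀ, conj_mem_skewMatrices g (q.2.1 c).2⟩, fun a => g *ᵥ q.2.2 a)

/-- Invariance under the isometry group of the bilinear form `J`. -/
def IsInvariant (J : Matrix n n K) (f : Config K n κ τ ι → K) : Prop :=
  ∀ g : Matrix n n K, gᵀ * J * g = J → ∀ q, f (q.act g) = f q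

variable [DecidableEq n]

/-- The algebra of functions of a configuration which is generated by the obvious invariants of the
isometry group of `J`. -/
def chain (J : Matrix n n K) (κ τ ι : Type) : Subalgebra K (Config K n κ τ ι → K) :=
  chainAlg K (J.map (algebraMap K _)) (letters id) (vectors id)

lemma map_pullback_chain (J : Matrix n n K) (p : V → Config K n κ τ ι) :
    (chain J κ τ ι).map (pullback K p) =
      chainAlg K (J.map (algebraMap K _)) (letters p) (vectors p) := by
  rw [chain, map_chainAlg, letters, Set.image_union, ← Set.range_comp, ← Set.range_comp, vectors,
    ← Set.range_comp]
  rfl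

end Configurations

section Polarization

variable {K n κ τ ι : Type} [Field K]

/-- Adds two vectors to a configuration. -/
def adjoinPair (q : Config K n κ τ ι) (u v : n → K) : Config K n κ τ (ι ⊕ Fin 2) :=
  (q.1, q.2.1, Sum.elim q.2.2 ![u, v])

/-- Forgets the vectors added by `adjoinPair`. -/
def forgetPair (q : Config K n κ τ (ι ⊕ Fin 2)) : Config K n κ τ ι :=
  (q.1, q.2.1, fun a => q.2.2 (.inl a))

/-- Replaces the symmetric matrix with index `k` by `u vᵀ + v uᵀ`, where `u` and `v` are the two
additional vectors. -/
def polarize [DecidableEq κ] (k : κ) (q : Config K n κ τ (ι ⊕ Fin 2)) :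
    Config K n κ τ (ι ⊕ Fin 2) :=
  (Function.update q.1 k (symProdₗ (q.2.2 (.inr 0)) (q.2.2 (.inr 1))), q.2)

/-- Rescales the two additional vectors by `t` and `t⁻¹`. -/
def scalePair (t : Kˣ) (q : Config K n κ τ (ι ⊕ Fin 2)) : Config K n κ τ (ι ⊕ Fin 2) :=
  adjoinPair (forgetPair q) ((t : K) • q.2.2 (.inr 0)) (((t⁻¹ : Kˣ) : K) • q.2.2 (.inr 1))

/-- Exchanges the two additional vectors. -/
def swapPair (q : Config K n κ τ (ι ⊕ Fin 2)) : Config K n κ τ (ι ⊕ Fin 2) :=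
  adjoinPair (forgetPair q) (q.2.2 (.inr 1)) (q.2.2 (.inr 0))

variable [DecidableEq κ] {f : Config K n κ τ ι → K} {k : κ}

lemma forgetPair_polarize_scalePair (t : Kˣ) (q : Config K n κ τ (ι ⊕ Fin 2)) :
    forgetPair (polarize k (scalePair t q)) = forgetPair (polarize k q) := by
  refine Prod.ext (congrArg (Function.update q.1 k) ?_) rfl
  simp [scalePair, adjoinPair, smul_smul]

lemma forgetPair_polarize_swapPair (q : Config K n κ τ (ι ⊕ Fin 2)) :
    forgetPair (polarize k (swapPair q)) = forgetPair (polarize k q) :=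
  Prod.ext (congrArg (Function.update q.1 k) (symProdₗ_comm _ _)) rfl

lemma forgetPair_polarize_polarize (q : Config K n κ τ (ι ⊕ Fin 2)) :
    forgetPair (polarize k (polarize k q)) = forgetPair (polarize k q) :=
  Prod.ext (Function.update_idem _ _ _) rfl

lemma dependsOn_comp_polarize {s : Finset κ}
    (hf : ∀ x, DependsOn (fun S => f (S, x)) (insert k s : Finset κ)) (x) :
    DependsOn (fun S => f (forgetPair (polarize k (S, x)))) s := by
  intro S S' h
  refine hf _ fun j hj => ?_
  obtain rfl | hjk := eq_or_ne j k
  · simp only [polarize, Function.update_self]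
  · simp only [polarize, Function.update_of_ne hjk]
    exact h j ((Finset.mem_insert.mp hj).resolve_left hjk)

lemma comp_polarize_mem_polyFun [Finite n] (hf : f ∈ polyFun K (Config K n κ τ ι)) :
    (fun q => f (forgetPair (polarize k q))) ∈ polyFun K (Config K n κ τ (ι ⊕ Fin 2)) := by
  refine comp_mem_polyFun (g := fun q => forgetPair (polarize k q)) (fun φ => ?_) hf
  let vec (b : Fin 2) : Config K n κ τ (ι ⊕ Fin 2) →ₗ[K] n → K :=
    LinearMap.proj (Sum.inr b) ∘ₗ LinearMap.snd K _ _ ∘ₗ LinearMap.snd K _ _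
  let rest : Config K n κ τ (ι ⊕ Fin 2) →ₗ[K] Config K n κ τ ι :=
    { toFun := fun q => (Function.update q.1 k 0, q.2.1, fun a => q.2.2 (.inl a))
      map_add' := fun q q' => by
        simp [← Function.update_add, funext_iff]
      map_smul' := fun c q => by
        simp [← Function.update_smul, funext_iff] }
  let φk : symmMatrices K n →ₗ[K] K :=
    φ ∘ₗ LinearMap.inl K _ _ ∘ₗ LinearMap.single K (fun _ : κ => symmMatrices K n) k
  have hsplit : φ ∘ (fun q => forgetPair (polarize k q)) =
      (φ ∘ₗ rest : _ →ₗ[K] K) + fun q => symProdₗ.compr₂ φk (vec 0 q) (vec 1 q) := by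
    funext q
    simp only [Function.comp_apply, Pi.add_apply, LinearMap.comp_apply, LinearMap.compr₂_apply, φk]
    rw [← map_add]
    congr 1
    refine Prod.ext (funext fun j => ?_) ?_
    · obtain rfl | hj := eq_or_ne j k <;> simp [forgetPair, polarize, rest, vec, *]
    · simp [forgetPair, polarize, rest]
  rw [hsplit]
  exact add_mem (linearMap_mem_polyFun _) (bilinear_mem_polyFun _ _ _)

variable [Fintype n]

lemma IsInvariant.comp_polarize {J : Matrix n n K} (hf : IsInvariant J f) :
    IsInvariant J fun q => f (forgetPair (polarize k q)) := by
  intro g hg q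
  have hact : forgetPair (polarize k (q.act g)) = (forgetPair (polarize k q)).act g := by
    refine Prod.ext (funext fun j => Subtype.ext ?_) rfl
    obtain rfl | hj := eq_or_ne j k
    · simp only [forgetPair, polarize, Config.act, Function.update_self]
      exact symProd_mulVec _ _ _
    · simp only [forgetPair, polarize, Config.act, Function.update_of_ne hj]
  exact (congrArg f hact).trans (hf g hg _)

variable [DecidableEq n]

theorem exists_mem_chain_eq_polarize [Infinite K] (h2 : (2 : K) ≠ 0) {J : Matrix n n K}
    (hJ : Jᵀ = J ∨ Jᵀ = -J)
    (hf : (fun q => f (forgetPair (polarize k q))) ∈ chain J κ τ (ι ⊕ Fin 2)) :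
    ∃ h ∈ chain J κ τ ι, ∀ q, f (forgetPair (polarize k q)) = h (forgetPair (polarize k q)) := by
  set p : Config K n κ τ (ι ⊕ Fin 2) → Config K n κ τ ι := fun q => forgetPair (polarize k q)
  let x (b : Fin 2) : n → Config K n κ τ (ι ⊕ Fin 2) → K := fun i q => q.2.2 (.inr b) i
  have hvec : vectors (polarize k) ⊆ vectors p ∪ {x 0, x 1} := by
    rintro _ ⟨a | b, rfl⟩
    · exact .inl ⟨a, rfl⟩
    · fin_cases b
      exacts [.inr (.inl rfl), .inr (.inr rfl)]
  have hmem : f ∘ p ∈ chainAlg K (J.map (algebraMap K _)) (letters p) (vectors p ∪ {x 0, x 1}) := by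
    have hmap : f ∘ p ∈ (chain J κ τ (ι ⊕ Fin 2)).map (pullback K (polarize k)) :=
      ⟨_, hf, funext fun q => congrArg f (forgetPair_polarize_polarize q)⟩
    rw [map_pullback_chain] at hmap
    exact chainAlg_mono subset_rfl hvec hmap
  have hsym : symProd (x 0) (x 1) ∈ letters p := by
    refine .inl ⟨k, ?_⟩
    ext i j q
    simp [p, x, funMatrix, forgetPair, polarize, symProdₗ, symProd, vecMulVec_apply]
  have hJ' : (J.map (algebraMap K (Config K n κ τ (ι ⊕ Fin 2) → K)))ᵀ = J.map (algebraMap K _) ∨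
      (J.map (algebraMap K (Config K n κ τ (ι ⊕ Fin 2) → K)))ᵀ = -J.map (algebraMap K _) := by
    rw [← transpose_map]
    refine hJ.imp (congrArg (Matrix.map · _)) fun hJ => ?_
    rw [hJ, Matrix.map_neg _ (map_neg _)]
  have hchain := mem_chainAlg_of_mem_chainAlg_union h2 hJ'
    (fun M hM => transpose_eq_or_of_mem_letters hM) hsym
    (T := fun t => pullback K (scalePair t))
    (fun t => fixesLetters_pullback (forgetPair_polarize_scalePair t)) (fun t => rfl)
    (fun t => rfl) (sg := pullback K swapPair) (fixesLetters_pullback forgetPair_polarize_swapPair)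
    rfl rfl hmem (fun t => funext fun q => congrArg f (forgetPair_polarize_scalePair t q))
    (funext fun q => congrArg f (forgetPair_polarize_swapPair q))
  rw [← map_pullback_chain] at hchain
  obtain ⟨h, hh, hfh⟩ := hchain
  exact ⟨h, hh, fun q => (congrFun hfh q).symm⟩

end Polarization

/-! ### Symmetric `2 × 2` matrices -/

section Symplectic

variable {K : Type} [Field K] {κ ι : Type}

/-- Evaluation of polynomials in the coordinates of a family of vectors. -/
noncomputable def coordEval (K : Type) [Field K] {V ι n : Type} (x : V → ι → n → K) :
    MvPolynomial (ι × n) K →ₐ[K] (V → K) :=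
  aeval fun s v => x v s.1 s.2

lemma coordEval_apply {V n : Type} (x : V → ι → n → K) (p : MvPolynomial (ι × n) K) (v : V) :
    coordEval K x p v = eval (fun s => x v s.1 s.2) p := by
  have hcomp : (Pi.evalAlgHom K (fun _ : V => K) v).comp (coordEval K x) =
      aeval fun s : ι × n => x v s.1 s.2 := by
    ext s
    simp [coordEval]
  exact DFunLike.congr_fun hcomp p

lemma exists_coordEval_eq {n : Type} [Finite ι] [Finite n] {f : (ι → n → K) → K}
    (hf : f ∈ polyFun K (ι → n → K)) : ∃ p, coordEval K id p = f := by
  classical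
  have := Fintype.ofFinite ι
  have := Fintype.ofFinite n
  suffices hle : polyFun K (ι → n → K) ≤ (coordEval K id).range from hle hf
  refine Algebra.adjoin_le ?_
  rintro _ ⟨φ, rfl⟩
  refine ⟨∑ i, ∑ j, C (φ (Pi.single i (Pi.single j 1))) * X (i, j), funext fun x => ?_⟩
  have hx : x = ∑ i, ∑ j, x i j • Pi.single i (Pi.single j (1 : K)) := by
    ext i j
    simp [Finset.sum_apply, Pi.single_apply, ite_apply]
  refine (coordEval_apply _ _ _).trans (.trans ?_ (congrArg φ hx.symm))
  simp [mul_comm]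

/-- The matrix of the symplectic form on the plane. -/
def symplForm (R : Type*) [CommRing R] : Matrix (Fin 2) (Fin 2) R := !![0, 1; -1, 0]

lemma transpose_mul_symplForm_mul (g : Matrix (Fin 2) (Fin 2) K) :
    gᵀ * symplForm K * g = g.det • symplForm K := by
  ext i j
  fin_cases i <;> fin_cases j <;>
    simp [symplForm, mul_apply, det_fin_two] <;> ring

lemma bracketAlg_map_coordEval_le :
    (bracketAlg K ι).map (coordEval K fun q : Config K (Fin 2) κ Empty ι => q.2.2) ≤
      chain (symplForm K) κ Empty ι := by
  rw [bracketAlg, AlgHom.map_adjoin]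
  refine Algebra.adjoin_le ?_
  rintro _ ⟨_, ⟨⟨i, j⟩, rfl⟩, rfl⟩
  refine Set.mem_of_eq_of_mem ?_ (form_mem_chainAlg (one_mem _) ⟨i, rfl⟩ ⟨j, rfl⟩)
  ext q
  simp [coordEval, bracket, symplForm, mulVec, dotProduct, Fin.sum_univ_two]
  ring

lemma mem_chain_symplForm_of_dependsOn_empty [Infinite K] [Finite ι]
    {f : Config K (Fin 2) κ Empty ι → K} (hf : f ∈ polyFun K (Config K (Fin 2) κ Empty ι))
    (hinv : IsInvariant (symplForm K) f) (hdep : ∀ x, DependsOn (fun S => f (S, x)) (∅ : Set κ)) :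
    f ∈ chain (symplForm K) κ Empty ι := by
  obtain ⟨p, hp⟩ := exists_coordEval_eq <| comp_linearMap_mem_polyFun
    (LinearMap.inr K (κ → symmMatrices K (Fin 2)) _ ∘ₗ
      LinearMap.inr K (Empty → skewMatrices K (Fin 2)) (ι → Fin 2 → K)) hf
  have hfp (q : Config K (Fin 2) κ Empty ι) : f q = eval (fun s => q.2.2 s.1 s.2) p := by
    have hq : f q = f (0, 0, q.2.2) := by
      rw [← Subsingleton.elim q.2.1 0]
      exact hdep q.2 fun _ h => h.elim
    exact hq.trans ((congrFun hp q.2.2).symm.trans (coordEval_apply _ _ _))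
  have hmem : p ∈ bracketAlg K ι := by
    refine mem_bracketAlg_of_forall_linSubst_eq fun g hg => MvPolynomial.funext fun x => ?_
    have hgf := hinv g (by rw [transpose_mul_symplForm_mul, hg, one_smul])
      (0, 0, fun i a => x (i, a))
    rw [hfp, hfp] at hgf
    rw [eval_linSubst]
    exact hgf
  refine bracketAlg_map_coordEval_le ⟨p, hmem, funext fun q => ?_⟩
  exact (coordEval_apply _ _ _).trans (hfp q).symm

-- A binary quadratic form over an algebraically closed field is a product of linear forms.
lemma exists_symProdₗ_eq [IsAlgClosed K] (h2 : (2 : K) ≠ 0) (S : symmMatrices K (Fin 2)) :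
    ∃ u v, symProdₗ u v = S := by
  obtain ⟨M, hM⟩ := S
  have hsymm : M 1 0 = M 0 1 := congrFun (congrFun (mem_symmMatrices.mp hM) 0) 1
  suffices h : ∃ u v : Fin 2 → K,
      u 0 * v 0 = M 0 0 / 2 ∧ u 1 * v 1 = M 1 1 / 2 ∧ u 0 * v 1 + u 1 * v 0 = M 0 1 by
    obtain ⟨u, v, h0, h1, h01⟩ := h
    refine ⟨u, v, Subtype.ext (Matrix.ext fun i j => ?_)⟩
    fin_cases i <;> fin_cases j <;>
      simp only [symProdₗ, LinearMap.mk₂_apply, symProd, Matrix.add_apply, vecMulVec_apply,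
        Fin.zero_eta, Fin.mk_one, hsymm]
    · linear_combination 2 * h0 + (M 0 0) * div_self h2
    · linear_combination h01
    · linear_combination h01
    · linear_combination 2 * h1 + (M 1 1) * div_self h2
  obtain h0 | h0 := eq_or_ne (M 0 0) 0
  · exact ⟨![0, 1], ![M 0 1, M 1 1 / 2], by simp [h0]⟩
  · obtain ⟨s, hs⟩ := IsAlgClosed.exists_pow_nat_eq (M 0 1 ^ 2 - M 0 0 * M 1 1) two_pos
    obtain ⟨r, hr⟩ : ∃ r, r * M 0 0 = M 0 1 + s := ⟨_, div_mul_cancel₀ _ h0⟩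
    refine ⟨![1, r], ![M 0 0 / 2, M 0 1 - r * (M 0 0 / 2)], by simp, ?_, by simp⟩
    refine mul_left_cancel₀ h0 ?_
    simp only [cons_val]
    linear_combination (-r * M 0 0 / 2 + M 0 1 - (M 0 1 + s) / 2) * hr - hs / 2 -
      (M 0 1 ^ 2 + M 0 1 * s) * div_self h2

theorem mem_chain_symplForm [IsAlgClosed K] (h2 : (2 : K) ≠ 0) [Finite ι] (s : Finset κ)
    {f : Config K (Fin 2) κ Empty ι → K}
    (hf : f ∈ polyFun K (Config K (Fin 2) κ Empty ι)) (hinv : IsInvariant (symplForm K) f)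
    (hdep : ∀ x, DependsOn (fun S => f (S, x)) (s : Set κ)) :
    f ∈ chain (symplForm K) κ Empty ι := by
  classical
  have := IsAlgClosed.instInfinite (K := K)
  induction s using Finset.induction_on generalizing ι with
  | empty => exact mem_chain_symplForm_of_dependsOn_empty hf hinv (by simpa using hdep)
  | insert k s _ ih =>
    obtain ⟨h, hh, hfh⟩ := exists_mem_chain_eq_polarize h2
      (.inr (by ext i j; fin_cases i <;> fin_cases j <;> simp [symplForm]))
      (ih (comp_polarize_mem_polyFun hf) hinv.comp_polarize (dependsOn_comp_polarize hdep))
    suffices f = h from this ▸ hh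
    funext q
    obtain ⟨u, v, huv⟩ := exists_symProdₗ_eq h2 (q.1 k)
    have hq : forgetPair (polarize k (adjoinPair q u v)) = q := by
      simp [forgetPair, polarize, adjoinPair, huv]
    rw [← hq, hfh]

end Symplectic

/-! ### Vector invariants of the rotation group -/

section VectorAlgebra

variable {K A : Type*} [Field K] [CommRing A] [Algebra K A]

variable (K) in
/-- The algebra generated by the scalar products and the triple products of vectors of `Y`. -/
def vecAlg (Y : Set (Fin 3 → A)) : Subalgebra K A :=
  Algebra.adjoin K ({a | ∃ x ∈ Y, ∃ y ∈ Y, x ⬝ᵥ y = a} ∪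
    {a | ∃ x ∈ Y, ∃ y ∈ Y, ∃ z ∈ Y, x ⬝ᵥ y ⨯₃ z = a})

variable (K) in
/-- The module over `vecAlg K Y` spanned by the vectors of `Y` and their cross products. -/
def vecModule (Y : Set (Fin 3 → A)) : Submodule (vecAlg K Y) (Fin 3 → A) :=
  Submodule.span _ (Y ∪ {v | ∃ x ∈ Y, ∃ y ∈ Y, x ⨯₃ y = v})

variable {Y : Set (Fin 3 → A)} {x y z : Fin 3 → A}

lemma dotProduct_mem_vecAlg (hx : x ∈ Y) (hy : y ∈ Y) : x ⬝ᵥ y ∈ vecAlg K Y :=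
  Algebra.subset_adjoin (.inl ⟨x, hx, y, hy, rfl⟩)

lemma tripleProduct_mem_vecAlg (hx : x ∈ Y) (hy : y ∈ Y) (hz : z ∈ Y) :
    x ⬝ᵥ y ⨯₃ z ∈ vecAlg K Y :=
  Algebra.subset_adjoin (.inr ⟨x, hx, y, hy, z, hz, rfl⟩)

lemma mem_vecModule (hx : x ∈ Y) : x ∈ vecModule K Y :=
  Submodule.subset_span (.inl hx)

lemma cross_mem_vecModule (hx : x ∈ Y) (hy : y ∈ Y) : x ⨯₃ y ∈ vecModule K Y :=
  Submodule.subset_span (.inr ⟨x, hx, y, hy, rfl⟩)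

lemma smul_mem_vecModule {a : A} (ha : a ∈ vecAlg K Y) (hx : x ∈ vecModule K Y) :
    a • x ∈ vecModule K Y :=
  (vecModule K Y).smul_mem ⟨a, ha⟩ hx

lemma dotProduct_mem_and_cross_mem_of_mem (hx : x ∈ vecModule K Y) (hy : y ∈ Y) :
    x ⬝ᵥ y ∈ vecAlg K Y ∧ x ⨯₃ y ∈ vecModule K Y := by
  induction hx using Submodule.span_induction with
  | mem x hx =>
    obtain hx | ⟨u, hu, v, hv, rfl⟩ := hx
    · exact ⟨dotProduct_mem_vecAlg hx hy, cross_mem_vecModule hx hy⟩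
    · rw [dotProduct_comm, cross_cross_eq_smul_sub_smul]
      exact ⟨tripleProduct_mem_vecAlg hy hu hv,
        sub_mem (smul_mem_vecModule (dotProduct_mem_vecAlg hu hy) (mem_vecModule hv))
          (smul_mem_vecModule (dotProduct_mem_vecAlg hv hy) (mem_vecModule hu))⟩
  | zero => simp
  | add x x' _ _ hx hx' =>
    rw [add_dotProduct, map_add, LinearMap.add_apply]
    exact ⟨add_mem hx.1 hx'.1, add_mem hx.2 hx'.2⟩
  | smul a x _ hx =>
    change (a : A) • x ⬝ᵥ y ∈ _ ∧ ((a : A) • x) ⨯₃ y ∈ _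
    rw [smul_dotProduct, map_smul, LinearMap.smul_apply]
    exact ⟨mul_mem a.2 hx.1, smul_mem_vecModule a.2 hx.2⟩

lemma dotProduct_mem_and_cross_mem (hx : x ∈ vecModule K Y) (hy : y ∈ vecModule K Y) :
    x ⬝ᵥ y ∈ vecAlg K Y ∧ x ⨯₃ y ∈ vecModule K Y := by
  induction hy using Submodule.span_induction with
  | mem y hy =>
    obtain hy | ⟨u, hu, v, hv, rfl⟩ := hy
    · exact dotProduct_mem_and_cross_mem_of_mem hx hy
    · obtain ⟨hxu, hxu'⟩ := dotProduct_mem_and_cross_mem_of_mem hx hu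
      obtain ⟨hxv, -⟩ := dotProduct_mem_and_cross_mem_of_mem hx hv
      rw [triple_product_permutation, triple_product_permutation, dotProduct_comm,
        cross_cross_eq_smul_sub_smul', dotProduct_comm u]
      exact ⟨(dotProduct_mem_and_cross_mem_of_mem hxu' hv).1,
        sub_mem (smul_mem_vecModule hxv (mem_vecModule hu))
          (smul_mem_vecModule hxu (mem_vecModule hv))⟩
  | zero => simp
  | add y y' _ _ hy hy' =>
    rw [dotProduct_add, map_add]
    exact ⟨add_mem hy.1 hy'.1, add_mem hy.2 hy'.2⟩
  | smul a y _ hy =>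
    change x ⬝ᵥ (a : A) • y ∈ _ ∧ x ⨯₃ ((a : A) • y) ∈ _
    rw [dotProduct_smul, map_smul]
    exact ⟨mul_mem a.2 hy.1, smul_mem_vecModule a.2 hy.2⟩

end VectorAlgebra

section Spin

variable {R : Type*} [CommRing R]

/-- The symmetric matrix attached to a vector: `pauli i y * symplForm R` is the combination of Pauli
matrices with coefficients `y`, up to a change of basis. Here `i` is a square root of `-1`. -/
def pauli (i : R) (y : Fin 3 → R) : Matrix (Fin 2) (Fin 2) R :=
  !![y 0 - i * y 1, -y 2; -y 2, -(y 0 + i * y 1)]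

lemma add_pauli_mul_add_pauli {i : R} (hi : i * i = -1) (a b : R) (x y : Fin 3 → R) :
    (a • 1 + pauli i x * symplForm R) * (b • 1 + pauli i y * symplForm R) =
      (a * b + x ⬝ᵥ y) • 1 + pauli i (a • y + b • x + i • x ⨯₃ y) * symplForm R := by
  ext j k
  fin_cases j <;> fin_cases k <;>
    simp [pauli, symplForm, mul_apply, cross_apply, dotProduct, Fin.sum_univ_two,
      Fin.sum_univ_three] <;> grind

/-- The norm of the quaternion with coordinates `q`. -/
def quatNorm (q : Fin 4 → R) : R := q 0 ^ 2 + q 1 ^ 2 + q 2 ^ 2 + q 3 ^ 2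

/-- The Euler–Rodrigues matrix of a quaternion. -/
def rotMatrix (q : Fin 4 → R) : Matrix (Fin 3) (Fin 3) R :=
  !![q 0 ^ 2 + q 1 ^ 2 - q 2 ^ 2 - q 3 ^ 2, 2 * q 1 * q 2 + 2 * q 0 * q 3,
      2 * q 1 * q 3 - 2 * q 0 * q 2;
    2 * q 1 * q 2 - 2 * q 0 * q 3, q 0 ^ 2 - q 1 ^ 2 + q 2 ^ 2 - q 3 ^ 2,
      2 * q 2 * q 3 + 2 * q 0 * q 1;
    2 * q 1 * q 3 + 2 * q 0 * q 2, 2 * q 2 * q 3 - 2 * q 0 * q 1,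
      q 0 ^ 2 - q 1 ^ 2 - q 2 ^ 2 + q 3 ^ 2]

/-- The action of a quaternion on spinors. -/
def spinMatrix (i : R) (q : Fin 4 → R) : Matrix (Fin 2) (Fin 2) R :=
  !![q 0 + i * q 3, i * q 1 + q 2; i * q 1 - q 2, q 0 - i * q 3]

lemma transpose_rotMatrix_mul_rotMatrix (q : Fin 4 → R) :
    (rotMatrix q)ᵀ * rotMatrix q = quatNorm q ^ 2 • 1 := by
  ext j k
  fin_cases j <;> fin_cases k <;>
    simp [rotMatrix, quatNorm, mul_apply, Fin.sum_univ_three] <;> ring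

lemma det_rotMatrix (q : Fin 4 → R) : (rotMatrix q).det = quatNorm q ^ 3 := by
  simp only [det_fin_three, rotMatrix, quatNorm, of_apply, cons_val]
  ring

lemma det_spinMatrix {i : R} (hi : i * i = -1) (q : Fin 4 → R) :
    (spinMatrix i q).det = quatNorm q := by
  simp only [det_fin_two, spinMatrix, quatNorm, of_apply, cons_val]
  linear_combination -(q 1 ^ 2 + q 3 ^ 2) * hi

lemma spinMatrix_mul_pauli_mul {i : R} (hi : i * i = -1) (q : Fin 4 → R) (y : Fin 3 → R) :
    spinMatrix i q * pauli i y * (spinMatrix i q)ᵀ = pauli i (rotMatrix q *ᵥ y) := by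
  ext j k
  fin_cases j <;> fin_cases k <;>
    simp [pauli, spinMatrix, rotMatrix, mul_apply, mulVec, dotProduct, Fin.sum_univ_succ] <;> grind

variable {K : Type} [Field K]

lemma exists_spinMatrix_eq (h2 : (2 : K) ≠ 0) {i : K} (hi : i * i = -1)
    (g : Matrix (Fin 2) (Fin 2) K) : ∃ q, spinMatrix i q = g := by
  refine ⟨![(g 0 0 + g 1 1) / 2, -i * (g 0 1 + g 1 0) / 2, (g 0 1 - g 1 0) / 2,
    -i * (g 0 0 - g 1 1) / 2], ?_⟩
  ext j k
  fin_cases j <;> fin_cases k <;> simp [spinMatrix] <;> grind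

/-- `pauli i` as a linear equivalence of the space of vectors with the space of symmetric
matrices. -/
def pauliEquiv (h2 : (2 : K) ≠ 0) {i : K} (hi : i * i = -1) :
    (Fin 3 → K) ≃ₗ[K] symmMatrices K (Fin 2) where
  toFun y := ⟨pauli i y, by
    rw [mem_symmMatrices]; ext j k; fin_cases j <;> fin_cases k <;> simp [pauli]⟩
  map_add' x y := Subtype.ext <| by
    ext j k; fin_cases j <;> fin_cases k <;> simp [pauli] <;> ring
  map_smul' c x := Subtype.ext <| by
    ext j k; fin_cases j <;> fin_cases k <;> simp [pauli] <;> ring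
  invFun S := ![(S.1 0 0 - S.1 1 1) / 2, i * (S.1 0 0 + S.1 1 1) / 2, -S.1 0 1]
  left_inv y := by
    ext j; fin_cases j <;> simp [pauli] <;> grind
  right_inv S := Subtype.ext <| by
    have hS : S.1 1 0 = S.1 0 1 := congrFun (congrFun (mem_symmMatrices.mp S.2) 0) 1
    ext j k; fin_cases j <;> fin_cases k <;> simp [pauli] <;> grind

variable {A : Type*} [CommRing A] [Algebra K A] {Y : Set (Fin 3 → A)}

lemma exists_eq_add_pauli_of_mem_wordAlg {i : K} (hi : i * i = -1)
    {w : Matrix (Fin 2) (Fin 2) A}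
    (hw : w ∈ wordAlg K (symplForm A) (pauli (algebraMap K A i) '' Y)) :
    ∃ a ∈ vecAlg K Y, ∃ x ∈ vecModule K Y,
      w = a • 1 + pauli (algebraMap K A i) x * symplForm A := by
  have hzero : pauli (algebraMap K A i) 0 = 0 := by
    ext j k; fin_cases j <;> fin_cases k <;> simp [pauli]
  have hadd (x y) : pauli (algebraMap K A i) (x + y) =
      pauli (algebraMap K A i) x + pauli (algebraMap K A i) y := by
    ext j k; fin_cases j <;> fin_cases k <;> simp [pauli] <;> ring
  induction hw using Algebra.adjoin_induction with
  | mem w hw =>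
    obtain ⟨_, ⟨y, hy, rfl⟩, rfl⟩ := hw
    exact ⟨0, zero_mem _, y, mem_vecModule hy, by simp⟩
  | algebraMap r =>
    refine ⟨algebraMap K A r, Subalgebra.algebraMap_mem _ r, 0, zero_mem _, ?_⟩
    rw [hzero, zero_mul, add_zero, algebraMap_smul, Algebra.algebraMap_eq_smul_one]
  | add w w' _ _ hw hw' =>
    obtain ⟨a, ha, x, hx, rfl⟩ := hw
    obtain ⟨b, hb, y, hy, rfl⟩ := hw'
    refine ⟨a + b, add_mem ha hb, x + y, add_mem hx hy, ?_⟩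
    rw [hadd, add_smul, add_mul, add_add_add_comm]
  | mul w w' _ _ hw hw' =>
    obtain ⟨a, ha, x, hx, rfl⟩ := hw
    obtain ⟨b, hb, y, hy, rfl⟩ := hw'
    obtain ⟨hdot, hcross⟩ := dotProduct_mem_and_cross_mem hx hy
    have hi' : algebraMap K A i * algebraMap K A i = -1 := by
      rw [← _root_.map_mul, hi, map_neg, map_one]
    exact ⟨_, add_mem (mul_mem ha hb) hdot, _, add_mem (add_mem (smul_mem_vecModule ha hy)
      (smul_mem_vecModule hb hx)) (smul_mem_vecModule (Subalgebra.algebraMap_mem _ i) hcross),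
      add_pauli_mul_add_pauli hi' a b x y⟩

lemma chainAlg_pauli_le {i : K} (hi : i * i = -1) :
    chainAlg K (symplForm A) (pauli (algebraMap K A i) '' Y) ∅ ≤ vecAlg K Y := by
  refine chainAlg_le (fun w hw => ?_) fun w _ x hx => hx.elim
  obtain ⟨a, ha, x, -, rfl⟩ := exists_eq_add_pauli_of_mem_wordAlg hi hw
  have htrace : (a • 1 + pauli (algebraMap K A i) x * symplForm A).trace = a + a := by
    simp [pauli, symplForm, trace_fin_two]
    ring
  exact htrace ▸ add_mem ha ha

end Spin

section Rotations

variable {K : Type} [Field K] {κ : Type}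

variable (K) in
/-- The vector with index `k`, as a vector over the algebra of functions of a family of vectors. -/
def coordVec (k : κ) : Fin 3 → (κ → Fin 3 → K) → K := fun i y => y k i

lemma map_pullback_chain_pauli_le (h2 : (2 : K) ≠ 0) {i : K} (hi : i * i = -1) :
    (chain (symplForm K) κ Empty Empty).map
      (pullback K fun y : κ → Fin 3 → K => (fun k => pauliEquiv h2 hi (y k), 0, 0)) ≤
        vecAlg K (Set.range (coordVec K)) := by
  have hform : (symplForm K).map (algebraMap K ((κ → Fin 3 → K) → K)) = symplForm _ := by
    ext j l; fin_cases j <;> fin_cases l <;> simp [symplForm]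
  rw [map_pullback_chain, hform]
  convert chainAlg_pauli_le (Y := Set.range (coordVec K (κ := κ))) hi
  · rw [letters, Set.range_eq_empty fun c : Empty => _, Set.union_empty, ← Set.range_comp]
    refine congrArg Set.range (funext fun k => ?_)
    ext j l; fin_cases j <;> fin_cases l <;> rfl
  · exact Set.range_eq_empty _

/-- The first fundamental theorem for `SO₃`: under the double cover by `SL₂`, vectors become binary
quadratic forms. -/
theorem mem_vecAlg_of_forall_rotation_eq [IsAlgClosed K] (h2 : (2 : K) ≠ 0) [Finite κ]
    {f : (κ → Fin 3 → K) → K} (hf : f ∈ polyFun K (κ → Fin 3 → K))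
    (hinv : ∀ g : Matrix (Fin 3) (Fin 3) K, gᵀ * g = 1 → g.det = 1 →
      ∀ y, f (fun k => g *ᵥ y k) = f y) :
    f ∈ vecAlg K (Set.range (coordVec K)) := by
  have := Fintype.ofFinite κ
  obtain ⟨i, hi⟩ := IsAlgClosed.exists_pow_nat_eq (-1 : K) two_pos
  rw [pow_two] at hi
  let e := pauliEquiv h2 hi
  let toVec : Config K (Fin 2) κ Empty Empty →ₗ[K] κ → Fin 3 → K :=
    LinearMap.pi fun k => e.symm ∘ₗ LinearMap.proj k ∘ₗ LinearMap.fst K _ _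
  have hchain : f ∘ toVec ∈ chain (symplForm K) κ Empty Empty := by
    refine mem_chain_symplForm h2 Finset.univ (comp_linearMap_mem_polyFun toVec hf) ?_
      fun x S S' h => by rw [funext fun k => h k (Finset.mem_univ k)]
    intro g hg q
    have hdet : g.det = 1 := by
      have h01 := congrFun (congrFun ((transpose_mul_symplForm_mul g).symm.trans hg) 0) 1
      simpa [symplForm] using h01
    obtain ⟨r, rfl⟩ := exists_spinMatrix_eq h2 hi g
    rw [det_spinMatrix hi] at hdet
    have hact (k : κ) : e.symm ((q.act (spinMatrix i r)).1 k) =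
        rotMatrix r *ᵥ e.symm (q.1 k) := by
      obtain ⟨y, hy⟩ := e.surjective (q.1 k)
      rw [← hy, e.symm_apply_apply, LinearEquiv.symm_apply_eq]
      refine Subtype.ext (.trans ?_ (spinMatrix_mul_pauli_mul hi r y))
      simp only [Config.act, ← hy]
      rfl
    refine (congrArg f (funext hact)).trans (hinv _ ?_ ?_ _)
    · rw [transpose_rotMatrix_mul_rotMatrix, hdet, one_pow, one_smul]
    · rw [det_rotMatrix, hdet, one_pow]
  exact map_pullback_chain_pauli_le h2 hi
    ⟨_, hchain, funext fun y => congrArg f (funext fun k => e.symm_apply_apply _)⟩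

end Rotations

/-! ### Vectors and skew-symmetric `3 × 3` matrices -/

section AxialVectors

variable {R : Type*} [CommRing R]

/-- The skew-symmetric matrix of the linear map `x ↦ a × x`. -/
def hat (a : Fin 3 → R) : Matrix (Fin 3) (Fin 3) R :=
  !![0, -a 2, a 1; a 2, 0, -a 0; -a 1, a 0, 0]

lemma hat_mulVec (a x : Fin 3 → R) : hat a *ᵥ x = a ⨯₃ x := by
  ext j
  fin_cases j <;> simp [hat, mulVec, dotProduct, Fin.sum_univ_three, cross_apply] <;> ring

lemma hat_cross (a b : Fin 3 → R) : hat (a ⨯₃ b) = hat a * hat b - hat b * hat a := by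
  ext j k
  fin_cases j <;> fin_cases k <;> simp [hat, cross_apply] <;> ring

lemma trace_hat_mul_hat (a b : Fin 3 → R) : (hat a * hat b).trace = -(a ⬝ᵥ b + a ⬝ᵥ b) := by
  simp [trace, hat, Fin.sum_univ_three, dotProduct]
  ring

lemma mul_hat_mul_transpose (g : Matrix (Fin 3) (Fin 3) R) (a : Fin 3 → R) :
    g * hat a * gᵀ = hat (g.adjugateᵀ *ᵥ a) := by
  ext j k
  fin_cases j <;> fin_cases k <;>
    simp [hat, adjugate_fin_three, mul_apply, mulVec, dotProduct, Fin.sum_univ_three] <;> ring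

lemma mul_hat_mul_transpose_of_rotation {g : Matrix (Fin 3) (Fin 3) R} (hg : gᵀ * g = 1)
    (hdet : g.det = 1) (a : Fin 3 → R) : g * hat a * gᵀ = hat (g *ᵥ a) := by
  have hadj : g.adjugate = gᵀ := by
    rw [← one_mul g.adjugate, ← hg, Matrix.mul_assoc, mul_adjugate, hdet, one_smul, mul_one]
  rw [mul_hat_mul_transpose, hadj, transpose_transpose]

lemma dotProduct_mul_dotProduct_eq_hat (a b x y : Fin 3 → R) :
    (a ⬝ᵥ x) * (b ⬝ᵥ y) = y ⬝ᵥ (hat a * hat b) *ᵥ x + (a ⬝ᵥ b) * (x ⬝ᵥ y) := by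
  simp [hat, mulVec, Fin.sum_univ_three, dotProduct, mul_apply]
  ring

lemma dotProduct_mul_tripleProduct (a w x y z : Fin 3 → R) :
    (a ⬝ᵥ w) * (x ⬝ᵥ y ⨯₃ z) =
      (x ⬝ᵥ w) * (a ⬝ᵥ y ⨯₃ z) + (y ⬝ᵥ w) * (a ⬝ᵥ z ⨯₃ x) + (z ⬝ᵥ w) * (a ⬝ᵥ x ⨯₃ y) := by
  simp [Fin.sum_univ_three, dotProduct, cross_apply]
  ring

lemma tripleProduct_mul_tripleProduct (x y z x' y' z' : Fin 3 → R) :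
    (x ⬝ᵥ y ⨯₃ z) * (x' ⬝ᵥ y' ⨯₃ z') =
      (x ⬝ᵥ x') * ((y ⬝ᵥ y') * (z ⬝ᵥ z') - (y ⬝ᵥ z') * (z ⬝ᵥ y')) -
      (x ⬝ᵥ y') * ((y ⬝ᵥ x') * (z ⬝ᵥ z') - (y ⬝ᵥ z') * (z ⬝ᵥ x')) +
      (x ⬝ᵥ z') * ((y ⬝ᵥ x') * (z ⬝ᵥ y') - (y ⬝ᵥ y') * (z ⬝ᵥ x')) := by
  simp [Fin.sum_univ_three, dotProduct, cross_apply]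
  ring

variable {K : Type*} [Field K] [Algebra K R] {C X : Set (Fin 3 → R)}

/-- The vectors of `C` and their cross products: those obtained from `C` which are fixed by `-1`
when the vectors of `C` are. -/
def axialVecs (C : Set (Fin 3 → R)) : Set (Fin 3 → R) :=
  C ∪ {v | ∃ a ∈ C, ∃ b ∈ C, a ⨯₃ b = v}

/-- The generators of `vecAlg K (C ∪ X)` which change sign under `-1` if the vectors of `C` are
axial and those of `X` are polar. -/
def oddProducts (C X : Set (Fin 3 → R)) : Set R :=
  {f | ∃ c ∈ axialVecs C, ∃ x ∈ X, c ⬝ᵥ x = f} ∪ {f | ∃ x ∈ X, ∃ y ∈ X, ∃ z ∈ X, x ⬝ᵥ y ⨯₃ z = f}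

lemma hat_mem_wordAlg {c : Fin 3 → R} (hc : c ∈ axialVecs C) :
    hat c ∈ wordAlg K 1 (hat '' C) := by
  have hhat {c : Fin 3 → R} (hc : c ∈ C) : hat c ∈ wordAlg K 1 (hat '' C) := by
    simpa only [mul_one] using mul_mem_wordAlg (K := K) (J := 1) (Set.mem_image_of_mem hat hc)
  obtain hc | ⟨a, ha, b, hb, rfl⟩ := hc
  · exact hhat hc
  · rw [hat_cross]
    exact sub_mem (mul_mem (hhat ha) (hhat hb)) (mul_mem (hhat hb) (hhat ha))

lemma axial_dotProduct_mem_chainAlg (h2 : (2 : K) ≠ 0) {a b : Fin 3 → R} (ha : a ∈ axialVecs C)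
    (hb : b ∈ axialVecs C) : a ⬝ᵥ b ∈ chainAlg K 1 (hat '' C) X := by
  have htrace := trace_mem_chainAlg (X := X)
    (mul_mem (hat_mem_wordAlg (K := K) ha) (hat_mem_wordAlg hb))
  rw [trace_hat_mul_hat, neg_mem_iff] at htrace
  rw [← inv_smul_smul₀ h2 (a ⬝ᵥ b), two_smul]
  exact Subalgebra.smul_mem _ htrace _

lemma mulVec_dotProduct_mem_chainAlg {w : Matrix (Fin 3) (Fin 3) R}
    (hw : w ∈ wordAlg K 1 (hat '' C)) {x y : Fin 3 → R} (hx : x ∈ X) (hy : y ∈ X) :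
    x ⬝ᵥ w *ᵥ y ∈ chainAlg K 1 (hat '' C) X := by
  simpa only [one_mul] using form_mem_chainAlg hw hx hy

lemma polar_dotProduct_mem_chainAlg {x y : Fin 3 → R} (hx : x ∈ X) (hy : y ∈ X) :
    x ⬝ᵥ y ∈ chainAlg K 1 (hat '' C) X := by
  simpa only [one_mulVec] using mulVec_dotProduct_mem_chainAlg (K := K) (C := C) (one_mem _) hx hy

lemma axial_dotProduct_cross_mem_chainAlg {c x y : Fin 3 → R} (hc : c ∈ axialVecs C) (hx : x ∈ X)
    (hy : y ∈ X) : c ⬝ᵥ x ⨯₃ y ∈ chainAlg K 1 (hat '' C) X := by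
  rw [← triple_product_permutation, ← hat_mulVec]
  exact mulVec_dotProduct_mem_chainAlg (hat_mem_wordAlg hc) hy hx

lemma mul_mem_chainAlg_of_mem_oddProducts (h2 : (2 : K) ≠ 0) {f g : R} (hf : f ∈ oddProducts C X)
    (hg : g ∈ oddProducts C X) : f * g ∈ chainAlg K 1 (hat '' C) X := by
  have hmixed {c w x y z : Fin 3 → R} (hc : c ∈ axialVecs C) (hw : w ∈ X) (hx : x ∈ X) (hy : y ∈ X)
      (hz : z ∈ X) : (c ⬝ᵥ w) * (x ⬝ᵥ y ⨯₃ z) ∈ chainAlg K 1 (hat '' C) X := by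
    have hterm {x y z : Fin 3 → R} (hx : x ∈ X) (hy : y ∈ X) (hz : z ∈ X) :=
      mul_mem (polar_dotProduct_mem_chainAlg (K := K) (C := C) hx hw)
        (axial_dotProduct_cross_mem_chainAlg hc hy hz)
    rw [dotProduct_mul_tripleProduct]
    exact add_mem (add_mem (hterm hx hy hz) (hterm hy hz hx)) (hterm hz hx hy)
  obtain ⟨a, ha, x, hx, rfl⟩ | ⟨x, hx, y, hy, z, hz, rfl⟩ := hf <;>
    obtain ⟨b, hb, x', hx', rfl⟩ | ⟨x', hx', y', hy', z', hz', rfl⟩ := hg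
  · rw [dotProduct_mul_dotProduct_eq_hat]
    exact add_mem
      (mulVec_dotProduct_mem_chainAlg (mul_mem (hat_mem_wordAlg ha) (hat_mem_wordAlg hb)) hx' hx)
      (mul_mem (axial_dotProduct_mem_chainAlg h2 ha hb) (polar_dotProduct_mem_chainAlg hx hx'))
  · exact hmixed ha hx hx' hy' hz'
  · rw [mul_comm]
    exact hmixed hb hx' hx hy hz
  · have hterm {p q r s t u : Fin 3 → R} (hp : p ∈ X) (hq : q ∈ X) (hr : r ∈ X) (hs : s ∈ X)
        (ht : t ∈ X) (hu : u ∈ X) :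
        (p ⬝ᵥ s) * ((q ⬝ᵥ t) * (r ⬝ᵥ u) - (q ⬝ᵥ u) * (r ⬝ᵥ t)) ∈ chainAlg K 1 (hat '' C) X :=
      mul_mem (polar_dotProduct_mem_chainAlg hp hs)
        (sub_mem
          (mul_mem (polar_dotProduct_mem_chainAlg hq ht) (polar_dotProduct_mem_chainAlg hr hu))
          (mul_mem (polar_dotProduct_mem_chainAlg hq hu) (polar_dotProduct_mem_chainAlg hr ht)))
    rw [tripleProduct_mul_tripleProduct]
    exact add_mem (sub_mem (hterm hx hy hz hx' hy' hz') (hterm hx hy hz hy' hx' hz'))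
      (hterm hx hy hz hz' hx' hy')

lemma vecAlg_union_le (h2 : (2 : K) ≠ 0) :
    vecAlg K (C ∪ X) ≤ (Algebra.adjoin (chainAlg K 1 (hat '' C) X)
      (oddProducts C X)).restrictScalars K := by
  set E := Algebra.adjoin (chainAlg K 1 (hat '' C) X) (oddProducts C X)
  have heven {f : R} (hf : f ∈ chainAlg K 1 (hat '' C) X) : f ∈ E := E.algebraMap_mem ⟨f, hf⟩
  have hodd {c x : Fin 3 → R} (hc : c ∈ axialVecs C) (hx : x ∈ X) : c ⬝ᵥ x ∈ E :=
    Algebra.subset_adjoin (.inl ⟨c, hc, x, hx, rfl⟩)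
  have htriple {x y z : Fin 3 → R} (hx : x ∈ X) (hy : y ∈ X) (hz : z ∈ X) : x ⬝ᵥ y ⨯₃ z ∈ E :=
    Algebra.subset_adjoin (.inr ⟨x, hx, y, hy, z, hz, rfl⟩)
  have haxial {c : Fin 3 → R} (hc : c ∈ C) : c ∈ axialVecs C := .inl hc
  have hcross {a b : Fin 3 → R} (ha : a ∈ C) (hb : b ∈ C) : a ⨯₃ b ∈ axialVecs C :=
    .inr ⟨a, ha, b, hb, rfl⟩
  refine Algebra.adjoin_le (Set.union_subset ?_ ?_)
  · rintro _ ⟨x, hx | hx, y, hy | hy, rfl⟩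
    · exact heven (axial_dotProduct_mem_chainAlg h2 (haxial hx) (haxial hy))
    · exact hodd (haxial hx) hy
    · rw [dotProduct_comm]
      exact hodd (haxial hy) hx
    · exact heven (polar_dotProduct_mem_chainAlg hx hy)
  · rintro _ ⟨x, hx | hx, y, hy | hy, z, hz | hz, rfl⟩
    · exact heven (axial_dotProduct_mem_chainAlg h2 (haxial hx) (hcross hy hz))
    · rw [triple_product_permutation, triple_product_permutation, dotProduct_comm]
      exact hodd (hcross hx hy) hz
    · rw [triple_product_permutation, dotProduct_comm]
      exact hodd (hcross hz hx) hy
    · exact heven (axial_dotProduct_cross_mem_chainAlg (haxial hx) hy hz)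
    · rw [dotProduct_comm]
      exact hodd (hcross hy hz) hx
    · rw [triple_product_permutation]
      exact heven (axial_dotProduct_cross_mem_chainAlg (haxial hy) hz hx)
    · rw [triple_product_permutation, triple_product_permutation]
      exact heven (axial_dotProduct_cross_mem_chainAlg (haxial hz) hx hy)
    · exact htriple hx hy hz

lemma mem_chainAlg_hat_of_mem_vecAlg (h2 : (2 : K) ≠ 0) {φ : R →ₐ[K] R}
    (hC : ∀ c ∈ C, φ ∘ c = c) (hX : ∀ x ∈ X, φ ∘ x = -x) {f : R} (hf : f ∈ vecAlg K (C ∪ X))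
    (hφ : φ f = f) : f ∈ chainAlg K 1 (hat '' C) X := by
  have hdot (x y : Fin 3 → R) : φ (x ⬝ᵥ y) = (φ ∘ x) ⬝ᵥ (φ ∘ y) :=
    RingHom.map_dotProduct (φ : R →+* R) x y
  have hcross (x y : Fin 3 → R) : φ ∘ (x ⨯₃ y) = (φ ∘ x) ⨯₃ (φ ∘ y) := by
    ext j
    fin_cases j <;> simp [cross_apply]
  have hfix : FixesLetters 1 (hat '' C) ∅ φ := by
    refine ⟨Matrix.map_one _ (map_zero φ) (map_one φ), ?_, fun x hx => hx.elim⟩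
    rintro _ ⟨c, hc, rfl⟩
    have hφc (j : Fin 3) : φ (c j) = c j := congrFun (hC c hc) j
    ext j k
    fin_cases j <;> fin_cases k <;> simp [hat, hφc]
  have heven (d : R) (hd : d ∈ chainAlg K 1 (hat '' C) X) : φ d = d := by
    suffices hle : chainAlg K 1 (hat '' C) X ≤ AlgHom.equalizer φ (AlgHom.id K R) from hle hd
    refine chainAlg_le (fun w hw => ?_) fun w hw x hx y hy => ?_
    · exact (AddMonoidHom.map_trace φ w).trans (congrArg trace (hfix.map_word hw))
    · refine (map_dotProduct_mulVec (φ : R →+* R) (1 * w) x y).trans ?_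
      rw [one_mul]
      change (φ ∘ x) ⬝ᵥ w.map φ *ᵥ (φ ∘ y) = _
      rw [hX x hx, hX y hy, hfix.map_word hw, mulVec_neg, neg_dotProduct_neg]
      rfl
  have hodd (z : R) (hz : z ∈ oddProducts C X) : φ z = -z := by
    obtain ⟨c, hc, x, hx, rfl⟩ | ⟨x, hx, y, hy, z, hz, rfl⟩ := hz
    · have hφc : φ ∘ c = c := by
        obtain hc | ⟨a, ha, b, hb, rfl⟩ := hc
        · exact hC c hc
        · rw [hcross, hC a ha, hC b hb]
      rw [hdot, hφc, hX x hx, dotProduct_neg]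
    · rw [hdot, hcross, hX x hx, hX y hy, hX z hz, map_neg, map_neg, LinearMap.neg_apply, neg_neg,
        neg_dotProduct]
  refine mem_of_mem_adjoin_of_swap_eq h2 heven (fun z hz => ?_) (fun z hz z' hz' => ?_)
    (vecAlg_union_le h2 hf) hφ
  · rw [hodd z hz, add_neg_cancel]
    exact zero_mem _
  · rw [hodd z hz, hodd z' hz', sub_neg_eq_add, sub_neg_eq_add, ← two_mul, ← two_mul,
      mul_mul_mul_comm]
    exact mul_mem (mul_mem (ofNat_mem _ 2) (ofNat_mem _ 2))
      (mul_mem_chainAlg_of_mem_oddProducts h2 hz hz')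

end AxialVectors

section SkewConfigurations

variable {K : Type} [Field K] {κ τ ι : Type}

lemma hat_add (a b : Fin 3 → K) : hat (a + b) = hat a + hat b := by
  ext j k
  fin_cases j <;> fin_cases k <;> simp [hat, add_comm]

lemma hat_smul (c : K) (a : Fin 3 → K) : hat (c • a) = c • hat a := by
  ext j k
  fin_cases j <;> fin_cases k <;> simp [hat]

lemma hat_mem_skewMatrices (a : Fin 3 → K) : hat a ∈ skewMatrices K (Fin 3) := by
  rw [mem_skewMatrices]
  ext j k
  fin_cases j <;> fin_cases k <;> simp [hat]

lemma hat_of_mem_skewMatrices (h2 : (2 : K) ≠ 0) {T : Matrix (Fin 3) (Fin 3) K}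
    (hT : T ∈ skewMatrices K (Fin 3)) : hat ![T 2 1, T 0 2, T 1 0] = T := by
  have hskew (j k : Fin 3) : T k j = -T j k := congrFun (congrFun (mem_skewMatrices.mp hT) j) k
  have hdiag (j : Fin 3) : T j j = 0 := by
    have h : 2 * T j j = 0 := by linear_combination hskew j j
    exact (mul_eq_zero.mp h).resolve_left h2
  ext j k
  fin_cases j <;> fin_cases k <;> simp [hat, hdiag, hskew 2 1, hskew 0 2, hskew 1 0]

/-- The identification of vectors with skew-symmetric `3 × 3` matrices. -/
def hatEquiv (h2 : (2 : K) ≠ 0) : (Fin 3 → K) ≃ₗ[K] skewMatrices K (Fin 3) where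
  toFun a := ⟨hat a, hat_mem_skewMatrices a⟩
  map_add' a b := Subtype.ext (hat_add a b)
  map_smul' c a := Subtype.ext (hat_smul c a)
  invFun T := ![T.1 2 1, T.1 0 2, T.1 1 0]
  left_inv a := by
    ext j
    fin_cases j <;> simp [hat]
  right_inv T := Subtype.ext ((hat_of_mem_skewMatrices h2 T.2 :))

/-- The configuration without symmetric matrices given by a family of vectors, the first of which
are turned into skew-symmetric matrices. -/
def skewConfig (h2 : (2 : K) ≠ 0) (y : τ ⊕ ι → Fin 3 → K) : Config K (Fin 3) κ τ ι :=
  (0, fun c => hatEquiv h2 (y (.inl c)), fun a => y (.inr a))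

lemma IsInvariant.skewConfig_mulVec (h2 : (2 : K) ≠ 0) {f : Config K (Fin 3) κ τ ι → K}
    (hinv : IsInvariant 1 f) {g : Matrix (Fin 3) (Fin 3) K} (hg : gᵀ * g = 1) (hdet : g.det = 1)
    (y : τ ⊕ ι → Fin 3 → K) : f (skewConfig h2 fun s => g *ᵥ y s) = f (skewConfig h2 y) := by
  rw [← hinv g (by rw [mul_one, hg]) (skewConfig h2 y), eq_comm]
  refine congrArg f (Prod.ext (funext fun k => ?_) (Prod.ext (funext fun c => ?_) rfl))
  · exact Subtype.ext (by simp [skewConfig, Config.act])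
  · exact Subtype.ext (mul_hat_mul_transpose_of_rotation hg hdet (y (.inl c)))

lemma IsInvariant.skewConfig_neg (h2 : (2 : K) ≠ 0) {f : Config K (Fin 3) κ τ ι → K}
    (hinv : IsInvariant 1 f) (y : τ ⊕ ι → Fin 3 → K) :
    f (skewConfig h2 (Sum.elim (fun c => y (.inl c)) fun a => -y (.inr a))) =
      f (skewConfig h2 y) := by
  rw [← hinv (-1) (by simp)]
  refine congrArg f (Prod.ext (funext fun k => Subtype.ext ?_) (Prod.ext (funext fun c =>
    Subtype.ext ?_) (funext fun a => ?_))) <;> simp [skewConfig, Config.act, neg_mulVec]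

lemma comp_skewConfig_mem_chainAlg [IsAlgClosed K] (h2 : (2 : K) ≠ 0) [Finite τ] [Finite ι]
    {f : Config K (Fin 3) κ τ ι → K} (hf : f ∈ polyFun K (Config K (Fin 3) κ τ ι))
    (hinv : IsInvariant 1 f) :
    f ∘ skewConfig h2 ∈ chainAlg K 1 (hat '' Set.range fun c : τ => coordVec K (Sum.inl c))
      (Set.range fun a : ι => coordVec K (Sum.inr a)) := by
  let flip (y : τ ⊕ ι → Fin 3 → K) : τ ⊕ ι → Fin 3 → K :=
    Sum.elim (fun c => y (.inl c)) fun a => -y (.inr a)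
  let toConfig : (τ ⊕ ι → Fin 3 → K) →ₗ[K] Config K (Fin 3) κ τ ι :=
    LinearMap.inr K (κ → symmMatrices K (Fin 3)) _ ∘ₗ
      (LinearMap.pi fun c => (hatEquiv h2).toLinearMap ∘ₗ LinearMap.proj (.inl c)).prod
        (LinearMap.pi fun a => LinearMap.proj (.inr a))
  have hrotation := mem_vecAlg_of_forall_rotation_eq h2
    (f := f ∘ skewConfig h2) (comp_linearMap_mem_polyFun toConfig hf)
    fun g hg hdet y => hinv.skewConfig_mulVec h2 hg hdet y
  rw [← Sum.elim_comp_inl_inr (coordVec K), Set.Sum.elim_range] at hrotation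
  refine mem_chainAlg_hat_of_mem_vecAlg h2 (φ := pullback K flip) ?_ ?_ hrotation
    (funext (hinv.skewConfig_neg h2))
  · rintro _ ⟨c, rfl⟩
    rfl
  · rintro _ ⟨a, rfl⟩
    rfl

lemma mem_chain_one_of_dependsOn_empty [IsAlgClosed K] (h2 : (2 : K) ≠ 0) [Finite τ] [Finite ι]
    {f : Config K (Fin 3) κ τ ι → K} (hf : f ∈ polyFun K (Config K (Fin 3) κ τ ι))
    (hinv : IsInvariant 1 f) (hdep : ∀ x, DependsOn (fun S => f (S, x)) (∅ : Set κ)) :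
    f ∈ chain 1 κ τ ι := by
  let coords (q : Config K (Fin 3) κ τ ι) : τ ⊕ ι → Fin 3 → K :=
    Sum.elim (fun c => (hatEquiv h2).symm (q.2.1 c)) q.2.2
  have hmem : f ∈ (chainAlg K 1 (hat '' Set.range fun c : τ => coordVec K (Sum.inl c))
      (Set.range fun a : ι => coordVec K (Sum.inr a))).map (pullback K coords) := by
    refine ⟨_, comp_skewConfig_mem_chainAlg h2 hf hinv, funext fun q => ?_⟩
    have hq : skewConfig h2 (coords q) = ((0, q.2) : Config K (Fin 3) κ τ ι) :=
      Prod.ext rfl (Prod.ext (funext fun c => (hatEquiv h2).apply_symm_apply _) rfl)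
    exact (congrArg f hq).trans (hdep q.2 fun _ h => h.elim)
  have hhat (c : τ) : (hat (coordVec K (Sum.inl c : τ ⊕ ι))).map (pullback K coords) =
      funMatrix fun q : Config K (Fin 3) κ τ ι => q.2.1 c := by
    have hq (q : Config K (Fin 3) κ τ ι) : hat (coords q (.inl c)) = q.2.1 c :=
      congrArg Subtype.val ((hatEquiv h2).apply_symm_apply (q.2.1 c))
    ext j k q
    refine .trans ?_ (congrFun (congrFun (hq q) j) k)
    fin_cases j <;> fin_cases k <;> simp [hat] <;> rfl
  rw [map_chainAlg, ← Set.range_comp, ← Set.range_comp, ← Set.range_comp,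
    Matrix.map_one _ (map_zero _) (map_one _)] at hmem
  rw [chain, Matrix.map_one _ (map_zero _) (map_one _)]
  refine chainAlg_mono ?_ ?_ hmem
  · rintro _ ⟨c, rfl⟩
    exact .inr ⟨c, (hhat c).symm⟩
  · rintro _ ⟨a, rfl⟩
    exact ⟨a, rfl⟩

end SkewConfigurations

/-! ### Symmetric `3 × 3` matrices -/

section CharacteristicPolynomial

variable {R : Type*} [CommRing R]

lemma adjugate_trace_fin_three (M : Matrix (Fin 3) (Fin 3) R) :
    M.adjugate.trace = M 0 0 * M 1 1 - M 0 1 * M 1 0 + (M 0 0 * M 2 2 - M 0 2 * M 2 0) +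
      (M 1 1 * M 2 2 - M 1 2 * M 2 1) := by
  simp [adjugate_fin_three, trace_fin_three]
  ring

lemma mul_mul_self_fin_three (M : Matrix (Fin 3) (Fin 3) R) :
    M * M * M = M.trace • (M * M) - M.adjugate.trace • M + M.det • 1 := by
  rw [adjugate_trace_fin_three]
  ext i j
  fin_cases i <;> fin_cases j <;>
    simp [mul_apply, trace_fin_three, det_fin_three, Fin.sum_univ_three] <;> ring

lemma trace_mul_self_fin_three (M : Matrix (Fin 3) (Fin 3) R) :
    (M * M).trace = M.trace ^ 2 - 2 * M.adjugate.trace := by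
  rw [adjugate_trace_fin_three]
  simp [trace_fin_three, mul_apply, Fin.sum_univ_three]
  ring

lemma det_sub_smul_one_fin_three (M : Matrix (Fin 3) (Fin 3) R) (x : R) :
    (M - x • 1).det = -x ^ 3 + M.trace * x ^ 2 - M.adjugate.trace * x + M.det := by
  rw [adjugate_trace_fin_three]
  simp [trace_fin_three, det_fin_three, one_apply]
  ring

/-- The eigenvalues of the `3 × 3` matrix `M`, with multiplicities, are `a`, `b` and `c`. -/
structure HasEigenvalues (M : Matrix (Fin 3) (Fin 3) R) (a b c : R) : Prop where
  trace_eq : M.trace = a + b + c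
  adjugate_trace_eq : M.adjugate.trace = a * b + a * c + b * c
  det_eq : M.det = a * b * c

lemma HasEigenvalues.det_sub_smul_one {M : Matrix (Fin 3) (Fin 3) R} {a b c : R}
    (h : HasEigenvalues M a b c) (x : R) : (M - x • 1).det = (a - x) * (b - x) * (c - x) := by
  rw [det_sub_smul_one_fin_three, h.trace_eq, h.adjugate_trace_eq, h.det_eq]
  ring

lemma HasEigenvalues.trace_pow {M : Matrix (Fin 3) (Fin 3) R} {a b c : R}
    (h : HasEigenvalues M a b c) (j : ℕ) : (M ^ j).trace = a ^ j + b ^ j + c ^ j := by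
  have hrec (j : ℕ) : (M ^ (j + 3)).trace = M.trace * (M ^ (j + 2)).trace -
      M.adjugate.trace * (M ^ (j + 1)).trace + M.det * (M ^ j).trace := by
    have hpow : M ^ (j + 3) = M ^ j * (M * M * M) := by simp only [pow_succ, mul_assoc]
    rw [hpow, mul_mul_self_fin_three]
    simp only [mul_add, mul_sub, Algebra.mul_smul_comm, mul_one, trace_add, trace_sub, trace_smul,
      smul_eq_mul, pow_succ, mul_assoc]
  induction j using Nat.strong_induction_on with
  | _ j ih =>
    match j with
    | 0 =>
      simp
      norm_num
    | 1 => simp [h.trace_eq]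
    | 2 =>
      rw [pow_two, trace_mul_self_fin_three, h.trace_eq, h.adjugate_trace_eq]
      ring
    | j + 3 =>
      rw [hrec, ih (j + 2) (by omega), ih (j + 1) (by omega), ih j (by omega), h.trace_eq,
        h.adjugate_trace_eq, h.det_eq]
      ring

lemma exists_hasEigenvalues {K : Type*} [Field K] [IsAlgClosed K] (M : Matrix (Fin 3) (Fin 3) K) :
    ∃ a b c, HasEigenvalues M a b c := by
  have hsplits := IsAlgClosed.splits M.charpoly
  have hcard : M.charpoly.roots.card = 3 := by
    rw [IsAlgClosed.card_roots_eq_natDegree, charpoly_natDegree_eq_dim, Fintype.card_fin]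
  obtain ⟨a, b, c, habc⟩ := Multiset.card_eq_three.mp hcard
  have htrace : M.trace = a + b + c := by
    simp [trace_eq_sum_roots_charpoly_of_splits hsplits, habc, add_assoc]
  have hdet : M.det = a * b * c := by
    simp [det_eq_prod_roots_charpoly_of_splits hsplits, habc, mul_assoc]
  have hone : (1 - a) * (1 - b) * (1 - c) = -(M - (1 : K) • 1).det := by
    have h := eval_charpoly M 1
    rw [hsplits.eq_prod_roots_of_monic M.charpoly_monic, habc] at h
    rw [← neg_sub M, det_neg] at h
    simpa [mul_assoc, Odd.neg_one_pow (by decide : Odd 3)] using h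
  refine ⟨a, b, c, htrace, ?_, hdet⟩
  rw [det_sub_smul_one_fin_three, htrace, hdet] at hone
  linear_combination -hone

end CharacteristicPolynomial

section SingularSymmetric

variable {K : Type} [Field K]

lemma eq_of_mulVec_eq_of_minor_eq {n : ℕ} {M N : Matrix (Fin (n + 1)) (Fin (n + 1)) K}
    (hM : Mᵀ = M) (hN : Nᵀ = N) {w : Fin (n + 1) → K} {p : Fin (n + 1)} (hp : w p ≠ 0)
    (hw : M *ᵥ w = N *ᵥ w)
    (hminor : ∀ i j, M (p.succAbove i) (p.succAbove j) = N (p.succAbove i) (p.succAbove j)) :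
    M = N := by
  have hrow (i : Fin (n + 1)) (hi : ∀ j, M i (p.succAbove j) = N i (p.succAbove j)) :
      M i = N i := by
    have hsum := congrFun hw i
    simp only [mulVec, dotProduct, Fin.sum_univ_succAbove _ p, hi, add_left_inj] at hsum
    funext j
    induction j using p.succAboveCases with
    | x => exact mul_right_cancel₀ hp hsum
    | p j => exact hi j
  have hrow' (i : Fin n) : M (p.succAbove i) = N (p.succAbove i) := hrow _ (hminor i)
  funext i
  induction i using p.succAboveCases with
  | x =>
    refine hrow p fun j => ?_
    rw [← hM, ← hN, transpose_apply, transpose_apply, hrow']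
  | p i => exact hrow' i

lemma exists_dotProduct_eq_zero {n : ℕ} {w : Fin (n + 1) → K} {p : Fin (n + 1)} (hp : w p ≠ 0)
    (u : Fin n → K) : ∃ u' : Fin (n + 1) → K, u' ⬝ᵥ w = 0 ∧ ∀ i, u' (p.succAbove i) = u i := by
  refine ⟨p.insertNth (-(∑ i, u i * w (p.succAbove i)) / w p) u, ?_, fun i => by simp⟩
  simp [dotProduct, Fin.sum_univ_succAbove _ p, hp]

lemma exists_symProdₗ_eq_of_det_eq_zero [IsAlgClosed K] (h2 : (2 : K) ≠ 0)
    (S : symmMatrices K (Fin 3)) (hdet : (S : Matrix (Fin 3) (Fin 3) K).det = 0) :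
    ∃ u v, symProdₗ u v = S := by
  obtain ⟨w, hw, hSw⟩ := exists_mulVec_eq_zero_iff.mpr hdet
  obtain ⟨p, hp⟩ := Function.ne_iff.mp hw
  obtain ⟨u₀, v₀, huv⟩ := exists_symProdₗ_eq h2
    ⟨(S : Matrix (Fin 3) (Fin 3) K).submatrix p.succAbove p.succAbove,
      mem_symmMatrices.mpr (by rw [transpose_submatrix, mem_symmMatrices.mp S.2])⟩
  obtain ⟨u, huw, hu⟩ := exists_dotProduct_eq_zero hp u₀
  obtain ⟨v, hvw, hv⟩ := exists_dotProduct_eq_zero hp v₀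
  refine ⟨u, v, Subtype.ext (eq_of_mulVec_eq_of_minor_eq (symProdₗ u v).2 S.2 hp ?_ fun i j => ?_)⟩
  · rw [hSw]
    simp [symProdₗ, symProd, add_mulVec, vecMulVec_mulVec, huw, hvw]
  · have hij := congrFun (congrFun (congrArg Subtype.val huv) i) j
    simpa [symProdₗ, symProd, vecMulVec_apply, hu, hv] using hij

end SingularSymmetric

section Pencil

variable {K : Type} [Field K]

/-- The functions `(t, v) ↦ ∑ tⁱ hᵢ(v)` with coefficients `hᵢ ∈ D`. -/
noncomputable def polyFamilies {V : Type*} (D : Subalgebra K (V → K)) :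
    Subalgebra K (K × V → K) :=
  (Polynomial.eval₂AlgHom ((pullback K Prod.snd).comp D.val) Prod.fst
    fun _ => Commute.all _ _).range

section PolyFamilies

variable {V : Type*} {D : Subalgebra K (V → K)}

lemma fst_mem_polyFamilies : Prod.fst ∈ polyFamilies D :=
  ⟨Polynomial.X, Polynomial.eval₂_X _ _⟩

lemma comp_snd_mem_polyFamilies {h : V → K} (hh : h ∈ D) : h ∘ Prod.snd ∈ polyFamilies D :=
  ⟨Polynomial.C ⟨h, hh⟩, Polynomial.eval₂_C _ _⟩

lemma exists_eq_sum_of_mem_polyFamilies {g : K × V → K} (hg : g ∈ polyFamilies D) :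
    ∃ N, ∃ h : ℕ → V → K, (∀ i, h i ∈ D) ∧
      ∀ t v, g (t, v) = ∑ i ∈ Finset.range N, t ^ i * h i v := by
  obtain ⟨P, rfl⟩ := hg
  refine ⟨P.natDegree + 1, fun i => P.coeff i, fun i => (P.coeff i).2, fun t v => ?_⟩
  refine (congrFun (Polynomial.eval₂_eq_sum_range _ _) (t, v)).trans ?_
  simp only [Finset.sum_apply, Pi.mul_apply, Pi.pow_apply, mul_comm]
  rfl

end PolyFamilies

lemma eq_of_forall_sum_pow_mul_eq [Infinite K] {N : ℕ} {a b : ℕ → K}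
    (h : ∀ t : K, ∑ i ∈ Finset.range N, t ^ i * a i = ∑ i ∈ Finset.range N, t ^ i * b i)
    {i : ℕ} (hi : i < N) : a i = b i := by
  have hpoly : ∑ i ∈ Finset.range N, Polynomial.monomial i (a i) =
      ∑ i ∈ Finset.range N, Polynomial.monomial i (b i) := by
    refine Polynomial.funext fun t => ?_
    simpa [Polynomial.eval_finsetSum, mul_comm] using h t
  simpa [Polynomial.finsetSum_coeff, Polynomial.coeff_monomial, hi] using
    congrArg (Polynomial.coeff · i) hpoly

lemma chainAlg_le_of_forall_mem_adjoin {A n : Type*} [CommRing A] [Algebra K A] [Fintype n]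
    [DecidableEq n] {J : Matrix n n A} {L L' : Set (Matrix n n A)} {X : Set (n → A)}
    {T : Subalgebra K A} (hT : chainAlg K J L X ≤ T)
    (hL' : ∀ M ∈ L', M * J ∈ Algebra.adjoin T (wordAlg K J L : Set (Matrix n n A))) :
    chainAlg K J L' X ≤ T := by
  have hle : wordAlg K J L' ≤
      (Algebra.adjoin T (wordAlg K J L : Set (Matrix n n A))).restrictScalars K := by
    refine Algebra.adjoin_le ?_
    rintro _ ⟨M, hM, rfl⟩
    exact hL' M hM
  have hspan {w : Matrix n n A} (hw : w ∈ wordAlg K J L') :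
      w ∈ Submodule.span T (wordAlg K J L : Set (Matrix n n A)) := by
    have hadjoin : w ∈ Subalgebra.toSubmodule
        (Algebra.adjoin T (wordAlg K J L : Set (Matrix n n A))) := hle hw
    rwa [Algebra.adjoin_eq_span,
      show Submonoid.closure (wordAlg K J L : Set (Matrix n n A)) =
        (wordAlg K J L).toSubsemiring.toSubmonoid from Submonoid.closure_eq _] at hadjoin
  have hlin (φ : Matrix n n A →ₗ[A] A) (hφ : ∀ w ∈ wordAlg K J L, φ w ∈ T) {w : Matrix n n A}
      (hw : w ∈ Submodule.span T (wordAlg K J L : Set (Matrix n n A))) : φ w ∈ T := by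
    induction hw using Submodule.span_induction with
    | mem w hw => exact hφ w hw
    | zero => exact map_zero φ ▸ zero_mem T
    | add w w' _ _ h h' => exact map_add φ w w' ▸ add_mem h h'
    | smul t w _ h => exact (φ.map_smul (t : A) w) ▸ mul_mem t.2 h
  refine chainAlg_le (fun w hw => ?_) fun w hw x hx y hy => ?_
  · exact hlin (traceLinearMap n A A) (fun w hw => hT (trace_mem_chainAlg hw)) (hspan hw)
  · let form : Matrix n n A →ₗ[A] A :=
      { toFun := fun w => x ⬝ᵥ (J * w) *ᵥ y
        map_add' := fun w w' => by rw [mul_add, add_mulVec, dotProduct_add]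
        map_smul' := fun a w => by
          rw [mul_smul_comm, smul_mulVec, dotProduct_smul, RingHom.id_apply] }
    exact hlin form (fun w hw => hT (form_mem_chainAlg hw hx hy)) (hspan hw)

variable {n κ τ ι : Type} [DecidableEq n] [DecidableEq κ]

/-- The configuration whose only nonzero entry is the identity matrix at the index `k`. -/
def unitAt (k : κ) : Config K n κ τ ι :=
  (Pi.single k ⟨1, transpose_one⟩, 0)

/-- Adds `c t` times the identity matrix to the symmetric matrix with index `k`. -/
def shift (c : K) (k : κ) (p : K × Config K n κ τ ι) : Config K n κ τ ι :=
  p.2 + (c * p.1) • unitAt k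

lemma shift_fst_self (c : K) (k : κ) (p : K × Config K n κ τ ι) :
    ((shift c k p).1 k : Matrix n n K) = p.2.1 k + (c * p.1) • 1 := by
  simp [shift, unitAt]

lemma shift_fst_of_ne (c : K) {j k : κ} (hjk : j ≠ k) (p : K × Config K n κ τ ι) :
    (shift c k p).1 j = p.2.1 j := by
  simp [shift, unitAt, hjk]

lemma shift_snd (c : K) (k : κ) (p : K × Config K n κ τ ι) : (shift c k p).2 = p.2.2 := by
  simp [shift, unitAt]

lemma comp_shift_mem_polyFamilies {f : Config K n κ τ ι → K}
    (hf : f ∈ polyFun K (Config K n κ τ ι)) (c : K) (k : κ) :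
    f ∘ shift c k ∈ polyFamilies (polyFun K (Config K n κ τ ι)) := by
  have hle : polyFun K (Config K n κ τ ι) ≤
      (polyFamilies (polyFun K (Config K n κ τ ι))).comap (pullback K (shift c k)) := by
    refine Algebra.adjoin_le ?_
    rintro _ ⟨φ, rfl⟩
    have hφ : φ ∘ shift c k = φ ∘ Prod.snd + (c * φ (unitAt k)) • Prod.fst := by
      funext p
      simp [shift]
      ring
    change φ ∘ shift c k ∈ polyFamilies (polyFun K (Config K n κ τ ι))
    rw [hφ]
    exact add_mem (comp_snd_mem_polyFamilies (linearMap_mem_polyFun φ))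
      (Subalgebra.smul_mem _ fst_mem_polyFamilies _)
  exact hle hf

variable [Fintype n]

lemma comp_shift_mem_polyFamilies_chain {h : Config K n κ τ ι → K} (hh : h ∈ chain 1 κ τ ι)
    (c : K) (k : κ) : h ∘ shift c k ∈ polyFamilies (chain (1 : Matrix n n K) κ τ ι) := by
  set T := polyFamilies (chain (1 : Matrix n n K) κ τ ι)
  have hsnd : chainAlg K 1 (letters Prod.snd) (vectors Prod.snd) ≤ T := by
    have hmap := map_pullback_chain (κ := κ) (τ := τ) (ι := ι) (1 : Matrix n n K)
      (Prod.snd : K × Config K n κ τ ι → _)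
    rw [Matrix.map_one _ (map_zero _) (map_one _)] at hmap
    rw [← hmap, Subalgebra.map_le]
    exact fun h hh => comp_snd_mem_polyFamilies hh
  have hmem : h ∘ shift c k ∈ chainAlg K 1 (letters (shift c k)) (vectors (shift c k)) := by
    have hmap : h ∘ shift c k ∈ (chain 1 κ τ ι).map (pullback K (shift c k)) := ⟨h, hh, rfl⟩
    rwa [map_pullback_chain, Matrix.map_one _ (map_zero _) (map_one _)] at hmap
  have hvec : vectors (shift c k) = vectors (Prod.snd : K × Config K n κ τ ι → _) := by
    simp only [vectors, shift_snd]
  rw [hvec] at hmem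
  refine chainAlg_le_of_forall_mem_adjoin hsnd (fun M hM => ?_) hmem
  have hletter {M : Matrix n n (K × Config K n κ τ ι → K)} (hM : M ∈ letters Prod.snd) :
      M ∈ Algebra.adjoin T (wordAlg K (1 : Matrix n n (K × Config K n κ τ ι → K))
        (letters Prod.snd) : Set (Matrix n n (K × Config K n κ τ ι → K))) :=
    Algebra.subset_adjoin (by simpa using mul_mem_wordAlg (K := K) (J := 1) hM)
  rw [mul_one]
  obtain ⟨j, rfl⟩ | ⟨b, rfl⟩ := hM
  · obtain rfl | hjk := eq_or_ne j k
    · have ht : c • Prod.fst ∈ T := Subalgebra.smul_mem _ fst_mem_polyFamilies c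
      refine Set.mem_of_eq_of_mem ?_
        (add_mem (hletter (.inl ⟨j, rfl⟩)) (Subalgebra.smul_mem _ (one_mem _) ⟨_, ht⟩))
      ext a b p
      obtain rfl | hab := eq_or_ne a b <;> simp [funMatrix, shift_fst_self, Subalgebra.smul_def, *]
    · simp only [shift_fst_of_ne c hjk]
      exact hletter (.inl ⟨j, rfl⟩)
  · simp only [shift_snd]
    exact hletter (.inr ⟨b, rfl⟩)

end Pencil

section OrthogonalInduction

variable {K κ τ ι : Type} [Field K]

lemma shift_act {n : Type} [Fintype n] [DecidableEq n] [DecidableEq κ] (c : K) (k : κ)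
    {g : Matrix n n K} (hg : g * gᵀ = 1) (t : K) (q : Config K n κ τ ι) :
    shift c k (t, q.act g) = (shift c k (t, q)).act g := by
  refine Prod.ext (funext fun j => Subtype.ext ?_) ?_
  · obtain rfl | hjk := eq_or_ne j k
    · simp only [shift_fst_self, Config.act, mul_add, add_mul, mul_smul_comm, smul_mul_assoc,
        mul_one, hg]
    · simp only [shift_fst_of_ne c hjk, Config.act]
  · rw [shift_snd]
    simp only [Config.act, shift_snd]

lemma shift_shift_neg {n : Type} [DecidableEq n] [DecidableEq κ] (k : κ) (t : K)
    (q : Config K n κ τ ι) :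
    shift 1 k (t, shift (-1) k (t, q)) = q := by
  simp [shift, add_assoc, ← add_smul]

lemma exists_eq_sum_shift [Infinite K] [DecidableEq κ] {k : κ} {s : Finset κ}
    {f : Config K (Fin 3) κ τ ι → K} (hf : f ∈ polyFun K (Config K (Fin 3) κ τ ι))
    (hinv : IsInvariant 1 f)
    (hdep : ∀ x, DependsOn (fun S => f (S, x)) (insert k s : Finset κ)) :
    ∃ N, ∃ a : ℕ → Config K (Fin 3) κ τ ι → K,
      (∀ t q, f (shift 1 k (t, q)) = ∑ i ∈ Finset.range N, t ^ i * a i q) ∧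
      ∀ i < N, a i ∈ polyFun K (Config K (Fin 3) κ τ ι) ∧ IsInvariant 1 (a i) ∧
        ∀ x, DependsOn (fun S => a i (S, x)) (insert k s : Finset κ) := by
  obtain ⟨N, a, ha, hsum⟩ := exists_eq_sum_of_mem_polyFamilies (comp_shift_mem_polyFamilies hf 1 k)
  refine ⟨N, a, hsum, fun i hi => ⟨ha i, fun g hg q => ?_, fun x S S' hS => ?_⟩⟩
  · refine eq_of_forall_sum_pow_mul_eq (a := (a · _)) (b := (a · q)) (fun t => ?_) hi
    rw [mul_one] at hg
    rw [← hsum, ← hsum, Function.comp_apply, Function.comp_apply,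
      shift_act 1 k (mul_eq_one_comm.mp hg), hinv g (by rw [mul_one, hg])]
  · refine eq_of_forall_sum_pow_mul_eq (a := (a · (S, x))) (b := (a · (S', x))) (fun t => ?_) hi
    rw [← hsum, ← hsum]
    have hshift (S : κ → symmMatrices K (Fin 3)) :
        shift 1 k (t, (S, x)) =
          (S + t • (unitAt k : Config K (Fin 3) κ τ ι).1, x) := by
      simp [shift, unitAt]
    simp only [Function.comp_apply, hshift]
    exact hdep x fun j hj => by simp only [Pi.add_apply, hS j hj]

lemma eq_of_forall_polarize_eq [IsAlgClosed K] [DecidableEq κ] (h2 : (2 : K) ≠ 0) {k : κ}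
    {a h : Config K (Fin 3) κ τ ι → K}
    (hah : ∀ q, a (forgetPair (polarize k q)) = h (forgetPair (polarize k q)))
    {q : Config K (Fin 3) κ τ ι} (hq : (q.1 k : Matrix (Fin 3) (Fin 3) K).det = 0) : a q = h q := by
  obtain ⟨u, v, huv⟩ := exists_symProdₗ_eq_of_det_eq_zero h2 (q.1 k) hq
  have hpolarize : forgetPair (polarize k (adjoinPair q u v)) = q := by
    simp [forgetPair, polarize, adjoinPair, huv]
  rw [← hpolarize, hah]

-- Averaging `∑ μʲ Qⱼ` over the eigenvalues `μ` of `S` gives `3 f = ∑ tr(Sʲ) Qⱼ`.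
lemma mem_chain_one_of_eq_on_eigenvalues [IsAlgClosed K] (h3 : (3 : K) ≠ 0) {k : κ}
    {f : Config K (Fin 3) κ τ ι → K} {g : K × Config K (Fin 3) κ τ ι → K}
    (hg : g ∈ polyFamilies (chain 1 κ τ ι))
    (hfg : ∀ μ q, ((q.1 k : Matrix (Fin 3) (Fin 3) K) - μ • 1).det = 0 → f q = g (μ, q)) :
    f ∈ chain 1 κ τ ι := by
  obtain ⟨N, Q, hQ, hgQ⟩ := exists_eq_sum_of_mem_polyFamilies hg
  let S : Matrix (Fin 3) (Fin 3) (Config K (Fin 3) κ τ ι → K) := funMatrix fun q => q.1 k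
  have hpow (j : ℕ) (q) : (S ^ j).trace q = ((q.1 k : Matrix (Fin 3) (Fin 3) K) ^ j).trace := by
    let φ := Pi.evalRingHom (fun _ : Config K (Fin 3) κ τ ι => K) q
    refine (AddMonoidHom.map_trace φ (S ^ j)).trans (congrArg trace ?_)
    exact map_pow φ.mapMatrix S j
  have hsum : (3 : K) • f = ∑ j ∈ Finset.range N, (S ^ j).trace * Q j := by
    funext q
    obtain ⟨a, b, c, habc⟩ := exists_hasEigenvalues (q.1 k : Matrix (Fin 3) (Fin 3) K)
    have hf {μ : K} (hμ : (a - μ) * (b - μ) * (c - μ) = 0) :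
        f q = ∑ j ∈ Finset.range N, μ ^ j * Q j q := by
      rw [hfg μ q (by rw [habc.det_sub_smul_one, hμ]), hgQ]
    have hthree : ((3 : K) • f) q = ∑ j ∈ Finset.range N, a ^ j * Q j q +
        ∑ j ∈ Finset.range N, b ^ j * Q j q + ∑ j ∈ Finset.range N, c ^ j * Q j q := by
      rw [Pi.smul_apply, smul_eq_mul]
      linear_combination hf (μ := a) (by ring) + hf (μ := b) (by ring) + hf (μ := c) (by ring)
    rw [hthree]
    rw [← Finset.sum_add_distrib, ← Finset.sum_add_distrib, Finset.sum_apply]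
    refine Finset.sum_congr rfl fun j _ => ?_
    rw [Pi.mul_apply, hpow, habc.trace_pow]
    ring
  rw [← inv_smul_smul₀ h3 f, hsum]
  refine Subalgebra.smul_mem _ (sum_mem fun j _ => mul_mem ?_ (hQ j)) _
  have hS : S * 1 ∈ wordAlg K ((1 : Matrix _ _ K).map (algebraMap K _)) (letters id) := by
    rw [← Matrix.map_one (algebraMap K (Config K (Fin 3) κ τ ι → K)) (map_zero _) (map_one _)]
    exact mul_mem_wordAlg (.inl ⟨k, rfl⟩)
  exact trace_mem_chainAlg (pow_mem (mul_one S ▸ hS) j)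

/-- First fundamental theorem for the orthogonal group acting on symmetric and skew-symmetric
`3 × 3` matrices and vectors. Subtracting an eigenvalue makes a symmetric matrix singular, hence of
the form `u vᵀ + v uᵀ`. -/
theorem mem_chain_one [IsAlgClosed K] (h2 : (2 : K) ≠ 0) (h3 : (3 : K) ≠ 0) [Finite τ] [Finite ι]
    (s : Finset κ) {f : Config K (Fin 3) κ τ ι → K} (hf : f ∈ polyFun K (Config K (Fin 3) κ τ ι))
    (hinv : IsInvariant 1 f) (hdep : ∀ x, DependsOn (fun S => f (S, x)) (s : Set κ)) :
    f ∈ chain 1 κ τ ι := by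
  classical
  have := IsAlgClosed.instInfinite (K := K)
  induction s using Finset.induction_on generalizing ι with
  | empty => exact mem_chain_one_of_dependsOn_empty h2 hf hinv (by simpa using hdep)
  | insert k s _ ih =>
    obtain ⟨N, a, hsum, ha⟩ := exists_eq_sum_shift hf hinv hdep
    have hpolarize : ∀ i < N, ∃ h ∈ chain (1 : Matrix _ _ K) κ τ ι,
        ∀ q, a i (forgetPair (polarize k q)) = h (forgetPair (polarize k q)) := fun i hi =>
      exists_mem_chain_eq_polarize h2 (.inl transpose_one) <|
        ih (comp_polarize_mem_polyFun (ha i hi).1) (ha i hi).2.1.comp_polarize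
          (dependsOn_comp_polarize (ha i hi).2.2)
    choose! h hchain hah using hpolarize
    let g : K × Config K (Fin 3) κ τ ι → K :=
      ∑ i ∈ Finset.range N, Prod.fst ^ i * h i ∘ shift (-1) k
    have hg : g ∈ polyFamilies (chain (1 : Matrix _ _ K) κ τ ι) :=
      sum_mem fun i hi => mul_mem (pow_mem fst_mem_polyFamilies i) <|
        comp_shift_mem_polyFamilies_chain (hchain i (Finset.mem_range.mp hi)) (-1) k
    refine mem_chain_one_of_eq_on_eigenvalues (k := k) h3 hg fun μ q hμ => ?_
    have hsing : ((shift (-1) k (μ, q)).1 k : Matrix (Fin 3) (Fin 3) K).det = 0 := by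
      rw [shift_fst_self, ← hμ, neg_one_mul, neg_smul, sub_eq_add_neg]
    have hgq : g (μ, q) = ∑ i ∈ Finset.range N, μ ^ i * h i (shift (-1) k (μ, q)) :=
      Finset.sum_apply _ _ _
    rw [← shift_shift_neg k μ q, hsum, shift_shift_neg, hgq]
    refine Finset.sum_congr rfl fun i hi => ?_
    rw [eq_of_forall_polarize_eq h2 (hah i (Finset.mem_range.mp hi)) hsing]

end OrthogonalInduction

/-! ### Rational parametrisation of rotations -/

section Rotations

variable {K : Type} [Field K]

/-- The matrix `(4 qᵢ qⱼ)` of products of coordinates of a quaternion `q` of norm one, as a function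
of its Euler–Rodrigues matrix. -/
def quatGram (g : Matrix (Fin 3) (Fin 3) K) : Matrix (Fin 4) (Fin 4) K :=
  !![1 + g 0 0 + g 1 1 + g 2 2, g 1 2 - g 2 1, g 2 0 - g 0 2, g 0 1 - g 1 0;
    g 1 2 - g 2 1, 1 + g 0 0 - g 1 1 - g 2 2, g 0 1 + g 1 0, g 0 2 + g 2 0;
    g 2 0 - g 0 2, g 0 1 + g 1 0, 1 - g 0 0 + g 1 1 - g 2 2, g 1 2 + g 2 1;
    g 0 1 - g 1 0, g 0 2 + g 2 0, g 1 2 + g 2 1, 1 - g 0 0 - g 1 1 + g 2 2]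

lemma quatGram_mul_quatGram {g : Matrix (Fin 3) (Fin 3) K} (hg : gᵀ * g = 1) (hdet : g.det = 1)
    (i j k : Fin 4) : quatGram g i j * quatGram g i k = quatGram g i i * quatGram g j k := by
  have hadj : g.adjugate = gᵀ := by
    rw [← mul_one g.adjugate, ← mul_eq_one_comm.mp hg, ← Matrix.mul_assoc, adjugate_mul, hdet,
      one_smul, one_mul]
  have hrow := mul_eq_one_comm.mp hg
  simp only [adjugate_fin_three, ← Matrix.ext_iff, Fin.forall_fin_succ, transpose_apply, mul_apply,
    Fin.sum_univ_three, one_apply] at hg hrow hadj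
  simp only [↓reduceIte, Fin.succ_zero_eq_one, zero_ne_one, Fin.succ_one_eq_two, Fin.reduceEq,
    IsEmpty.forall_iff, and_true, one_ne_zero, of_apply, cons_val] at hg hrow hadj
  clear hdet
  fin_cases i <;> fin_cases j <;> fin_cases k <;> simp [quatGram] <;> grind

lemma quatNorm_eq_one_and_rotMatrix_eq (h2 : (2 : K) ≠ 0) {g : Matrix (Fin 3) (Fin 3) K}
    {q : Fin 4 → K} (hq : ∀ j k, 2 * 2 * (q j * q k) = quatGram g j k) :
    quatNorm q = 1 ∧ rotMatrix q = g := by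
  simp only [Fin.forall_fin_succ, quatGram] at hq
  simp only [of_apply, cons_val, Fin.succ_zero_eq_one, Fin.succ_one_eq_two, Fin.reduceSucc,
    IsEmpty.forall_iff, and_true] at hq
  have h4 := mul_ne_zero h2 h2
  refine ⟨mul_left_cancel₀ h4 ?_, ?_⟩
  · simp only [quatNorm]
    grind
  · ext j k
    refine mul_left_cancel₀ h4 ?_
    fin_cases j <;> fin_cases k <;> simp [rotMatrix] <;> grind

lemma exists_rotMatrix_eq [IsAlgClosed K] (h2 : (2 : K) ≠ 0) {g : Matrix (Fin 3) (Fin 3) K}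
    (hg : gᵀ * g = 1) (hdet : g.det = 1) : ∃ q, quatNorm q = 1 ∧ rotMatrix q = g := by
  have htrace : quatGram g 0 0 + quatGram g 1 1 + quatGram g 2 2 + quatGram g 3 3 = 2 * 2 := by
    simp [quatGram]
    ring
  obtain ⟨i, hi⟩ : ∃ i, quatGram g i i ≠ 0 := by
    by_contra! h
    simp [h, h2] at htrace
  obtain ⟨s, hs⟩ := IsAlgClosed.exists_pow_nat_eq (quatGram g i i) two_pos
  let q : Fin 4 → K := fun j => quatGram g i j / (2 * s)
  have hq (j k) : 2 * 2 * (q j * q k) = quatGram g j k := by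
    have h := quatGram_mul_quatGram hg hdet i j k
    have hs0 : s ≠ 0 := by rintro rfl; exact hi (by rw [← hs]; ring)
    rw [← hs] at h
    simp only [q]
    field_simp
    linear_combination h
  exact ⟨q, quatNorm_eq_one_and_rotMatrix_eq h2 hq⟩

end Rotations

/-! ### Extension of scalars -/

section Rotations

variable {R S : Type*} [CommRing R] [CommRing S]

lemma rotMatrix_mul_transpose_rotMatrix (q : Fin 4 → R) :
    rotMatrix q * (rotMatrix q)ᵀ = quatNorm q ^ 2 • 1 := by
  ext i j
  fin_cases i <;> fin_cases j <;>
    simp [rotMatrix, quatNorm, mul_apply, Fin.sum_univ_three] <;> ring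

lemma map_rotMatrix (φ : R →+* S) (q : Fin 4 → R) :
    (rotMatrix q).map φ = rotMatrix (φ ∘ q) := by
  ext i j
  fin_cases i <;> fin_cases j <;> simp [rotMatrix, map_ofNat φ 2]

lemma map_quatNorm (φ : R →+* S) (q : Fin 4 → R) : φ (quatNorm q) = quatNorm (φ ∘ q) := by
  simp [quatNorm]

end Rotations

section Evaluation

variable {F : Type} [Field F] {d : ℕ} {A : Type*} [CommRing A] [Algebra F A]

/-- The evaluation of polynomials at a family of matrices. -/
noncomputable def evalMatrices (M : Fin d → Matrix (Fin 3) (Fin 3) A) : Rpoly F d →ₐ[F] A :=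
  aeval fun p => M p.2.2 p.1 p.2.1

lemma map_evalMatrices {B : Type*} [CommRing B] [Algebra F B] (φ : A →ₐ[F] B)
    (M : Fin d → Matrix (Fin 3) (Fin 3) A) (f : Rpoly F d) :
    φ (evalMatrices M f) = evalMatrices (fun k => (M k).map φ) f :=
  comp_aeval_apply _ φ f

lemma map_genMat_evalMatrices (M : Fin d → Matrix (Fin 3) (Fin 3) A) (k : Fin d) :
    (genMat F d k).map (evalMatrices M) = M k := by
  ext i j
  simp [genMat, evalMatrices]

lemma actHom_eq_evalMatrices (g : Matrix (Fin 3) (Fin 3) F) :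
    actHom F d g = evalMatrices fun k =>
      (g.map (algebraMap F _))ᵀ * genMat F d k * g.map (algebraMap F _) := rfl

lemma map_conj {B : Type*} [CommRing B] (φ : A →+* B) (g M : Matrix (Fin 3) (Fin 3) A) :
    (g * M * gᵀ).map φ = g.map φ * M.map φ * (g.map φ)ᵀ := by
  rw [Matrix.map_mul, Matrix.map_mul, transpose_map]

lemma evalMatrices_conj {f : Rpoly F d} (hf : f ∈ invAlg F d) {g : Matrix (Fin 3) (Fin 3) F}
    (hg : gᵀ * g = 1) (M : Fin d → Matrix (Fin 3) (Fin 3) A) :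
    evalMatrices (fun k => (g.map (algebraMap F A))ᵀ * M k * g.map (algebraMap F A)) f =
      evalMatrices M f := by
  have h := congrArg (evalMatrices M) (hf g hg)
  rw [actHom_eq_evalMatrices, map_evalMatrices] at h
  rw [← h]
  refine congrArg (evalMatrices · f) (funext fun k => ?_)
  have hgM : (g.map (algebraMap F (Rpoly F d))).map (evalMatrices M) = g.map (algebraMap F A) := by
    ext i j
    simp
  have hconj := map_conj (evalMatrices M : Rpoly F d →ₐ[F] A).toRingHom
    (g.map (algebraMap F _))ᵀ (genMat F d k)
  rw [transpose_map, transpose_transpose, transpose_transpose] at hconj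
  refine Eq.symm (hconj.trans ?_)
  exact congr_arg₂ _ (congr_arg₂ _ (congrArg _ hgM) (map_genMat_evalMatrices M k)) hgM

lemma evalMatrices_smul {f : Rpoly F d} {n : ℕ} (hf : f.IsHomogeneous n) (c : A)
    (M : Fin d → Matrix (Fin 3) (Fin 3) A) :
    evalMatrices (c • M) f = c ^ n * evalMatrices M f := by
  simp only [evalMatrices, aeval_def, eval₂_eq, Finset.mul_sum]
  refine Finset.sum_congr rfl fun m hm => ?_
  have hdeg : m.degree = n := by
    rw [Finsupp.degree_eq_weight_one]
    exact hf (mem_support_iff.mp hm)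
  simp only [Pi.smul_apply, Matrix.smul_apply, smul_eq_mul, mul_pow, Finset.prod_mul_distrib,
    Finset.prod_pow_eq_pow_sum, ← Finsupp.degree_apply, hdeg]
  ring

lemma evalMatrices_rotMatrix_conj {f : Rpoly F d} (hf : f ∈ invAlg F d) {n : ℕ}
    (hn : f.IsHomogeneous n) {q : Fin 4 → F} (hq : quatNorm q ≠ 0)
    (M : Fin d → Matrix (Fin 3) (Fin 3) F) :
    evalMatrices (fun k => rotMatrix q * M k * (rotMatrix q)ᵀ) f =
      (quatNorm q ^ 2) ^ n * evalMatrices M f := by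
  have hg : ((quatNorm q)⁻¹ • (rotMatrix q)ᵀ)ᵀ * ((quatNorm q)⁻¹ • (rotMatrix q)ᵀ) = 1 := by
    rw [transpose_smul, transpose_transpose, smul_mul_smul_comm, rotMatrix_mul_transpose_rotMatrix,
      smul_smul]
    field_simp
    rw [one_smul]
  rw [← evalMatrices_conj hf hg M, ← evalMatrices_smul hn]
  refine congrArg (evalMatrices · f) (funext fun k => ?_)
  simp only [Algebra.algebraMap_self, RingHom.coe_id, Matrix.map_id, Pi.smul_apply, transpose_smul,
    transpose_transpose, Matrix.smul_mul, Matrix.mul_smul, smul_smul]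
  field_simp
  rw [one_smul]

end Evaluation

section Transfer

variable {F K : Type} [Field F] [Field K] [Algebra F K] {d : ℕ}

lemma map_evalMatrices_rotMatrix_conj {A B : Type*} [CommRing A] [CommRing B] [Algebra F A]
    [Algebra F B] (φ : A →ₐ[F] B) (f : Rpoly F d) (q : Fin 4 → A)
    (M : Fin d → Matrix (Fin 3) (Fin 3) A) :
    φ (evalMatrices (fun k => rotMatrix q * M k * (rotMatrix q)ᵀ) f) =
      evalMatrices (fun k => rotMatrix (φ ∘ q) * (M k).map φ * (rotMatrix (φ ∘ q))ᵀ) f := by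
  refine (map_evalMatrices φ _ f).trans (congrArg (evalMatrices · f) (funext fun k => ?_))
  refine (map_conj φ.toRingHom _ _).trans ?_
  rw [map_rotMatrix]
  rfl

variable [Infinite F]

lemma quatNorm_mul_evalMatrices_rotMatrix_conj {f : Rpoly F d} (hf : f ∈ invAlg F d) {n : ℕ}
    (hn : f.IsHomogeneous n) {σ : Type*} (q : Fin 4 → MvPolynomial σ F)
    (M : Fin d → Matrix (Fin 3) (Fin 3) (MvPolynomial σ F)) :
    quatNorm q * evalMatrices (fun k => rotMatrix q * M k * (rotMatrix q)ᵀ) f =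
      quatNorm q * ((quatNorm q ^ 2) ^ n * evalMatrices M f) := by
  refine MvPolynomial.funext fun y => ?_
  have hnorm : aeval y (quatNorm q) = quatNorm (aeval (R := F) y ∘ q) :=
    map_quatNorm (aeval y : MvPolynomial σ F →ₐ[F] F).toRingHom q
  rw [← coe_aeval_eq_eval]
  change aeval y _ = aeval y _
  rw [_root_.map_mul, _root_.map_mul, hnorm]
  by_cases h : quatNorm (aeval (R := F) y ∘ q) = 0
  · rw [h, zero_mul, zero_mul]
  · rw [map_evalMatrices_rotMatrix_conj, evalMatrices_rotMatrix_conj hf hn h, _root_.map_mul,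
      map_evalMatrices, map_pow, map_pow, hnorm]

lemma evalMatrices_map_rotMatrix_conj {f : Rpoly F d} (hf : f ∈ invAlg F d) {n : ℕ}
    (hn : f.IsHomogeneous n) {σ : Type*} (φ : MvPolynomial σ F →ₐ[F] K)
    {q : Fin 4 → MvPolynomial σ F} (hq : quatNorm (φ ∘ q) = 1)
    (M : Fin d → Matrix (Fin 3) (Fin 3) (MvPolynomial σ F)) :
    evalMatrices (fun k => rotMatrix (φ ∘ q) * (M k).map φ * (rotMatrix (φ ∘ q))ᵀ) f =
      evalMatrices (fun k => (M k).map φ) f := by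
  have hnorm : φ (quatNorm q) = 1 := (map_quatNorm φ.toRingHom q).trans hq
  have h := congrArg φ (quatNorm_mul_evalMatrices_rotMatrix_conj hf hn q M)
  rwa [_root_.map_mul, _root_.map_mul, _root_.map_mul, map_pow, map_pow, hnorm, one_pow, one_pow,
    one_mul, one_mul, one_mul, map_evalMatrices_rotMatrix_conj, map_evalMatrices] at h

/-- Invariance under the rational rotations is a polynomial identity in the quaternion and the
matrices, hence holds over every extension field. -/
lemma evalMatrices_rotMatrix_conj_of_quatNorm_eq_one {f : Rpoly F d} (hf : f ∈ invAlg F d) {n : ℕ}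
    (hn : f.IsHomogeneous n) {q : Fin 4 → K} (hq : quatNorm q = 1)
    (M : Fin d → Matrix (Fin 3) (Fin 3) K) :
    evalMatrices (fun k => rotMatrix q * M k * (rotMatrix q)ᵀ) f = evalMatrices M f := by
  obtain ⟨φ, hφ⟩ : ∃ φ : MvPolynomial (Fin 4 ⊕ Fin 3 × Fin 3 × Fin d) F →ₐ[F] K,
      ∀ x, φ (X x) = Sum.elim q (fun p => M p.2.2 p.1 p.2.1) x := ⟨aeval _, aeval_X _⟩
  have hφq : (φ ∘ fun i => X (.inl i)) = q := funext fun i => hφ _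
  have hφM (k) : (of fun i j => X (.inr (i, j, k)) : Matrix (Fin 3) (Fin 3) _).map φ = M k := by
    ext i j
    exact hφ _
  have h := evalMatrices_map_rotMatrix_conj hf hn φ (hφq ▸ hq)
    fun k => of fun i j => X (.inr (i, j, k))
  simpa only [hφq, hφM] using h

end Transfer

section EvalConfig

variable {F K : Type} [Field F] [Field K] [Algebra F K] {d : ℕ}

/-- A polynomial in the entries of matrices, as a function of their symmetric and skew-symmetric
parts. -/
noncomputable def evalConfig (f : Rpoly F d) (q : Config K (Fin 3) (Fin d) (Fin d) Empty) : K :=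
  evalMatrices (fun k => (q.1 k + q.2.1 k : Matrix (Fin 3) (Fin 3) K)) f

lemma evalConfig_mem_polyFun (f : Rpoly F d) :
    evalConfig f ∈ polyFun K (Config K (Fin 3) (Fin d) (Fin d) Empty) := by
  induction f using MvPolynomial.induction_on with
  | C a =>
    convert Subalgebra.algebraMap_mem _ (algebraMap F K a) using 1
    exact funext fun q => aeval_C _ a
  | add f g hf hg =>
    convert add_mem hf hg using 1
    exact funext fun q => map_add _ f g
  | mul_X f p hf =>
    let φ : Config K (Fin 3) (Fin d) (Fin d) Empty →ₗ[K] K :=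
      { toFun := fun q => (q.1 p.2.2 + q.2.1 p.2.2 : Matrix (Fin 3) (Fin 3) K) p.1 p.2.1
        map_add' := fun q q' => add_add_add_comm _ _ _ _
        map_smul' := fun c q => (mul_add c _ _).symm }
    convert mul_mem hf (linearMap_mem_polyFun φ) using 1
    refine funext fun q => (_root_.map_mul _ f _).trans ?_
    exact congrArg (evalConfig f q * ·) (aeval_X _ p)

lemma exists_rotMatrix_eq_or_eq_neg [IsAlgClosed K] (h2 : (2 : K) ≠ 0)
    {g : Matrix (Fin 3) (Fin 3) K} (hg : gᵀ * g = 1) :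
    ∃ q, quatNorm q = 1 ∧ (rotMatrix q = g ∨ rotMatrix q = -g) := by
  have hdet : g.det * g.det = 1 := by
    simpa only [det_mul, det_transpose, det_one] using congrArg det hg
  rcases mul_self_eq_one_iff.mp hdet with h | h
  · obtain ⟨q, hq, hqg⟩ := exists_rotMatrix_eq h2 hg h
    exact ⟨q, hq, .inl hqg⟩
  · obtain ⟨q, hq, hqg⟩ := exists_rotMatrix_eq (g := -g) h2
      (by rw [transpose_neg, neg_mul_neg, hg]) (by rw [det_neg, h]; simp [pow_succ])
    exact ⟨q, hq, .inr hqg⟩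

lemma isInvariant_evalConfig [Infinite F] [IsAlgClosed K] (h2 : (2 : K) ≠ 0) {f : Rpoly F d}
    (hf : f ∈ invAlg F d) {n : ℕ} (hn : f.IsHomogeneous n) :
    IsInvariant (K := K) 1 (evalConfig f) := by
  intro g hg x
  rw [Matrix.mul_one] at hg
  obtain ⟨q, hq, hqg⟩ := exists_rotMatrix_eq_or_eq_neg h2 hg
  refine Eq.trans (congrArg (evalMatrices · f) (funext fun k => ?_))
    (evalMatrices_rotMatrix_conj_of_quatNorm_eq_one hf hn hq _)
  have hadd (S T : Matrix (Fin 3) (Fin 3) K) : g * S * gᵀ + g * T * gᵀ = g * (S + T) * gᵀ := by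
    rw [Matrix.mul_add, Matrix.add_mul]
  refine (hadd _ _).trans ?_
  rcases hqg with h | h
  · rw [h]
  · rw [h, transpose_neg, Matrix.neg_mul, neg_mul_neg]

end EvalConfig

/-! ### Descent to traces of words in the generic matrices -/

section Descent

variable {F K R V : Type*} [Field F] [Field K] [Algebra F K] [CommRing R] [Algebra F R]

variable (K) in
/-- The `K`-valued function associated with an `F`-valued function. -/
def extendScalars : (V → F) →ₐ[F] (V → K) :=
  AlgHom.compLeft (Algebra.ofId F K) V

lemma mem_of_extendScalars_mem_adjoin {ρ : R →ₐ[F] (V → F)} (hρ : Function.Injective ρ)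
    {B : Subalgebra F R} {f : R}
    (hf : extendScalars K (ρ f) ∈
      Algebra.adjoin K (B.map ((extendScalars K).comp ρ) : Set (V → K))) : f ∈ B := by
  obtain ⟨r, hr⟩ := LinearMap.exists_leftInverse_of_injective (Algebra.linearMap F K)
    (LinearMap.ker_eq_bot.mpr (algebraMap F K).injective)
  have hr' (a : F) : r (algebraMap F K a) = a := LinearMap.congr_fun hr a
  have hspan : ∀ v ∈ Submodule.span K (B.map ((extendScalars K).comp ρ) : Set (V → K)),
      ∀ c : K, ∃ b ∈ B, ρ b = r ∘ (c • v) := by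
    intro v hv
    induction hv using Submodule.span_induction with
    | mem v hv =>
      obtain ⟨b, hb, rfl⟩ := hv
      intro c
      refine ⟨r c • b, B.smul_mem hb _, funext fun x => ?_⟩
      calc ρ (r c • b) x = ρ b x • r c := (congrFun (map_smul ρ (r c) b) x).trans (mul_comm _ _)
        _ = r (ρ b x • c) := (map_smul r _ _).symm
        _ = r (c * algebraMap F K (ρ b x)) := by rw [Algebra.smul_def, mul_comm]
    | zero =>
      intro c
      rw [smul_zero]
      exact ⟨0, zero_mem _, (map_zero ρ).trans (funext fun _ => (map_zero r).symm)⟩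
    | add v w _ _ hv hw =>
      intro c
      obtain ⟨b, hb, hbv⟩ := hv c
      obtain ⟨b', hb', hbw⟩ := hw c
      refine ⟨b + b', add_mem hb hb', ?_⟩
      rw [map_add, hbv, hbw, smul_add]
      exact funext fun _ => (map_add r _ _).symm
    | smul a v _ hv =>
      intro c
      rw [smul_smul]
      exact hv _
  rw [← Subalgebra.mem_toSubmodule, Algebra.adjoin_eq_span] at hf
  have hclosure : Submonoid.closure (B.map ((extendScalars K).comp ρ) : Set (V → K)) =
      (B.map ((extendScalars K).comp ρ)).toSubmonoid := Submonoid.closure_eq _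
  rw [hclosure] at hf
  obtain ⟨b, hb, hbf⟩ := hspan _ hf 1
  have : ρ b = ρ f := by
    rw [hbf, one_smul]
    exact funext fun x => hr' _
  exact hρ this ▸ hb

end Descent

section TraceWords

variable {F R n : Type*} [Field F] [CommRing R] [Algebra F R] [Fintype n] [DecidableEq n]

variable (F) in
/-- The algebra generated by the traces of the words in the matrices of `L`. -/
def traceWordAlg (L : Set (Matrix n n R)) : Subalgebra F R :=
  Algebra.adjoin F (trace '' (Submonoid.closure L : Set (Matrix n n R)))

lemma trace_mem_traceWordAlg {L : Set (Matrix n n R)} {w : Matrix n n R}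
    (hw : w ∈ Algebra.adjoin F L) : w.trace ∈ traceWordAlg F L := by
  rw [← Subalgebra.mem_toSubmodule, Algebra.adjoin_eq_span] at hw
  have hle : Submodule.span F (Submonoid.closure L : Set (Matrix n n R)) ≤
      (traceWordAlg F L).toSubmodule.comap (traceLinearMap n F R) :=
    Submodule.span_le.mpr fun w hw => Algebra.subset_adjoin ⟨w, hw, rfl⟩
  exact hle hw

lemma traceWordAlg_image_map_le {K S : Type*} [Field K] [CommRing S] [Algebra F S] [Algebra K S]
    (φ : R →ₐ[F] S) (L : Set (Matrix n n R)) :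
    traceWordAlg K ((fun M => M.map φ) '' L) ≤
      Algebra.adjoin K ((traceWordAlg F L).map φ : Set S) := by
  refine Algebra.adjoin_le ?_
  rintro _ ⟨w, hw, rfl⟩
  have hmap := MonoidHom.map_mclosure (φ.toRingHom.mapMatrix : Matrix n n R →+* Matrix n n S) L
  obtain ⟨u, hu, rfl⟩ := hmap.ge hw
  exact Algebra.subset_adjoin ⟨u.trace, Algebra.subset_adjoin ⟨u, hu, rfl⟩,
    AddMonoidHom.map_trace φ u⟩

end TraceWords

section GenericWords

variable {F K : Type} [Field F] [Field K] [Algebra F K] {d : ℕ}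

variable (F d) in
/-- The generic matrices and their transposes. -/
def genLetters : Set (Matrix (Fin 3) (Fin 3) (Rpoly F d)) :=
  Set.range (genMat F d) ∪ Set.range fun k => (genMat F d k)ᵀ

variable (F d) in
/-- Polynomials in the entries of matrices, as functions of the matrices. -/
noncomputable def toFun : Rpoly F d →ₐ[F] ((Fin d → Matrix (Fin 3) (Fin 3) F) → F) :=
  AlgHom.pi evalMatrices

lemma toFun_injective [Infinite F] : Function.Injective (toFun F d) := fun _ _ h =>
  MvPolynomial.funext fun y => congrFun h fun k => of fun i j => y (i, j, k)

variable (K) in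
/-- The symmetric and skew-symmetric parts of matrices over `F`, with entries in `K`. -/
def splitConfig (M : Fin d → Matrix (Fin 3) (Fin 3) F) : Config K (Fin 3) (Fin d) (Fin d) Empty :=
  (fun k => ⟨(2 : K)⁻¹ • ((M k).map (algebraMap F K) + ((M k).map (algebraMap F K))ᵀ), by
      rw [mem_symmMatrices, transpose_smul, transpose_add, transpose_transpose, add_comm]⟩,
    fun k => ⟨(2 : K)⁻¹ • ((M k).map (algebraMap F K) - ((M k).map (algebraMap F K))ᵀ), by
      rw [mem_skewMatrices, transpose_smul, transpose_sub, transpose_transpose, ← smul_neg,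
        neg_sub]⟩, Empty.elim)

lemma splitConfig_add (h2 : (2 : K) ≠ 0) (M : Fin d → Matrix (Fin 3) (Fin 3) F) (k : Fin d) :
    ((splitConfig K M).1 k + (splitConfig K M).2.1 k : Matrix (Fin 3) (Fin 3) K) =
      (M k).map (algebraMap F K) := by
  rw [splitConfig, ← smul_add, add_add_sub_cancel, ← two_smul K, smul_smul, inv_mul_cancel₀ h2,
    one_smul]

lemma evalConfig_splitConfig (h2 : (2 : K) ≠ 0) (f : Rpoly F d) :
    pullback K (splitConfig K) (evalConfig f) = extendScalars K (toFun F d f) := by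
  refine funext fun M => ?_
  calc evalConfig f (splitConfig K M)
      = evalMatrices (fun k => (M k).map (algebraMap F K)) f :=
        congrArg (evalMatrices · f) (funext (splitConfig_add h2 M))
    _ = algebraMap F K (evalMatrices M f) := (map_evalMatrices (Algebra.ofId F K) M f).symm

lemma mem_adjoin_of_mem_letters_splitConfig
    {L : Matrix (Fin 3) (Fin 3) ((Fin d → Matrix (Fin 3) (Fin 3) F) → K)}
    (hL : L ∈ letters (splitConfig K)) : L ∈ Algebra.adjoin K
      ((fun M => M.map ((extendScalars K).comp (toFun F d))) '' genLetters F d) := by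
  set τ : Rpoly F d →ₐ[F] _ := (extendScalars K).comp (toFun F d)
  have hX (k : Fin d) (i j : Fin 3) : τ (X (i, j, k)) = fun M => algebraMap F K (M k i j) :=
    funext fun M => congrArg (algebraMap F K) (aeval_X _ _)
  have hgen (k : Fin d) : (genMat F d k).map τ ∈
      Algebra.adjoin K ((fun M => M.map τ) '' genLetters F d) :=
    Algebra.subset_adjoin ⟨_, .inl ⟨k, rfl⟩, rfl⟩
  have htr (k : Fin d) : (genMat F d k)ᵀ.map τ ∈
      Algebra.adjoin K ((fun M => M.map τ) '' genLetters F d) :=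
    Algebra.subset_adjoin ⟨_, .inr ⟨k, rfl⟩, rfl⟩
  rcases hL with ⟨k, rfl⟩ | ⟨k, rfl⟩
  · convert Subalgebra.smul_mem _ (add_mem (hgen k) (htr k)) (2 : K)⁻¹ using 1
    ext i j M
    simp [funMatrix, splitConfig, genMat, hX, mul_add]
  · convert Subalgebra.smul_mem _ (sub_mem (hgen k) (htr k)) (2 : K)⁻¹ using 1
    ext i j M
    simp [funMatrix, splitConfig, genMat, hX, mul_sub]

lemma map_pullback_splitConfig_chain_le :
    (chain 1 (Fin d) (Fin d) Empty).map (pullback K (splitConfig (F := F) K)) ≤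
      traceWordAlg K ((fun M => M.map ((extendScalars K).comp (toFun F d))) '' genLetters F d) := by
  have hword : wordAlg K ((1 : Matrix (Fin 3) (Fin 3) K).map (algebraMap K _))
      (letters (splitConfig K)) ≤ Algebra.adjoin K
        ((fun M => M.map ((extendScalars K).comp (toFun F d))) '' genLetters F d) := by
    refine Algebra.adjoin_le ?_
    rintro _ ⟨M, hM, rfl⟩
    rw [Matrix.map_one _ (map_zero _) (map_one _)]
    simpa only [Matrix.mul_one, SetLike.mem_coe] using mem_adjoin_of_mem_letters_splitConfig hM
  rw [map_pullback_chain]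
  refine chainAlg_le (fun w hw => trace_mem_traceWordAlg (hword hw)) ?_
  rintro _ _ _ ⟨a, _⟩
  exact a.elim

/-- First fundamental theorem for `O(3)` acting on `3 × 3` matrices. -/
theorem mem_traceWordAlg_of_isHomogeneous [Infinite F] (h2 : (2 : F) ≠ 0) (h3 : (3 : F) ≠ 0)
    {f : Rpoly F d} (hf : f ∈ invAlg F d) {n : ℕ} (hn : f.IsHomogeneous n) :
    f ∈ traceWordAlg F (genLetters F d) := by
  let K := AlgebraicClosure F
  have hK2 : (2 : K) ≠ 0 := by
    rw [← map_ofNat (algebraMap F K) 2]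
    exact (map_ne_zero _).mpr h2
  have hK3 : (3 : K) ≠ 0 := by
    rw [← map_ofNat (algebraMap F K) 3]
    exact (map_ne_zero _).mpr h3
  have hchain : evalConfig f ∈ chain (K := K) 1 (Fin d) (Fin d) Empty :=
    mem_chain_one hK2 hK3 Finset.univ (evalConfig_mem_polyFun f)
      (isInvariant_evalConfig hK2 hf hn) fun x => by simpa using dependsOn_univ _
  refine mem_of_extendScalars_mem_adjoin (K := K) toFun_injective ?_
  rw [← evalConfig_splitConfig hK2]
  exact traceWordAlg_image_map_le _ _
    (map_pullback_splitConfig_chain_le (Subalgebra.mem_map.mpr ⟨_, hchain, rfl⟩))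

end GenericWords

/-! ### The Nagata–Higman theorem for cubes -/

section NagataHigman

variable {A : Type*} [NonUnitalRing A] (hcube : ∀ x : A, x * x * x = 0)

include hcube

lemma sum_perm_mul_eq_zero (a b c : A) :
    a * b * c + a * c * b + b * a * c + b * c * a + c * a * b + c * b * a = 0 := by
  linear_combination (norm := noncomm_ring) hcube (a + b + c) - hcube (a + b) - hcube (a + c)
    - hcube (b + c) + hcube a + hcube b + hcube c

variable (h2 : IsSMulRegular A 2)

include h2

lemma sq_mul_add_mul_mul_add_mul_sq (x y : A) : x * x * y + x * y * x + y * x * x = 0 := by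
  refine h2.right_eq_zero_of_smul ?_
  linear_combination (norm := noncomm_ring) sum_perm_mul_eq_zero hcube x x y

variable (h3 : IsSMulRegular A 3)

include h3

lemma sq_mul_mul_sq (x y z : A) : x * x * z * (y * y) = 0 := by
  have h := sq_mul_add_mul_mul_add_mul_sq hcube h2
  refine h3.right_eq_zero_of_smul ?_
  linear_combination (norm := noncomm_ring) h x z * (y * y) + h x (z * y) * y + h x (z * y * y)
    - x * z * h y x - z * h y (x * x)

lemma sq_mul_mul_jordan (x y z w : A) : x * x * z * (y * w + w * y) = 0 := by
  have h := sq_mul_mul_sq hcube h2 h3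
  linear_combination (norm := noncomm_ring) h x (y + w) z - h x y z - h x w z

lemma jordan_mul_mul_sq (x y z w : A) : (y * w + w * y) * z * (x * x) = 0 := by
  have h := sq_mul_mul_sq hcube h2 h3
  linear_combination (norm := noncomm_ring) h (y + w) x z - h y x z - h w x z

lemma sq_mul_eq_zero (x a b c d : A) : x * x * a * b * c * d = 0 := by
  have h := sq_mul_mul_jordan hcube h2 h3 x
  refine h2.right_eq_zero_of_smul ?_
  linear_combination (norm := noncomm_ring) h (b * c) a d - h d a b * c + h d (a * b) c

lemma mul_sq_eq_zero (x a b c d : A) : a * b * c * d * x * x = 0 := by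
  have h := jordan_mul_mul_sq hcube h2 h3 x
  refine h2.right_eq_zero_of_smul ?_
  linear_combination (norm := noncomm_ring) h (b * c) d a - b * h a d c + h a (c * d) b

lemma swap_mul (a b c d e f : A) : a * b * c * d * e * f = -(b * a * c * d * e * f) := by
  have h := sq_mul_eq_zero hcube h2 h3
  linear_combination (norm := noncomm_ring) h (a + b) c d e f - h a c d e f - h b c d e f

lemma mul_swap (a b c d e f : A) : a * b * c * d * e * f = -(a * b * c * d * f * e) := by
  have h := mul_sq_eq_zero hcube h2 h3
  linear_combination (norm := noncomm_ring) h (e + f) a b c d - h e a b c d - h f a b c d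

lemma mul_sq_mul_mul_mul_add (x a b c d : A) :
    a * x * x * b * c * d + 2 • (a * b * x * x * c * d) = 0 := by
  have h := sq_mul_add_mul_mul_add_mul_sq hcube h2 x
  linear_combination (norm := noncomm_ring) a * h b * (c * d) - swap_mul hcube h2 h3 a x b x c d
    + h (a * b) * (c * d) - sq_mul_eq_zero hcube h2 h3 x a b c d

lemma mul_mul_mul_sq_mul_add (x a b c d : A) :
    a * b * c * x * x * d + 2 • (a * b * x * x * c * d) = 0 := by
  have h := sq_mul_add_mul_mul_add_mul_sq hcube h2 x
  linear_combination (norm := noncomm_ring) a * b * h c * d - mul_swap hcube h2 h3 a b x c x d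
    + a * b * h (c * d) - mul_sq_eq_zero hcube h2 h3 x a b c d

lemma mul_sq_mul_mul_mul_add' (x a b c d : A) :
    a * x * x * b * c * d + 2 • (a * b * c * x * x * d) = 0 := by
  have h := sq_mul_add_mul_mul_add_mul_sq hcube h2 x
  linear_combination (norm := noncomm_ring) a * h (b * c) * d - swap_mul hcube h2 h3 a x b c x d
    + h (a * b * c) * d - sq_mul_eq_zero hcube h2 h3 x a b c d

lemma mul_mul_sq_mul_mul (x a b c d : A) : a * b * x * x * c * d = 0 := by
  refine h2.right_eq_zero_of_smul (h3.right_eq_zero_of_smul ?_)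
  linear_combination (norm := noncomm_ring) mul_sq_mul_mul_mul_add hcube h2 h3 x a b c d
    + 2 • mul_mul_mul_sq_mul_add hcube h2 h3 x a b c d
    - mul_sq_mul_mul_mul_add' hcube h2 h3 x a b c d

lemma mul_swap_mul_mul_mul (a b c d e f : A) :
    a * b * c * d * e * f = -(a * c * b * d * e * f) := by
  have h (x : A) : a * x * x * d * e * f = 0 := by
    simpa [mul_mul_sq_mul_mul hcube h2 h3] using mul_sq_mul_mul_mul_add hcube h2 h3 x a d e f
  linear_combination (norm := noncomm_ring) h (b + c) - h b - h c

lemma mul_mul_swap_mul_mul (a b c d e f : A) :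
    a * b * c * d * e * f = -(a * b * d * c * e * f) := by
  have h (x : A) := mul_mul_sq_mul_mul hcube h2 h3 x a b e f
  linear_combination (norm := noncomm_ring) h (c + d) - h c - h d

lemma mul_mul_mul_swap_mul (a b c d e f : A) :
    a * b * c * d * e * f = -(a * b * c * e * d * f) := by
  have h (x : A) : a * b * c * x * x * f = 0 := by
    simpa [mul_mul_sq_mul_mul hcube h2 h3] using mul_mul_mul_sq_mul_add hcube h2 h3 x a b c f
  linear_combination (norm := noncomm_ring) h (d + e) - h d - h e

/-- Products of six factors are alternating in the first five. Permuting the three blocks of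
`(a * b) * (c * d) * e` is even, so all six terms of the polarised identity agree up to `f`. -/
theorem mul_six_eq_zero (a b c d e f : A) : a * b * c * d * e * f = 0 := by
  have s12 := swap_mul hcube h2 h3
  have s23 := mul_swap_mul_mul_mul hcube h2 h3
  have s34 := mul_mul_swap_mul_mul hcube h2 h3
  have s45 := mul_mul_mul_swap_mul hcube h2 h3
  have move (a b c d : A) : a * b * c * d * e * f = a * b * e * c * d * f := by
    rw [s45, s34, neg_neg]
  have move' (a b c d : A) : a * b * c * d * e * f = e * a * b * c * d * f := by
    rw [move, s23, s12, neg_neg]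
  have exch : a * b * c * d * e * f = c * d * a * b * e * f := by
    rw [s23, s12, s34, s23, neg_neg, neg_neg]
  refine h2.right_eq_zero_of_smul (h3.right_eq_zero_of_smul ?_)
  linear_combination (norm := noncomm_ring) sum_perm_mul_eq_zero hcube (a * b) (c * d) e * f
    + move a b c d + move' a b c d + move c d a b + move' c d a b + (3 : ℤ) • exch

end NagataHigman

/-! ### Decomposable invariants -/

section Homogeneous

variable {R σ n : Type*} [CommSemiring R] [Fintype n]

lemma isHomogeneous_mul_apply {M N : Matrix n n (MvPolynomial σ R)} {a b : ℕ}
    (hM : ∀ i j, (M i j).IsHomogeneous a) (hN : ∀ i j, (N i j).IsHomogeneous b) (i j : n) :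
    ((M * N) i j).IsHomogeneous (a + b) :=
  IsHomogeneous.sum _ _ _ fun k _ => (hM i k).mul (hN k j)

lemma isHomogeneous_list_prod_apply [DecidableEq n] {l : List (Matrix n n (MvPolynomial σ R))}
    (hl : ∀ M ∈ l, ∀ i j, (M i j).IsHomogeneous 1) (i j : n) :
    (l.prod i j).IsHomogeneous l.length := by
  induction l generalizing i j with
  | nil =>
    rw [List.prod_nil, one_apply]
    split_ifs
    exacts [isHomogeneous_one _ _, isHomogeneous_zero _ _ _]
  | cons M l ih =>
    rw [List.forall_mem_cons] at hl
    rw [List.prod_cons, List.length_cons, add_comm]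
    exact isHomogeneous_mul_apply hl.1 (ih hl.2) i j

lemma isHomogeneous_trace {M : Matrix n n (MvPolynomial σ R)} {a : ℕ}
    (hM : ∀ i j, (M i j).IsHomogeneous a) : M.trace.IsHomogeneous a :=
  IsHomogeneous.sum _ _ _ fun i _ => hM i i

lemma constantCoeff_eq_zero_of_isHomogeneous {p : MvPolynomial σ R} {a : ℕ}
    (hp : p.IsHomogeneous a) (ha : a ≠ 0) : constantCoeff p = 0 := by
  rw [constantCoeff_eq]
  exact hp.coeff_eq_zero (by simpa using ha.symm)

end Homogeneous

section Components

variable {F : Type} [Field F] {d : ℕ}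

lemma isHomogeneous_evalMatrices {σ : Type*}
    {M : Fin d → Matrix (Fin 3) (Fin 3) (MvPolynomial σ F)}
    (hM : ∀ k i j, (M k i j).IsHomogeneous 1) {f : Rpoly F d} {n : ℕ} (hf : f.IsHomogeneous n) :
    (evalMatrices M f).IsHomogeneous n :=
  one_mul n ▸ hf.aeval (fun p => M p.2.2 p.1 p.2.1) fun p => hM p.2.2 p.1 p.2.1

lemma isHomogeneous_actHom (g : Matrix (Fin 3) (Fin 3) F) {f : Rpoly F d} {n : ℕ}
    (hf : f.IsHomogeneous n) : (actHom F d g f).IsHomogeneous n := by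
  have hg (i j) : ((g.map (algebraMap F (Rpoly F d))) i j).IsHomogeneous 0 :=
    isHomogeneous_C _ _
  have hX (k i j) : (genMat F d k i j).IsHomogeneous 1 := isHomogeneous_X _ _
  have hconj (k) := isHomogeneous_mul_apply
    (isHomogeneous_mul_apply (M := (g.map (algebraMap F (Rpoly F d)))ᵀ) (fun i j => hg j i) (hX k))
    hg
  rw [actHom_eq_evalMatrices]
  exact isHomogeneous_evalMatrices hconj hf

lemma homogeneousComponent_actHom (g : Matrix (Fin 3) (Fin 3) F) (f : Rpoly F d) (n : ℕ) :
    homogeneousComponent n (actHom F d g f) = actHom F d g (homogeneousComponent n f) := by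
  conv_lhs => rw [← sum_homogeneousComponent f, map_sum, map_sum]
  have hcomp (i : ℕ) : homogeneousComponent n (actHom F d g (homogeneousComponent i f)) =
      if n = i then actHom F d g (homogeneousComponent i f) else 0 :=
    homogeneousComponent_of_mem (isHomogeneous_actHom g (homogeneousComponent_isHomogeneous i f))
  simp only [hcomp, Finset.sum_ite_eq, Finset.mem_range]
  split_ifs with hn
  · rfl
  · rw [homogeneousComponent_eq_zero _ _ (by omega), map_zero]

lemma homogeneousComponent_mem_invAlg {f : Rpoly F d} (hf : f ∈ invAlg F d) (n : ℕ) :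
    homogeneousComponent n f ∈ invAlg F d := fun g hg => by
  rw [← homogeneousComponent_actHom, hf g hg]

lemma mem_plusIdeal_iff {f : invAlg F d} :
    f ∈ plusIdeal F d ↔ constantCoeff (f : Rpoly F d) = 0 := by
  refine ⟨fun hf => ?_, fun hf => ?_⟩
  · have hle : plusIdeal F d ≤
        RingHom.ker ((constantCoeff : Rpoly F d →+* F).comp (invAlg F d).val.toRingHom) :=
      Ideal.span_le.mpr fun p ⟨_, hn, hp⟩ => constantCoeff_eq_zero_of_isHomogeneous hp hn.ne'
    exact hle hf
  · have hsum : f = ∑ i ∈ Finset.range ((f : Rpoly F d).totalDegree + 1),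
        ⟨homogeneousComponent i (f : Rpoly F d), homogeneousComponent_mem_invAlg f.2 i⟩ := by
      ext1
      rw [AddSubmonoidClass.coe_finsetSum]
      exact (sum_homogeneousComponent _).symm
    rw [hsum]
    refine sum_mem fun i _ => ?_
    rcases i.eq_zero_or_pos with rfl | hi
    · have h0 : homogeneousComponent 0 (f : Rpoly F d) = 0 := by
        rw [homogeneousComponent_zero, ← constantCoeff_eq, hf, C_0]
      simp only [h0]
      exact zero_mem _
    · exact Ideal.subset_span ⟨i, hi, homogeneousComponent_isHomogeneous _ _⟩

end Components

section Decomposables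

variable (F : Type) [Field F] (d : ℕ)

/-- The ideal of invariants without constant term, inside the polynomial ring. -/
noncomputable def posInvariants : Submodule (invAlg F d) (Rpoly F d) :=
  Submodule.map (Algebra.linearMap (invAlg F d) (Rpoly F d)) (plusIdeal F d)

/-- The decomposable invariants as a module over the ring of invariants; its underlying set is
`decompSet`. -/
noncomputable def decomposables : Submodule (invAlg F d) (Rpoly F d) :=
  Submodule.map (Algebra.linearMap (invAlg F d) (Rpoly F d)) (plusIdeal F d ^ 2)

variable {F d}

lemma mem_posInvariants {p : Rpoly F d} :
    p ∈ posInvariants F d ↔ p ∈ invAlg F d ∧ constantCoeff p = 0 := by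
  refine ⟨?_, fun ⟨hp, h0⟩ => ⟨⟨p, hp⟩, mem_plusIdeal_iff.mpr h0, rfl⟩⟩
  rintro ⟨p, hp, rfl⟩
  exact ⟨p.2, mem_plusIdeal_iff.mp hp⟩

lemma mul_mem_decomposables {p q : Rpoly F d} (hp : p ∈ posInvariants F d)
    (hq : q ∈ posInvariants F d) : p * q ∈ decomposables F d := by
  obtain ⟨p, hp, rfl⟩ := hp
  obtain ⟨q, hq, rfl⟩ := hq
  refine ⟨p * q, ?_, rfl⟩
  rw [SetLike.mem_coe, pow_two]
  exact Ideal.mul_mem_mul hp hq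

lemma mul_mem_of_mem_invAlg {N : Submodule (invAlg F d) (Rpoly F d)} {p q : Rpoly F d}
    (hp : p ∈ invAlg F d) (hq : q ∈ N) : p * q ∈ N :=
  N.smul_mem ⟨p, hp⟩ hq

lemma C_mem_invAlg (c : F) : (C c : Rpoly F d) ∈ invAlg F d :=
  (invAlg F d).algebraMap_mem c

lemma mem_of_natCast_mul_mem {N : Submodule (invAlg F d) (Rpoly F d)} {c : ℕ} (hc : (c : F) ≠ 0)
    {p : Rpoly F d} (h : (c : Rpoly F d) * p ∈ N) : p ∈ N := by
  have hmem := mul_mem_of_mem_invAlg (C_mem_invAlg (c : F)⁻¹) h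
  rwa [← map_natCast (C : F →+* Rpoly F d) c, ← mul_assoc, ← C_mul, inv_mul_cancel₀ hc, C_1,
    one_mul] at hmem

end Decomposables

section PosMatrices

variable (F : Type) [Field F] (d : ℕ)

lemma map_C_mul_transpose_map_C {F : Type} [Field F] {d : ℕ} {g : Matrix (Fin 3) (Fin 3) F}
    (hg : gᵀ * g = 1) :
    g.map (C : F →+* Rpoly F d) * (g.map C)ᵀ = 1 := by
  rw [← transpose_map, ← Matrix.map_mul, mul_eq_one_comm.mp hg, Matrix.map_one _ C_0 C_1]

/-- The ring of `O(3)`-equivariant polynomial maps from `d`-tuples of matrices to matrices that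
vanish at the origin. -/
def posMatrices : NonUnitalSubring (Matrix (Fin 3) (Fin 3) (Rpoly F d)) where
  carrier := {m | (∀ g : Matrix (Fin 3) (Fin 3) F, gᵀ * g = 1 →
    (actHom F d g).mapMatrix m = (g.map C)ᵀ * m * g.map C) ∧ constantCoeff.mapMatrix m = 0}
  add_mem' := by
    rintro a b ⟨ha, ha0⟩ ⟨hb, hb0⟩
    refine ⟨fun g hg => ?_, by rw [_root_.map_add, ha0, hb0, add_zero]⟩
    rw [_root_.map_add, ha g hg, hb g hg, mul_add, add_mul]
  zero_mem' := ⟨fun g _ => by rw [_root_.map_zero, mul_zero, zero_mul], _root_.map_zero _⟩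
  neg_mem' := by
    rintro a ⟨ha, ha0⟩
    refine ⟨fun g hg => ?_, by rw [_root_.map_neg, ha0, neg_zero]⟩
    rw [_root_.map_neg, ha g hg, mul_neg, neg_mul]
  mul_mem' := by
    rintro a b ⟨ha, ha0⟩ ⟨hb, -⟩
    refine ⟨fun g hg => ?_, by rw [_root_.map_mul, ha0, zero_mul]⟩
    calc (actHom F d g).mapMatrix (a * b)
        = (g.map C)ᵀ * a * (g.map C * (g.map C)ᵀ) * b * g.map C := by
          rw [_root_.map_mul, ha g hg, hb g hg]
          simp only [mul_assoc]
      _ = (g.map C)ᵀ * (a * b) * g.map C := by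
          rw [map_C_mul_transpose_map_C hg, mul_one]
          simp only [mul_assoc]

variable {F d} {m : Matrix (Fin 3) (Fin 3) (Rpoly F d)}

lemma trace_mem_posInvariants (hm : m ∈ posMatrices F d) : m.trace ∈ posInvariants F d := by
  refine mem_posInvariants.mpr ⟨fun g hg => ?_, ?_⟩
  · calc actHom F d g m.trace = ((actHom F d g).mapMatrix m).trace :=
          AddMonoidHom.map_trace (actHom F d g) m
      _ = (m * (g.map C * (g.map C)ᵀ)).trace := by
          rw [hm.1 g hg, mul_assoc, trace_mul_comm, mul_assoc]
      _ = m.trace := by rw [map_C_mul_transpose_map_C hg, mul_one]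
  · rw [AddMonoidHom.map_trace constantCoeff m]
    exact (congrArg trace hm.2).trans (trace_zero _ _)

lemma det_mem_posInvariants (hm : m ∈ posMatrices F d) : m.det ∈ posInvariants F d := by
  refine mem_posInvariants.mpr ⟨fun g hg => ?_, ?_⟩
  · rw [AlgHom.map_det, hm.1 g hg, mul_assoc, det_mul_comm, mul_assoc,
      map_C_mul_transpose_map_C hg, mul_one]
  · rw [RingHom.map_det, hm.2, det_zero]

lemma trace_adjugate_mem_posInvariants (h2 : (2 : F) ≠ 0) (hm : m ∈ posMatrices F d) :
    m.adjugate.trace ∈ posInvariants F d := by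
  have htr := trace_mem_posInvariants hm
  refine mem_of_natCast_mul_mem (c := 2) (by exact_mod_cast h2) ?_
  have hadj : ((2 : ℕ) : Rpoly F d) * m.adjugate.trace = m.trace * m.trace - (m * m).trace := by
    rw [trace_mul_self_fin_three]
    push_cast
    ring
  rw [hadj]
  exact sub_mem (mul_mem_of_mem_invAlg (mem_posInvariants.mp htr).1 htr)
    (trace_mem_posInvariants (mul_mem hm hm))

end PosMatrices

/-! ### Words of length at least seven -/

lemma mul_six_mem {A : Type*} [NonUnitalRing A] {I : TwoSidedIdeal A} (hcube : ∀ x, x * x * x ∈ I)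
    (h2 : ∀ x, 2 • x ∈ I → x ∈ I) (h3 : ∀ x, 3 • x ∈ I → x ∈ I) (a b c d e f : A) :
    a * b * c * d * e * f ∈ I := by
  have hmk (x : A) : (x : I.ringCon.Quotient) = 0 ↔ x ∈ I :=
    I.ringCon.eq.trans (I.mem_iff x).symm
  have hreg {n : ℕ} (hn : ∀ x, n • x ∈ I → x ∈ I) : IsSMulRegular I.ringCon.Quotient n := by
    refine IsSMulRegular.of_right_eq_zero_of_smul fun x hx => ?_
    induction x using Quotient.inductionOn with
    | _ x => exact (hmk x).mpr (hn x ((hmk _).mp hx))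
  refine (hmk _).mp (mul_six_eq_zero (fun x => ?_) (hreg h2) (hreg h3) (a : I.ringCon.Quotient)
    b c d e f)
  induction x using Quotient.inductionOn with
  | _ x => exact (hmk _).mpr (hcube x)

section Nilpotency

variable {F : Type} [Field F] {d : ℕ}

variable (F d) in
/-- The radical of the bilinear form `(m, a) ↦ tr (m * a)` on `posMatrices`, modulo decomposable
invariants. -/
noncomputable def traceRadical : TwoSidedIdeal (posMatrices F d) :=
  .mk' {m | ∀ a ∈ posMatrices F d, ((m : Matrix _ _ (Rpoly F d)) * a).trace ∈ decomposables F d}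
    (fun a _ => by
      rw [ZeroMemClass.coe_zero, zero_mul, trace_zero]
      exact zero_mem _)
    (fun {x y} hx hy a ha => by
      rw [AddMemClass.coe_add, add_mul, trace_add]
      exact add_mem (hx a ha) (hy a ha))
    (fun {x} hx a ha => by
      rw [NegMemClass.coe_neg, neg_mul, trace_neg]
      exact neg_mem (hx a ha))
    (fun {x y} hy a ha => by
      rw [MulMemClass.coe_mul, mul_assoc, trace_mul_comm, mul_assoc]
      exact hy _ (mul_mem ha x.2))
    (fun {x y} hx a ha => by
      rw [MulMemClass.coe_mul, mul_assoc]
      exact hx _ (mul_mem y.2 ha))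

lemma mem_traceRadical {m : posMatrices F d} : m ∈ traceRadical F d ↔
    ∀ a ∈ posMatrices F d, ((m : Matrix _ _ (Rpoly F d)) * a).trace ∈ decomposables F d :=
  TwoSidedIdeal.mem_mk' ..

lemma mul_mul_self_mem_traceRadical (h2 : (2 : F) ≠ 0) (m : posMatrices F d) :
    m * m * m ∈ traceRadical F d := by
  refine mem_traceRadical.mpr fun a ha => ?_
  have htr {x} (hx : x ∈ posMatrices F d) := trace_mem_posInvariants hx
  rw [MulMemClass.coe_mul, MulMemClass.coe_mul, mul_mul_self_fin_three, add_mul, sub_mul,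
    trace_add, trace_sub, smul_mul_assoc, smul_mul_assoc, smul_mul_assoc, trace_smul, trace_smul,
    trace_smul, one_mul]
  exact add_mem (sub_mem
    (mul_mem_decomposables (htr m.2) (htr (mul_mem (mul_mem m.2 m.2) ha)))
    (mul_mem_decomposables (trace_adjugate_mem_posInvariants h2 m.2) (htr (mul_mem m.2 ha))))
    (mul_mem_decomposables (det_mem_posInvariants m.2) (htr ha))

lemma mem_traceRadical_of_nsmul_mem {c : ℕ} (hc : (c : F) ≠ 0) (m : posMatrices F d)
    (hm : c • m ∈ traceRadical F d) : m ∈ traceRadical F d := by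
  refine mem_traceRadical.mpr fun a ha => mem_of_natCast_mul_mem hc ?_
  have h := mem_traceRadical.mp hm a ha
  rwa [AddSubmonoidClass.coe_nsmul, smul_mul_assoc, trace_smul, nsmul_eq_mul] at h

lemma trace_mul_seven_mem_decomposables (h2 : (2 : F) ≠ 0) (h3 : (3 : F) ≠ 0)
    (a b c x y z : posMatrices F d) {m : Matrix (Fin 3) (Fin 3) (Rpoly F d)}
    (hm : m ∈ posMatrices F d) : ((a * b * c * x * y * z : posMatrices F d) * m).trace ∈
      decomposables F d := by
  have hmem : a * b * c * x * y * z ∈ traceRadical F d :=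
    mul_six_mem (mul_mul_self_mem_traceRadical h2)
      (mem_traceRadical_of_nsmul_mem (c := 2) (by exact_mod_cast h2))
      (mem_traceRadical_of_nsmul_mem (c := 3) (by exact_mod_cast h3)) a b c x y z
  exact mem_traceRadical.mp hmem m hm

end Nilpotency

section Words

variable {F : Type} [Field F] {d : ℕ}

lemma actHom_mapMatrix_genMat (g : Matrix (Fin 3) (Fin 3) F) (k : Fin d) :
    (actHom F d g).mapMatrix (genMat F d k) = (g.map C)ᵀ * genMat F d k * g.map C := by
  rw [actHom_eq_evalMatrices]
  exact map_genMat_evalMatrices _ k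

lemma map_constantCoeff_genMat (k : Fin d) : (genMat F d k).map constantCoeff = 0 := by
  ext i j
  exact constantCoeff_X (R := F) (i, j, k)

lemma genLetters_subset_posMatrices : genLetters F d ⊆ posMatrices F d := by
  rintro _ (⟨k, rfl⟩ | ⟨k, rfl⟩)
  · exact ⟨fun g _ => actHom_mapMatrix_genMat g k, map_constantCoeff_genMat k⟩
  · refine ⟨fun g _ => ?_, congrArg transpose (map_constantCoeff_genMat k)⟩
    refine (congrArg transpose (actHom_mapMatrix_genMat g k)).trans ?_
    rw [transpose_mul, transpose_mul, transpose_transpose, mul_assoc]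

lemma isHomogeneous_of_mem_genLetters {m : Matrix (Fin 3) (Fin 3) (Rpoly F d)}
    (hm : m ∈ genLetters F d) (i j : Fin 3) : (m i j).IsHomogeneous 1 := by
  obtain ⟨k, rfl⟩ | ⟨k, rfl⟩ := hm <;> exact isHomogeneous_X _ _

lemma list_prod_mem_posMatrices {l : List (Matrix (Fin 3) (Fin 3) (Rpoly F d))}
    (hl : ∀ m ∈ l, m ∈ posMatrices F d) (h0 : l ≠ []) : l.prod ∈ posMatrices F d := by
  induction l with
  | nil => exact absurd rfl h0
  | cons a l ih =>
    rw [List.forall_mem_cons] at hl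
    rw [List.prod_cons]
    rcases eq_or_ne l [] with rfl | h
    · rw [List.prod_nil, mul_one]
      exact hl.1
    · exact mul_mem hl.1 (ih hl.2 h)

lemma trace_list_prod_mem_decomposables (h2 : (2 : F) ≠ 0) (h3 : (3 : F) ≠ 0)
    {l : List (Matrix (Fin 3) (Fin 3) (Rpoly F d))} (hl : ∀ m ∈ l, m ∈ posMatrices F d)
    (hlen : 7 ≤ l.length) : l.prod.trace ∈ decomposables F d := by
  match l, hlen with
  | a :: b :: c :: x :: y :: z :: w :: l, _ =>
    simp only [List.forall_mem_cons] at hl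
    obtain ⟨ha, hb, hc, hx, hy, hz, hl⟩ := hl
    have hmem := trace_mul_seven_mem_decomposables h2 h3 ⟨a, ha⟩ ⟨b, hb⟩ ⟨c, hc⟩ ⟨x, hx⟩ ⟨y, hy⟩
      ⟨z, hz⟩ (list_prod_mem_posMatrices (List.forall_mem_cons.mpr hl) (List.cons_ne_nil w l))
    simpa only [MulMemClass.coe_mul, List.prod_cons, mul_assoc] using hmem

lemma trace_list_prod_mem_invAlg {l : List (Matrix (Fin 3) (Fin 3) (Rpoly F d))}
    (hl : ∀ m ∈ l, m ∈ posMatrices F d) : l.prod.trace ∈ invAlg F d := by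
  rcases eq_or_ne l [] with rfl | h
  · rw [List.prod_nil, trace_one]
    exact natCast_mem _ _
  · exact (mem_posInvariants.mp (trace_mem_posInvariants (list_prod_mem_posMatrices hl h))).1

lemma mul_mem_decomposables_of_isHomogeneous {p q : Rpoly F d} {a b n : ℕ}
    (hp : p ∈ invAlg F d) (hpa : p.IsHomogeneous a) (hpd : n ≤ a → p ∈ decomposables F d)
    (hq : q ∈ invAlg F d) (hqb : q.IsHomogeneous b) (hqd : n ≤ b → q ∈ decomposables F d)
    (hn : n ≤ a + b) : p * q ∈ decomposables F d := by
  rcases eq_or_ne a 0 with rfl | ha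
  · exact mul_mem_of_mem_invAlg hp (hqd (by omega))
  rcases eq_or_ne b 0 with rfl | hb
  · rw [mul_comm]
    exact mul_mem_of_mem_invAlg hq (hpd (by omega))
  · exact mul_mem_decomposables
      (mem_posInvariants.mpr ⟨hp, constantCoeff_eq_zero_of_isHomogeneous hpa ha⟩)
      (mem_posInvariants.mpr ⟨hq, constantCoeff_eq_zero_of_isHomogeneous hqb hb⟩)

lemma mem_decomposables_of_mem_closure (h2 : (2 : F) ≠ 0) (h3 : (3 : F) ≠ 0) {p : Rpoly F d}
    (hp : p ∈ Submonoid.closure (trace '' (Submonoid.closure (genLetters F d) :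
      Set (Matrix (Fin 3) (Fin 3) (Rpoly F d))))) :
    p ∈ invAlg F d ∧ ∃ n, p.IsHomogeneous n ∧ (7 ≤ n → p ∈ decomposables F d) := by
  induction hp using Submonoid.closure_induction with
  | mem p hp =>
    obtain ⟨w, hw, rfl⟩ := hp
    obtain ⟨l, hl, rfl⟩ := Submonoid.exists_list_of_mem_closure hw
    have hpos : ∀ m ∈ l, m ∈ posMatrices F d := fun m hm => genLetters_subset_posMatrices (hl m hm)
    exact ⟨trace_list_prod_mem_invAlg hpos, l.length, isHomogeneous_trace
      (isHomogeneous_list_prod_apply fun m hm => isHomogeneous_of_mem_genLetters (hl m hm)),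
      trace_list_prod_mem_decomposables h2 h3 hpos⟩
  | one => exact ⟨one_mem _, 0, isHomogeneous_one _ _, by omega⟩
  | mul p q _ _ ihp ihq =>
    obtain ⟨hp, a, hpa, hpd⟩ := ihp
    obtain ⟨hq, b, hqb, hqd⟩ := ihq
    exact ⟨mul_mem hp hq, a + b, hpa.mul hqb,
      mul_mem_decomposables_of_isHomogeneous hp hpa hpd hq hqb hqd⟩

lemma homogeneousComponent_mem_decomposables (h2 : (2 : F) ≠ 0) (h3 : (3 : F) ≠ 0) {f : Rpoly F d}
    (hf : f ∈ traceWordAlg F (genLetters F d)) {n : ℕ} (hn : 7 ≤ n) :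
    homogeneousComponent n f ∈ decomposables F d := by
  rw [traceWordAlg, ← Subalgebra.mem_toSubmodule, Algebra.adjoin_eq_span] at hf
  induction hf using Submodule.span_induction with
  | mem p hp =>
    obtain ⟨-, a, ha, had⟩ := mem_decomposables_of_mem_closure h2 h3 hp
    rw [homogeneousComponent_of_mem ha]
    split_ifs with h
    · exact had (h ▸ hn)
    · exact zero_mem _
  | zero =>
    rw [map_zero]
    exact zero_mem _
  | add p q _ _ hp hq =>
    rw [map_add]
    exact add_mem hp hq
  | smul c p _ hp =>
    rw [map_smul, smul_eq_C_mul]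
    exact mul_mem_of_mem_invAlg (C_mem_invAlg c) hp

theorem mem_decompSet_of_isHomogeneous [Infinite F] (h2 : (2 : F) ≠ 0) (h3 : (3 : F) ≠ 0)
    {f : Rpoly F d} (hf : f ∈ invAlg F d) {n : ℕ} (hn : f.IsHomogeneous n) (h7 : 7 ≤ n) :
    f ∈ decompSet F d := by
  have hcomp := homogeneousComponent_mem_decomposables h2 h3
    (mem_traceWordAlg_of_isHomogeneous h2 h3 hf hn) h7
  rwa [homogeneousComponent_of_mem hn, if_pos rfl] at hcomp

end Words

/-! ### An indecomposable invariant of degree six -/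

section OddWord

variable {R S : Type*} [CommRing R] [CommRing S]

/-- The word `S * S * T * T * S * T` in `S = M + Mᵀ` and `T = M - Mᵀ`. -/
def oddWord (M : Matrix (Fin 3) (Fin 3) R) : Matrix (Fin 3) (Fin 3) R :=
  (M + Mᵀ) * (M + Mᵀ) * (M - Mᵀ) * (M - Mᵀ) * (M + Mᵀ) * (M - Mᵀ)

lemma map_trace_oddWord (φ : R →+* S) (M : Matrix (Fin 3) (Fin 3) R) :
    φ (oddWord M).trace = (oddWord (M.map φ)).trace := by
  rw [AddMonoidHom.map_trace φ]
  simp only [oddWord, ← RingHom.mapMatrix_apply, _root_.map_mul, _root_.map_add, _root_.map_sub]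
  rfl

lemma trace_oddWord_transpose (M : Matrix (Fin 3) (Fin 3) R) :
    (oddWord Mᵀ).trace = -(oddWord M).trace := by
  rw [oddWord, transpose_transpose, add_comm Mᵀ, ← neg_sub M Mᵀ]
  simp only [mul_neg, neg_mul, neg_neg, trace_neg, oddWord]

end OddWord

section DiagSkew

variable {F : Type} [Field F] {d : ℕ}

variable (F) in
/-- The sum of a generic diagonal matrix and a generic skew-symmetric matrix, a normal form for
`3 × 3` matrices under conjugation by orthogonal matrices. -/
noncomputable def diagSkew : Matrix (Fin 3) (Fin 3) (MvPolynomial (Fin 3 ⊕ Fin 3) F) :=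
  diagonal (fun i => X (.inl i)) + hat fun i => X (.inr i)

lemma isHomogeneous_diagSkew (i j : Fin 3) : (diagSkew F i j).IsHomogeneous 1 := by
  have hX (v : Fin 3 ⊕ Fin 3) : (X v : MvPolynomial _ F).IsHomogeneous 1 := isHomogeneous_X _ v
  have hneg (v : Fin 3 ⊕ Fin 3) : (-X v : MvPolynomial _ F).IsHomogeneous 1 := (hX v).neg
  fin_cases i <;> fin_cases j <;> simp [diagSkew, hat, hX, hneg]

variable (F d) in
/-- The simultaneous transposition of the generic matrices. -/
noncomputable def transposeHom : Rpoly F d →ₐ[F] Rpoly F d :=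
  evalMatrices fun k => (genMat F d k)ᵀ

lemma evalMatrices_transposeHom {A : Type*} [CommRing A] [Algebra F A]
    (M : Fin d → Matrix (Fin 3) (Fin 3) A) (f : Rpoly F d) :
    evalMatrices M (transposeHom F d f) = evalMatrices (fun k => (M k)ᵀ) f := by
  rw [transposeHom, map_evalMatrices]
  refine congrArg (evalMatrices · f) (funext fun k => ?_)
  rw [← map_genMat_evalMatrices (F := F) M k]
  rfl

lemma evalMatrices_genMat (f : Rpoly F d) : evalMatrices (genMat F d) f = f :=
  aeval_X_left_apply f

lemma transposeHom_transposeHom (f : Rpoly F d) : transposeHom F d (transposeHom F d f) = f := by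
  have h := evalMatrices_transposeHom (fun k => (genMat F d k)ᵀ) f
  simp only [transpose_transpose] at h
  exact h.trans (evalMatrices_genMat f)

lemma transposeHom_mem_invAlg {f : Rpoly F d} (hf : f ∈ invAlg F d) :
    transposeHom F d f ∈ invAlg F d := fun g hg => by
  rw [actHom_eq_evalMatrices, evalMatrices_transposeHom]
  simp only [transpose_mul, transpose_transpose, ← mul_assoc]
  exact evalMatrices_conj hf hg _

variable (F d) in
/-- The restriction of polynomials to equal matrices in the normal form `diagSkew`. -/
noncomputable def restrictDiagSkew : Rpoly F d →ₐ[F] MvPolynomial (Fin 3 ⊕ Fin 3) F :=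
  evalMatrices fun _ => diagSkew F

lemma map_restrictDiagSkew {f : Rpoly F d} (hf : f ∈ invAlg F d) (hodd : transposeHom F d f = -f)
    {g : Matrix (Fin 3) (Fin 3) F} (hg : gᵀ * g = 1)
    {φ : MvPolynomial (Fin 3 ⊕ Fin 3) F →ₐ[F] MvPolynomial (Fin 3 ⊕ Fin 3) F}
    (hφ : (diagSkew F).map φ = ((g.map (algebraMap F _))ᵀ * diagSkew F * g.map (algebraMap F _))ᵀ) :
    φ (restrictDiagSkew F d f) = -restrictDiagSkew F d f := by
  rw [restrictDiagSkew, map_evalMatrices, hφ, ← evalMatrices_transposeHom, hodd, map_neg,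
    evalMatrices_conj hf hg]

end DiagSkew

section Symmetries

variable {F : Type} [Field F] {d : ℕ}

lemma coeff_aeval_C_mul_X {σ : Type*} (c : σ → F) (p : MvPolynomial σ F) (m : σ →₀ ℕ) :
    coeff m (aeval (fun v => C (c v) * X v) p) = (m.prod fun v n => c v ^ n) * coeff m p := by
  classical
  induction p using MvPolynomial.induction_on' with
  | monomial e a =>
    have he : aeval (fun v => (C (c v) * X v : MvPolynomial σ F)) (monomial e a) =
        monomial e ((e.prod fun v n => c v ^ n) * a) := by
      simp only [aeval_monomial, mul_pow, Finsupp.prod_mul, ← C_pow]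
      rw [← map_finsuppProd, monomial_eq, C_mul, algebraMap_eq]
      ring
    rw [he, coeff_monomial, coeff_monomial]
    split_ifs with h
    · rw [h]
    · rw [mul_zero]
  | add p q hp hq => rw [_root_.map_add, coeff_add, coeff_add, hp, hq, mul_add]

lemma map_diagSkew_sign (i : Fin 3) :
    (diagSkew F).map (aeval fun v => C ((Pi.mulSingle (.inr i) (-1) : _ → F) v) * X v) =
      (((diagonal (Pi.mulSingle i (-1) : Fin 3 → F)).map (algebraMap F _))ᵀ * diagSkew F *
        (diagonal (Pi.mulSingle i (-1))).map (algebraMap F _))ᵀ := by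
  ext1 a b
  fin_cases i <;> fin_cases a <;> fin_cases b <;>
    simp [diagSkew, hat, diagonal_apply, mul_apply, Pi.mulSingle_apply]

lemma map_diagSkew_swap {i j : Fin 3} (hij : i ≠ j) :
    (diagSkew F).map (rename (Equiv.sumCongr (Equiv.swap i j) (Equiv.swap i j))) =
      ((((Equiv.swap i j).permMatrix F).map (algebraMap F _))ᵀ * diagSkew F *
        ((Equiv.swap i j).permMatrix F).map (algebraMap F _))ᵀ := by
  have hperm : ((Equiv.swap i j).permMatrix F).map
      (algebraMap F (MvPolynomial (Fin 3 ⊕ Fin 3) F)) = (Equiv.swap i j).permMatrix _ :=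
    PEquiv.map_toMatrix _ _
  rw [hperm, ← PEquiv.toMatrix_symm, ← Equiv.toPEquiv_symm, PEquiv.toMatrix_toPEquiv_mul,
    PEquiv.mul_toMatrix_toPEquiv, Equiv.symm_swap]
  ext1 a b
  fin_cases i <;> fin_cases j <;> first | exact absurd rfl hij | skip
  all_goals fin_cases a <;> fin_cases b <;>
    simp [diagSkew, hat, Equiv.swap_apply_def]

lemma prod_pow_mulSingle {σ : Type*} [DecidableEq σ] (v : σ) (a : F) (m : σ →₀ ℕ) :
    (m.prod fun w n => (Pi.mulSingle v a : σ → F) w ^ n) = a ^ m v := by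
  rw [Finsupp.prod, Finset.prod_eq_single v, Pi.mulSingle_eq_same]
  · intro w _ hw
    rw [Pi.mulSingle_eq_of_ne hw, one_pow]
  · intro hv
    rw [Finsupp.notMem_support_iff.mp hv, pow_zero]

lemma diagonal_mulSingle_neg_one_orthogonal (i : Fin 3) :
    (diagonal (Pi.mulSingle i (-1) : Fin 3 → F))ᵀ * diagonal (Pi.mulSingle i (-1)) = 1 := by
  have hsq : (Pi.mulSingle i (-1) * Pi.mulSingle i (-1) : Fin 3 → F) = 1 := by
    rw [← Pi.mulSingle_mul, neg_mul_neg, one_mul, Pi.mulSingle_one]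
  rw [diagonal_transpose, ← diagonal_one', ← hsq]
  exact diagonal_mul_diagonal _ _

lemma permMatrix_swap_orthogonal (i j : Fin 3) :
    ((Equiv.swap i j).permMatrix F)ᵀ * (Equiv.swap i j).permMatrix F = 1 := by
  rw [transpose_permMatrix, ← permMatrix_mul, mul_inv_cancel, permMatrix_one]

lemma eq_zero_of_eq_neg (h2 : (2 : F) ≠ 0) {c : F} (hc : c = -c) : c = 0 :=
  (mul_eq_zero.mp (show 2 * c = 0 by linear_combination hc)).resolve_left h2

variable {f : Rpoly F d} {m : Fin 3 ⊕ Fin 3 →₀ ℕ}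

lemma odd_of_coeff_restrictDiagSkew_ne_zero (h2 : (2 : F) ≠ 0) (hf : f ∈ invAlg F d)
    (hodd : transposeHom F d f = -f) (hm : coeff m (restrictDiagSkew F d f) ≠ 0) (i : Fin 3) :
    Odd (m (.inr i)) := by
  by_contra heven
  have h := congrArg (coeff m) (map_restrictDiagSkew hf hodd
    (diagonal_mulSingle_neg_one_orthogonal i) (map_diagSkew_sign i))
  rw [coeff_aeval_C_mul_X, prod_pow_mulSingle, (Nat.not_odd_iff_even.mp heven).neg_one_pow, one_mul,
    coeff_neg] at h
  exact hm (eq_zero_of_eq_neg h2 h)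

lemma mapDomain_swap_eq_self {i j : Fin 3} (hl : m (.inl i) = m (.inl j))
    (hr : m (.inr i) = m (.inr j)) :
    m.mapDomain (Equiv.sumCongr (Equiv.swap i j) (Equiv.swap i j)) = m := by
  ext (v | v) <;>
    simp only [Finsupp.mapDomain_equiv_apply, Equiv.sumCongr_symm, Equiv.symm_swap,
      Equiv.sumCongr_apply, Sum.map_inl, Sum.map_inr]
  · exact Equiv.apply_swap_eq_self (v := m ∘ .inl) hl v
  · exact Equiv.apply_swap_eq_self (v := m ∘ .inr) hr v

lemma ne_of_coeff_restrictDiagSkew_ne_zero (h2 : (2 : F) ≠ 0) (hf : f ∈ invAlg F d)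
    (hodd : transposeHom F d f = -f) (hm : coeff m (restrictDiagSkew F d f) ≠ 0) {i j : Fin 3}
    (hij : i ≠ j) : ¬(m (.inl i) = m (.inl j) ∧ m (.inr i) = m (.inr j)) := by
  rintro ⟨hl, hr⟩
  have h := congrArg (coeff m) (map_restrictDiagSkew hf hodd
    (permMatrix_swap_orthogonal i j) (map_diagSkew_swap hij))
  nth_rw 1 [← mapDomain_swap_eq_self hl hr] at h
  rw [coeff_rename_mapDomain _ (Equiv.injective _), coeff_neg] at h
  exact hm (eq_zero_of_eq_neg h2 h)

/-- The exponents `(aᵢ, bᵢ)` of a monomial are pairwise distinct with `bᵢ` odd; the least total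
degree `6` is attained for instance by `(0, 1)`, `(1, 1)`, `(2, 1)`. -/
lemma restrictDiagSkew_mem_pow_six (h2 : (2 : F) ≠ 0) (hf : f ∈ invAlg F d)
    (hodd : transposeHom F d f = -f) :
    restrictDiagSkew F d f ∈ idealOfVars (Fin 3 ⊕ Fin 3) F ^ 6 := by
  refine (mem_pow_idealOfVars_iff 6 _).mpr fun m hm => ?_
  rw [mem_support_iff] at hm
  obtain ⟨b₀, h₀⟩ := odd_of_coeff_restrictDiagSkew_ne_zero h2 hf hodd hm 0
  obtain ⟨b₁, h₁⟩ := odd_of_coeff_restrictDiagSkew_ne_zero h2 hf hodd hm 1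
  obtain ⟨b₂, h₂⟩ := odd_of_coeff_restrictDiagSkew_ne_zero h2 hf hodd hm 2
  have h₀₁ := ne_of_coeff_restrictDiagSkew_ne_zero h2 hf hodd hm (i := 0) (j := 1) (by decide)
  have h₀₂ := ne_of_coeff_restrictDiagSkew_ne_zero h2 hf hodd hm (i := 0) (j := 2) (by decide)
  have h₁₂ := ne_of_coeff_restrictDiagSkew_ne_zero h2 hf hodd hm (i := 1) (j := 2) (by decide)
  rw [Finsupp.degree_eq_sum, Fintype.sum_sum_type, Fin.sum_univ_three, Fin.sum_univ_three]
  omega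

end Symmetries

section Decomposable

variable {F : Type} [Field F] {d : ℕ}

lemma constantCoeff_evalMatrices {σ : Type*} {M : Fin d → Matrix (Fin 3) (Fin 3) (MvPolynomial σ F)}
    (hM : ∀ k i j, constantCoeff (M k i j) = 0) (f : Rpoly F d) :
    constantCoeff (evalMatrices M f) = constantCoeff f := by
  refine RingHom.congr_fun (f := constantCoeff.comp (evalMatrices M).toRingHom)
    (MvPolynomial.ringHom_ext (fun c => ?_) fun ⟨i, j, k⟩ => ?_) f
  · simp
  · simp [evalMatrices, hM]

lemma restrictDiagSkew_mem_idealOfVars {f : Rpoly F d} (hf : constantCoeff f = 0) :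
    restrictDiagSkew F d f ∈ idealOfVars (Fin 3 ⊕ Fin 3) F := by
  have hconst : constantCoeff (restrictDiagSkew F d f) = 0 :=
    (constantCoeff_evalMatrices (fun _ i j => constantCoeff_eq_zero_of_isHomogeneous
      (isHomogeneous_diagSkew i j) one_ne_zero) f).trans hf
  rw [← pow_one (idealOfVars _ F), mem_pow_idealOfVars_iff']
  intro m hm
  rwa [(Finsupp.degree_eq_zero_iff m).mp (Nat.lt_one_iff.mp hm), ← constantCoeff_eq]

lemma restrictDiagSkew_sub_transposeHom_mul_mem (h2 : (2 : F) ≠ 0) {p q : Rpoly F d}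
    (hp : p ∈ invAlg F d) (hq : constantCoeff q = 0) :
    restrictDiagSkew F d ((p - transposeHom F d p) * q) ∈
      idealOfVars (Fin 3 ⊕ Fin 3) F ^ 7 := by
  rw [_root_.map_mul, pow_succ]
  refine Ideal.mul_mem_mul (restrictDiagSkew_mem_pow_six h2
    (sub_mem hp (transposeHom_mem_invAlg hp)) ?_) (restrictDiagSkew_mem_idealOfVars hq)
  rw [_root_.map_sub, transposeHom_transposeHom, neg_sub]

lemma restrictDiagSkew_sub_transposeHom_mem (h2 : (2 : F) ≠ 0) {f : Rpoly F d}
    (hf : f ∈ decompSet F d) :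
    restrictDiagSkew F d (f - transposeHom F d f) ∈ idealOfVars (Fin 3 ⊕ Fin 3) F ^ 7 := by
  obtain ⟨f, hf, rfl⟩ := hf
  rw [SetLike.mem_coe, pow_two] at hf
  induction hf using Submodule.mul_induction_on' with
  | mem_mul_mem p hp q hq =>
    have hθp : constantCoeff (transposeHom F d p) = 0 :=
      (constantCoeff_evalMatrices (fun k i j => constantCoeff_X (R := F) (j, i, k)) _).trans
        (mem_plusIdeal_iff.mp hp)
    have hsplit : (p * q : Rpoly F d) - transposeHom F d (p * q) =
        (p - transposeHom F d p) * q + (q - transposeHom F d q) * transposeHom F d p := by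
      rw [_root_.map_mul]
      ring
    rw [Subalgebra.coe_mul, hsplit, _root_.map_add]
    exact add_mem (restrictDiagSkew_sub_transposeHom_mul_mem h2 p.2 (mem_plusIdeal_iff.mp hq))
      (restrictDiagSkew_sub_transposeHom_mul_mem h2 q.2 hθp)
  | add p _ q _ hp hq =>
    rw [Subalgebra.coe_add, _root_.map_add, add_sub_add_comm, _root_.map_add]
    exact add_mem hp hq

lemma eq_zero_of_isHomogeneous_of_mem_pow_idealOfVars {σ R : Type*} [CommRing R]
    {p : MvPolynomial σ R} {n k : ℕ} (hp : p.IsHomogeneous n) (hpk : p ∈ idealOfVars σ R ^ k)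
    (hnk : n < k) : p = 0 := by
  ext m
  by_cases hm : m.degree = n
  · exact (mem_pow_idealOfVars_iff' k p).mp hpk m (hm ▸ hnk)
  · exact hp.coeff_eq_zero hm

end Decomposable

section Witness

variable {F : Type} [Field F] {d : ℕ}

lemma trace_oddWord_genMat_mem_invAlg (k : Fin d) :
    (oddWord (genMat F d k)).trace ∈ invAlg F d := by
  have hX : genMat F d k ∈ posMatrices F d := genLetters_subset_posMatrices (.inl ⟨k, rfl⟩)
  have hXt : (genMat F d k)ᵀ ∈ posMatrices F d := genLetters_subset_posMatrices (.inr ⟨k, rfl⟩)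
  have hS := add_mem hX hXt
  have hT := sub_mem hX hXt
  exact (mem_posInvariants.mp (trace_mem_posInvariants (mul_mem (mul_mem (mul_mem (mul_mem
    (mul_mem hS hS) hT) hT) hS) hT))).1

lemma isHomogeneous_trace_oddWord_genMat (k : Fin d) :
    (oddWord (genMat F d k)).trace.IsHomogeneous 6 := by
  have hX (i j : Fin 3) : (genMat F d k i j).IsHomogeneous 1 := isHomogeneous_X _ _
  have hS (i j : Fin 3) : ((genMat F d k + (genMat F d k)ᵀ) i j).IsHomogeneous 1 :=
    (hX i j).add (hX j i)
  have hT (i j : Fin 3) : ((genMat F d k - (genMat F d k)ᵀ) i j).IsHomogeneous 1 :=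
    (hX i j).sub (hX j i)
  exact isHomogeneous_trace (isHomogeneous_mul_apply (isHomogeneous_mul_apply
    (isHomogeneous_mul_apply (isHomogeneous_mul_apply (isHomogeneous_mul_apply hS hS) hT) hT) hS)
    hT)

lemma evalMatrices_trace_oddWord_genMat {A : Type*} [CommRing A] [Algebra F A]
    (M : Fin d → Matrix (Fin 3) (Fin 3) A) (k : Fin d) :
    evalMatrices M (oddWord (genMat F d k)).trace = (oddWord (M k)).trace := by
  rw [← map_genMat_evalMatrices (F := F) M k]
  exact map_trace_oddWord (evalMatrices M).toRingHom _

lemma trace_oddWord_diagSkew_ne_zero (h2 : (2 : F) ≠ 0) : (oddWord (diagSkew F)).trace ≠ 0 := by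
  intro h
  let N : Matrix (Fin 3) (Fin 3) ℤ := !![0, -1, 1; 1, 1, -1; -1, 1, -1]
  have hN : (diagSkew F).map (eval (Sum.elim ![0, 1, -1] ![1, 1, 1])) =
      N.map (Int.castRingHom F) := by
    ext i j
    fin_cases i <;> fin_cases j <;> simp [diagSkew, hat, N]
  have htrace : (oddWord N).trace = -2 ^ 7 := by decide
  have h0 := congrArg (eval (Sum.elim ![0, 1, -1] ![1, 1, 1])) h
  rw [map_trace_oddWord, hN, ← map_trace_oddWord, htrace, _root_.map_zero, _root_.map_neg,
    _root_.map_pow] at h0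
  exact h2 (by simpa using h0)

/-- Decomposable invariants which are odd under transposition vanish to order seven on the normal
form, while `(oddWord X).trace` does not. -/
theorem exists_indecomposable (h2 : (2 : F) ≠ 0) (hd : 1 ≤ d) :
    ∃ f : Rpoly F d, f ∈ invAlg F d ∧ f.IsHomogeneous 6 ∧ f ∉ decompSet F d := by
  let k : Fin d := ⟨0, hd⟩
  let p := (oddWord (genMat F d k)).trace
  have hhom : p.IsHomogeneous 6 := isHomogeneous_trace_oddWord_genMat k
  refine ⟨p, trace_oddWord_genMat_mem_invAlg k, hhom, fun hdec => ?_⟩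
  have hodd : transposeHom F d p = -p :=
    (evalMatrices_trace_oddWord_genMat _ k).trans (trace_oddWord_transpose _)
  have hrestrict : restrictDiagSkew F d p = (oddWord (diagSkew F)).trace :=
    evalMatrices_trace_oddWord_genMat _ k
  have hmem := restrictDiagSkew_sub_transposeHom_mem h2 hdec
  rw [hodd, sub_neg_eq_add, ← two_mul] at hmem
  have hzero : restrictDiagSkew F d (2 * p) = 0 :=
    eq_zero_of_isHomogeneous_of_mem_pow_idealOfVars (isHomogeneous_evalMatrices
      (fun _ => isHomogeneous_diagSkew) (two_mul p ▸ hhom.add hhom)) hmem (by norm_num)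
  have h2' : (2 : MvPolynomial (Fin 3 ⊕ Fin 3) F) ≠ 0 := by
    rw [← map_ofNat (C : F →+* _) 2]
    exact C_ne_zero.mpr h2
  rw [_root_.map_mul, map_ofNat, hrestrict] at hzero
  exact trace_oddWord_diagSkew_ne_zero h2 ((mul_eq_zero.mp hzero).resolve_left h2')

end Witness

end OrthogonalInvariants

/-- if `char F ≠ 2, 3` and `d ≥ 1`, then `D_max = 6`: `6` is the greatest degree of
an indecomposable homogeneous `O(3)`-invariant of `d` generic `3×3` matrices. -/
theorem stmt1 (F : Type) [Field F] [Infinite F] (h2 : ringChar F ≠ 2) (h3 : ringChar F ≠ 3)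
    (d : ℕ) (hd : 1 ≤ d) :
    IsGreatest {n : ℕ | ∃ f : Rpoly F d, f ∈ invAlg F d ∧
      MvPolynomial.IsHomogeneous f n ∧ f ∉ decompSet F d} 6 := by
  have two_ne_zero : (2 : F) ≠ 0 := Ring.two_ne_zero h2
  have three_ne_zero : (3 : F) ≠ 0 := fun h => by
    rcases (Nat.dvd_prime Nat.prime_three).mp (ringChar.dvd (R := F) (x := 3) (by exact_mod_cast h))
      with hone | hthree
    · exact CharP.ringChar_ne_one hone
    · exact h3 hthree
  refine ⟨OrthogonalInvariants.exists_indecomposable two_ne_zero hd, ?_⟩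
  rintro n ⟨f, hf, hn, hind⟩
  by_contra! hlt
  exact hind <|
    OrthogonalInvariants.mem_decompSet_of_isHomogeneous two_ne_zero three_ne_zero hf hn hlt
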